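/- Carleson estimate and boundary Harnack inequality for solutions of the homogeneous extremal inequalities. For every integer n ≥ 2, reals 0 < λ ≤ Λ, exponent q > n, and K > 0, there exist constants c₁, c₂, c₃ > 0 such that the following holds. Let b : B₂⁺ → ℝ be continuous with b ≥ 0 and ‖b‖_{L^q(B₂⁺)} ≤ K. Let u be continuous on B₂⁺ ∪ B₂⁰ and C² on B₂⁺ with 𝓜⁻(D²u) − b|Du| ≤ 0 ≤ 𝓜⁺(D²u) + b|Du| in B₂⁺, u > 0 in B₂⁺, and u = 0 on B₂⁰. Then (i) inf_{x ∈ B₁⁺} u(x)/x_n ≥ c₁·u(0,…,0,1/2) and c₁·u(0,…,0,1/2) ≥ c₂·sup_{x ∈ B₁⁺} u(x); and (ii) if v is another function continuous on B₂⁺ ∪ B₂⁰ and C² on B₂⁺ with 𝓜⁻(D²v) − b|Dv| ≤ 0 ≤ 𝓜⁺(D²v) + b|Dv| in B₂⁺, v > 0 in B₂⁺, and v = 0 on B₂⁰, then inf_{x ∈ B₁⁺} u(x)/v(x) ≥ c₃·sup_{x ∈ B₁⁺} u(x)/v(x). -/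

import Mathlib

open MeasureTheory
open scoped ENNReal

/-- The Pucci minimal extremal operator `𝓜⁻(M)` with ellipticity constants `lam ≤ Lam`:
the infimum of `tr(A*M)` over symmetric matrices `A` with `lam•I ≤ A ≤ Lam•I`. -/
noncomputable def pucciMinus (n : ℕ) (lam Lam : ℝ) (M : Matrix (Fin n) (Fin n) ℝ) : ℝ :=
  sInf { t : ℝ | ∃ A : Matrix (Fin n) (Fin n) ℝ, A.IsSymm ∧
    (A - lam • (1 : Matrix (Fin n) (Fin n) ℝ)).PosSemidef ∧
    (Lam • (1 : Matrix (Fin n) (Fin n) ℝ) - A).PosSemidef ∧ t = (A * M).trace }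

/-- The Pucci maximal extremal operator `𝓜⁺(M)`. -/
noncomputable def pucciPlus (n : ℕ) (lam Lam : ℝ) (M : Matrix (Fin n) (Fin n) ℝ) : ℝ :=
  sSup { t : ℝ | ∃ A : Matrix (Fin n) (Fin n) ℝ, A.IsSymm ∧
    (A - lam • (1 : Matrix (Fin n) (Fin n) ℝ)).PosSemidef ∧
    (Lam • (1 : Matrix (Fin n) (Fin n) ℝ) - A).PosSemidef ∧ t = (A * M).trace }

/-- The Hessian matrix `D²u(x)` of `u` at `x`. -/
noncomputable def hess (n : ℕ) (u : EuclideanSpace ℝ (Fin n) → ℝ)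
    (x : EuclideanSpace ℝ (Fin n)) : Matrix (Fin n) (Fin n) ℝ :=
  fun i j => fderiv ℝ (fun y => fderiv ℝ u y (EuclideanSpace.single j (1 : ℝ))) x
    (EuclideanSpace.single i (1 : ℝ))

/-- The euclidean norm `|Du(x)|` of the gradient of `u` at `x`. -/
noncomputable def gradNorm (n : ℕ) (u : EuclideanSpace ℝ (Fin n) → ℝ)
    (x : EuclideanSpace ℝ (Fin n)) : ℝ := ‖fderiv ℝ u x‖

/-- The `L^p` norm `(∫_E |g|^p)^(1/p)`, as a Lebesgue integral valued in `[0,∞]`. -/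
noncomputable def LpNormE (n : ℕ) (p : ℝ) (g : EuclideanSpace ℝ (Fin n) → ℝ)
    (E : Set (EuclideanSpace ℝ (Fin n))) : ℝ≥0∞ :=
  (∫⁻ x in E, ENNReal.ofReal (|g x| ^ p)) ^ (1 / p)

/-- The last (`n`-th) coordinate `x_n` of a point of `ℝⁿ`. -/
def lastC (n : ℕ) (hn : 1 ≤ n) (x : EuclideanSpace ℝ (Fin n)) : ℝ := x ⟨n - 1, by omega⟩

/-- The open half-ball `B_R⁺ = {|x| < R, x_n > 0}`. -/
def halfBall (n : ℕ) (hn : 1 ≤ n) (R : ℝ) : Set (EuclideanSpace ℝ (Fin n)) :=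
  {x | ‖x‖ < R ∧ 0 < lastC n hn x}

/-- The flat boundary part `B_R⁰ = {|x| ≤ R, x_n = 0}`. -/
def flatB (n : ℕ) (hn : 1 ≤ n) (R : ℝ) : Set (EuclideanSpace ℝ (Fin n)) :=
  {x | ‖x‖ ≤ R ∧ lastC n hn x = 0}

/-- The norm `‖g‖_{L^{p,q}(B_R⁺)} = ‖g‖_{L^p(B_R⁺)} + ‖g‖_{L^q(B_R⁺ ∩ {x_n < d0})}`. -/
noncomputable def LpqNormHB (n : ℕ) (hn : 1 ≤ n) (p q d0 R : ℝ)
    (g : EuclideanSpace ℝ (Fin n) → ℝ) : ℝ≥0∞ :=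
  LpNormE n p g (halfBall n hn R) +
    LpNormE n q g {x ∈ halfBall n hn R | lastC n hn x < d0}

/-- The open cube `Q_ρ` of side `ρ` centered at `(0,…,0,ρ/2)`. -/
def cubeQ (n : ℕ) (hn : 1 ≤ n) (ρ : ℝ) : Set (EuclideanSpace ℝ (Fin n)) :=
  {x | (∀ i : Fin n, i.1 ≠ n - 1 → |x i| < ρ / 2) ∧ 0 < lastC n hn x ∧ lastC n hn x < ρ}

/-- The norm `‖g‖_{L^{p,q}(Q₂)} = ‖g‖_{L^p(Q₂)} + ‖g‖_{L^q(Q₂ ∩ {x_n < d0})}`. -/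
noncomputable def LpqNormQ (n : ℕ) (hn : 1 ≤ n) (p q d0 : ℝ)
    (g : EuclideanSpace ℝ (Fin n) → ℝ) : ℝ≥0∞ :=
  LpNormE n p g (cubeQ n hn 2) +
    LpNormE n q g {x ∈ cubeQ n hn 2 | lastC n hn x < d0}

/-!
The extremal inequalities enter only through the Aleksandrov–Bakelman–Pucci estimate, which bounds
the depth of a supersolution by the measure of the set of its contact gradients. Since the drift is
in `L^q` with `q > n`, its `L^n` norm on a ball of radius `R` is `O(R ^ (1 - n / q))`, so on small
balls it is a perturbation. There the estimate, tested against an exponential barrier, shows that a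
supersolution which is at least one on a large part of a ball is bounded below on half of it; the
ink-spots covering lemma turns this into the weak Harnack inequality.

Chains of balls, in layers approaching the flat boundary geometrically, make the superlevel sets of
a solution `u` with `u(eₙ / 2) = 1` uniformly small. If `u` were huge at some point, the
growth lemma would produce a nearby point where it is larger by a fixed factor, and so on; the
distances between successive points are summable, so the continuous function `u` would be unbounded
on a compact ball. This is the Carleson estimate.

Near the flat boundary, the same estimate with a quadratic barrier shows that a lower bound
`A * xₙ - δ` on a half ball improves, on a smaller half ball, to one with a smaller error relative
to the radius and almost the same slope. Iterating the improvement for `u`, which is bounded below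
inside, and for `-u`, which the Carleson estimate bounds, gives `c * xₙ ≤ u ≤ C * xₙ`. Quotients of
two such solutions are then comparable.
-/

namespace BoundaryHarnack

open Matrix Metric Topology

local notation "𝔼" n:max => EuclideanSpace ℝ (Fin n)

/-! ### Matrices -/

section Matrices

variable {ι : Type*} {n : ℕ} {lam Lam : ℝ}

open scoped ComplexOrder in
lemma trace_mul_nonneg {𝕜 : Type*} [RCLike 𝕜] [Fintype ι] {A B : Matrix ι ι 𝕜}
    (hA : A.PosSemidef) (hB : B.PosSemidef) : 0 ≤ (A * B).trace := by
  obtain ⟨m, v, rfl⟩ := posSemidef_iff_eq_sum_vecMulVec.1 hA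
  rw [Matrix.sum_mul, trace_sum]
  refine Finset.sum_nonneg fun i _ => ?_
  rw [vecMulVec_mul, trace_vecMulVec, dotProduct_comm, ← dotProduct_mulVec]
  exact hB.dotProduct_mulVec_nonneg (v i)

variable [DecidableEq ι]

lemma det_le_trace_pow [Fintype ι] {H : Matrix ι ι ℝ} (hH : H.PosSemidef) :
    H.det ≤ H.trace ^ Fintype.card ι := by
  have hdet := hH.isHermitian.det_eq_prod_eigenvalues
  have htrace := hH.isHermitian.trace_eq_sum_eigenvalues
  simp only [RCLike.ofReal_real_eq_id, id] at hdet htrace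
  calc H.det = ∏ i, hH.isHermitian.eigenvalues i := hdet
    _ ≤ ∏ _i : ι, H.trace := by
        refine Finset.prod_le_prod (fun i _ => hH.eigenvalues_nonneg i) fun i _ => ?_
        rw [htrace]
        exact Finset.single_le_sum (f := hH.isHermitian.eigenvalues)
          (fun j _ => hH.eigenvalues_nonneg j) (Finset.mem_univ i)
    _ = H.trace ^ Fintype.card ι := by simp

/-- The coefficient matrices over which the Pucci operators are extremal: `lam • 1 ≤ A ≤ Lam • 1`
in the Loewner order. Symmetry of `A` is part of positive semidefiniteness. -/
structure IsElliptic (lam Lam : ℝ) (A : Matrix ι ι ℝ) : Prop where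
  lower : (A - lam • (1 : Matrix ι ι ℝ)).PosSemidef
  upper : (Lam • (1 : Matrix ι ι ℝ) - A).PosSemidef

lemma IsElliptic.trace_le [Fintype ι] {A : Matrix ι ι ℝ} (hA : IsElliptic lam Lam A) :
    A.trace ≤ Fintype.card ι * Lam := by
  have := hA.upper.trace_nonneg
  simp only [trace_sub, trace_smul, trace_one, smul_eq_mul] at this
  linarith

lemma IsElliptic.mul_trace_le [Fintype ι] {A H : Matrix ι ι ℝ} (hA : IsElliptic lam Lam A)
    (hH : H.PosSemidef) : lam * H.trace ≤ (A * H).trace := by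
  have := trace_mul_nonneg hA.lower hH
  simp only [Matrix.sub_mul, trace_sub, Matrix.smul_mul, Matrix.one_mul, trace_smul,
    smul_eq_mul] at this
  linarith

lemma isElliptic_smul_one (h : lam ≤ Lam) : IsElliptic lam Lam (lam • (1 : Matrix ι ι ℝ)) where
  lower := by simpa using Matrix.PosSemidef.zero
  upper := by
    rw [← sub_smul]
    exact Matrix.PosSemidef.one.smul (sub_nonneg.2 h)

lemma exists_isElliptic_trace_lt_of_pucciMinus_lt (h : lam ≤ Lam)
    {M : Matrix (Fin n) (Fin n) ℝ} {c : ℝ} (hM : pucciMinus n lam Lam M < c) :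
    ∃ A, IsElliptic lam Lam A ∧ (A * M).trace < c := by
  have hne := isElliptic_smul_one (ι := Fin n) h
  rw [pucciMinus] at hM
  obtain ⟨_, ⟨A, -, hlow, hup, rfl⟩, hA⟩ := exists_lt_of_csInf_lt
    (by exact ⟨_, _, isSymm_one.smul _, hne.lower, hne.upper, rfl⟩) hM
  exact ⟨A, ⟨hlow, hup⟩, hA⟩

lemma exists_isElliptic_lt_trace_of_lt_pucciPlus (h : lam ≤ Lam)
    {M : Matrix (Fin n) (Fin n) ℝ} {c : ℝ} (hM : c < pucciPlus n lam Lam M) :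
    ∃ A, IsElliptic lam Lam A ∧ c < (A * M).trace := by
  have hne := isElliptic_smul_one (ι := Fin n) h
  rw [pucciPlus] at hM
  obtain ⟨_, ⟨A, -, hlow, hup, rfl⟩, hA⟩ := exists_lt_of_lt_csSup
    (by exact ⟨_, _, isSymm_one.smul _, hne.lower, hne.upper, rfl⟩) hM
  exact ⟨A, ⟨hlow, hup⟩, hA⟩

end Matrices

/-! ### Second derivatives -/

section SecondDerivative

variable {E : Type*} [NormedAddCommGroup E] [NormedSpace ℝ E] {w : E → ℝ} {x : E}

lemma differentiableAt_fderiv (hw : ContDiffAt ℝ 2 w x) : DifferentiableAt ℝ (fderiv ℝ w) x :=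
  (hw.fderiv_right (m := 1) (by norm_num)).differentiableAt (by norm_num)

lemma eventually_differentiableAt (hw : ContDiffAt ℝ 2 w x) :
    ∀ᶠ y in 𝓝 x, DifferentiableAt ℝ w y := by
  filter_upwards [hw.eventually (by simp)] with y hy using hy.differentiableAt (by norm_num)

lemma deriv_deriv_nonneg_of_isLocalMin {g : ℝ → ℝ} {t : ℝ} (hg : ContinuousAt g t)
    (hmin : IsLocalMin g t) : 0 ≤ deriv (deriv g) t := by
  by_contra! hneg
  have hmax := isLocalMax_of_deriv_deriv_neg hneg hmin.deriv_eq_zero hg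
  have hconst : g =ᶠ[𝓝 t] fun _ => g t := by
    filter_upwards [hmax, hmin] with s h₁ h₂ using le_antisymm h₁ h₂
  have : deriv (deriv g) t = 0 := by
    rw [hconst.deriv.deriv_eq]; simp
  exact hneg.ne this

lemma hasDerivAt_line (x v : E) (t : ℝ) : HasDerivAt (fun t : ℝ => x + t • v) v t := by
  simpa using ((hasDerivAt_id t).smul_const v).const_add x

lemma deriv_deriv_line (hw : ContDiffAt ℝ 2 w x) (v : E) :
    deriv (deriv fun t : ℝ => w (x + t • v)) 0 = fderiv ℝ (fderiv ℝ w) x v v := by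
  have hx : x + (0 : ℝ) • v = x := by simp
  have hdiff : ∀ᶠ t in 𝓝 (0 : ℝ), DifferentiableAt ℝ w (x + t • v) :=
    (hasDerivAt_line x v 0).continuousAt.eventually
      (p := DifferentiableAt ℝ w) (by simpa using eventually_differentiableAt hw)
  have hderiv : (deriv fun t : ℝ => w (x + t • v)) =ᶠ[𝓝 0]
      fun t => fderiv ℝ w (x + t • v) v := by
    filter_upwards [hdiff] with t ht
    exact (ht.hasFDerivAt.comp_hasDerivAt t (hasDerivAt_line x v t)).deriv
  have hD : HasFDerivAt (fderiv ℝ w) (fderiv ℝ (fderiv ℝ w) x) (x + (0 : ℝ) • v) := by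
    rw [hx]; exact (differentiableAt_fderiv hw).hasFDerivAt
  rw [hderiv.deriv_eq]
  exact ((ContinuousLinearMap.apply ℝ ℝ v).hasFDerivAt.comp_hasDerivAt (0 : ℝ)
    (hD.comp_hasDerivAt 0 (hasDerivAt_line x v 0))).deriv

lemma fderiv_fderiv_nonneg_of_isLocalMin (hw : ContDiffAt ℝ 2 w x) (hmin : IsLocalMin w x)
    (v : E) : 0 ≤ fderiv ℝ (fderiv ℝ w) x v v := by
  have hx : x + (0 : ℝ) • v = x := by simp
  have hline : ContinuousAt (fun t : ℝ => x + t • v) 0 := (hasDerivAt_line x v 0).continuousAt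
  rw [← deriv_deriv_line hw]
  refine deriv_deriv_nonneg_of_isLocalMin
    (ContinuousAt.comp (f := fun t : ℝ => x + t • v) (g := w) ?_ hline) ?_
  · rw [hx]; exact hw.continuousAt
  · have : ∀ᶠ t in 𝓝 (0 : ℝ), w x ≤ w (x + t • v) :=
      hline.eventually (p := fun y => w x ≤ w y) (by simpa [IsLocalMin, IsMinFilter] using hmin)
    simpa [IsLocalMin, IsMinFilter] using this

end SecondDerivative

/-! ### Hessians -/

section Hessian

variable {n : ℕ}

variable {w φ : 𝔼 n → ℝ} {x : 𝔼 n}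

lemma hess_apply (hw : ContDiffAt ℝ 2 w x) (i j : Fin n) :
    hess n w x i j =
      fderiv ℝ (fderiv ℝ w) x (EuclideanSpace.single i 1) (EuclideanSpace.single j 1) := by
  unfold hess
  rw [fderiv_clm_apply (differentiableAt_fderiv hw) (differentiableAt_const _)]
  simp

lemma isHermitian_hess (hw : ContDiffAt ℝ 2 w x) : (hess n w x).IsHermitian := by
  ext i j
  rw [conjTranspose_apply, hess_apply hw, hess_apply hw]
  exact hw.isSymmSndFDerivAt (by simp) _ _

lemma dotProduct_hess_mulVec (hw : ContDiffAt ℝ 2 w x) (v : 𝔼 n) :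
    v.ofLp ⬝ᵥ (hess n w x *ᵥ v.ofLp) = fderiv ℝ (fderiv ℝ w) x v v := by
  have hv : v = ∑ i, v i • EuclideanSpace.single i (1 : ℝ) := by
    ext j; simp [Pi.single_apply]
  conv_rhs => rw [hv]
  simp only [map_sum, map_smul, _root_.sum_apply, _root_.smul_apply,
    smul_eq_mul, dotProduct, mulVec, Finset.mul_sum, hess_apply hw]
  rw [Finset.sum_comm]
  exact Finset.sum_congr rfl fun i _ => Finset.sum_congr rfl fun j _ => by ring

lemma posSemidef_hess (hw : ContDiffAt ℝ 2 w x) (hD : ∀ v, 0 ≤ fderiv ℝ (fderiv ℝ w) x v v) :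
    (hess n w x).PosSemidef := by
  rw [posSemidef_iff_dotProduct_mulVec]
  refine ⟨isHermitian_hess hw, fun v => ?_⟩
  rw [star_trivial]
  exact (hD (WithLp.toLp 2 v)).trans_eq (dotProduct_hess_mulVec hw (WithLp.toLp 2 v)).symm

lemma hess_add (hw : ContDiffAt ℝ 2 w x) (hφ : ContDiffAt ℝ 2 φ x) :
    hess n (fun y => w y + φ y) x = hess n w x + hess n φ x := by
  ext i j
  rw [Matrix.add_apply, hess_apply (hw.add hφ), hess_apply hw, hess_apply hφ]
  have : fderiv ℝ (fun y => w y + φ y) =ᶠ[𝓝 x] fun y => fderiv ℝ w y + fderiv ℝ φ y := by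
    filter_upwards [eventually_differentiableAt hw, eventually_differentiableAt hφ]
      with y h₁ h₂ using fderiv_fun_add h₁ h₂
  rw [this.fderiv_eq, fderiv_fun_add (differentiableAt_fderiv hw) (differentiableAt_fderiv hφ)]
  rfl

lemma hess_const_mul (c : ℝ) (hw : ContDiffAt ℝ 2 w x) :
    hess n (fun y => c * w y) x = c • hess n w x := by
  ext i j
  rw [Matrix.smul_apply, hess_apply (contDiffAt_const.mul hw), hess_apply hw]
  have : fderiv ℝ (fun y => c * w y) =ᶠ[𝓝 x] fun y => c • fderiv ℝ w y := by
    filter_upwards [eventually_differentiableAt hw] with y hy using fderiv_const_mul hy c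
  rw [this.fderiv_eq, fderiv_fun_const_smul (differentiableAt_fderiv hw)]
  rfl

lemma hess_neg (hw : ContDiffAt ℝ 2 w x) : hess n (fun y => -w y) x = -hess n w x := by
  simpa using hess_const_mul (-1) hw

lemma hess_congr (h : w =ᶠ[𝓝 x] φ) : hess n w x = hess n φ x := by
  ext i j
  have : (fun y => fderiv ℝ w y (EuclideanSpace.single j (1 : ℝ))) =ᶠ[𝓝 x]
      fun y => fderiv ℝ φ y (EuclideanSpace.single j (1 : ℝ)) := by
    filter_upwards [h.fderiv (𝕜 := ℝ)] with y hy
    rw [hy]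
  unfold hess
  rw [this.fderiv_eq]

/-! ### Supersolutions -/

/-- `w` is `C²` at `x` and `𝓜⁻(D²w) ≤ b (|Dw| + β) + α` at `x`. The Pucci operator enters through
matrices that nearly attain the infimum, so that no boundedness is needed to use it; `β` and `α`
absorb the gradient and the Hessian of a function added to a supersolution. -/
def IsSupersolutionAt (lam Lam b β α : ℝ) (w : 𝔼 n → ℝ) (x : 𝔼 n) : Prop :=
  ContDiffAt ℝ 2 w x ∧ ∀ η > 0, ∃ A, IsElliptic lam Lam A ∧
    (A * hess n w x).trace ≤ b * (‖fderiv ℝ w x‖ + β) + α + η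

namespace IsSupersolutionAt

variable {lam Lam b β α β' α' c : ℝ}

lemma of_pucciMinus (h : lam ≤ Lam) (hw : ContDiffAt ℝ 2 w x)
    (hM : pucciMinus n lam Lam (hess n w x) - b * gradNorm n w x ≤ 0) :
    IsSupersolutionAt lam Lam b 0 0 w x := by
  refine ⟨hw, fun η hη => ?_⟩
  obtain ⟨A, hA, hlt⟩ := exists_isElliptic_trace_lt_of_pucciMinus_lt h
    (show pucciMinus n lam Lam (hess n w x) < b * gradNorm n w x + η by linarith)
  exact ⟨A, hA, by simpa [gradNorm] using hlt.le⟩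

lemma neg_of_pucciPlus (h : lam ≤ Lam) (hw : ContDiffAt ℝ 2 w x)
    (hM : 0 ≤ pucciPlus n lam Lam (hess n w x) + b * gradNorm n w x) :
    IsSupersolutionAt lam Lam b 0 0 (fun y => -w y) x := by
  refine ⟨hw.neg, fun η hη => ?_⟩
  obtain ⟨A, hA, hlt⟩ := exists_isElliptic_lt_trace_of_lt_pucciPlus h
    (show -(b * gradNorm n w x) - η < pucciPlus n lam Lam (hess n w x) by linarith)
  refine ⟨A, hA, ?_⟩
  rw [hess_neg hw, fderiv_fun_neg, norm_neg, Matrix.mul_neg, trace_neg]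
  unfold gradNorm at hlt
  linarith

lemma congr (h : IsSupersolutionAt lam Lam b β α w x) (he : w =ᶠ[𝓝 x] φ) :
    IsSupersolutionAt lam Lam b β α φ x := by
  refine ⟨h.1.congr_of_eventuallyEq he.symm, ?_⟩
  rw [← hess_congr he, ← he.fderiv_eq]
  exact h.2

lemma mono (h : IsSupersolutionAt lam Lam b β α w x) (hb : 0 ≤ b) (hβ : β ≤ β') (hα : α ≤ α') :
    IsSupersolutionAt lam Lam b β' α' w x := by
  refine ⟨h.1, fun η hη => ?_⟩
  obtain ⟨A, hA, hAt⟩ := h.2 η hη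
  exact ⟨A, hA, hAt.trans (by gcongr)⟩

lemma add (h : IsSupersolutionAt lam Lam b β α w x) (hb : 0 ≤ b)
    (hφ : ContDiffAt ℝ 2 φ x) (hDφ : ‖fderiv ℝ φ x‖ ≤ β')
    (hD2φ : ∀ A, IsElliptic lam Lam A → (A * hess n φ x).trace ≤ α') :
    IsSupersolutionAt lam Lam b (β + β') (α + α') (fun y => w y + φ y) x := by
  refine ⟨h.1.add hφ, fun η hη => ?_⟩
  obtain ⟨A, hA, hAt⟩ := h.2 η hη
  refine ⟨A, hA, ?_⟩
  have hDw : ‖fderiv ℝ w x‖ ≤ ‖fderiv ℝ (fun y => w y + φ y) x‖ + β' := by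
    rw [fderiv_fun_add (h.1.differentiableAt (by norm_num)) (hφ.differentiableAt (by norm_num))]
    have := norm_sub_le (fderiv ℝ w x + fderiv ℝ φ x) (fderiv ℝ φ x)
    rw [add_sub_cancel_right] at this
    linarith
  rw [hess_add h.1 hφ, Matrix.mul_add, trace_add]
  linarith [hD2φ A hA, mul_le_mul_of_nonneg_left hDw hb]

lemma add_const (h : IsSupersolutionAt lam Lam b β α w x) (hb : 0 ≤ b) (c : ℝ) :
    IsSupersolutionAt lam Lam b β α (fun y => w y + c) x := by
  have hess_const : hess n (fun _ => c) x = 0 := by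
    ext i j; simp [hess]
  simpa using h.add hb contDiffAt_const (φ := fun _ => c) (β' := 0) (α' := 0) (by simp)
    fun A _ => by simp [hess_const]

lemma add_const_mul (h : IsSupersolutionAt lam Lam b β α w x) (hb : 0 ≤ b)
    (hφ : ContDiffAt ℝ 2 φ x) (hDφ : |c| * ‖fderiv ℝ φ x‖ ≤ β')
    (hD2φ : ∀ A, IsElliptic lam Lam A → c * (A * hess n φ x).trace ≤ α') :
    IsSupersolutionAt lam Lam b (β + β') (α + α') (fun y => w y + c * φ y) x := by
  refine h.add hb (contDiffAt_const.mul hφ) ?_ fun A hA => ?_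
  · rwa [fderiv_const_mul (hφ.differentiableAt (by norm_num)), norm_smul, Real.norm_eq_abs]
  · rw [hess_const_mul c hφ, Matrix.mul_smul, trace_smul, smul_eq_mul]
    exact hD2φ A hA

lemma const_mul (h : IsSupersolutionAt lam Lam b 0 0 w x) (hc : 0 < c) :
    IsSupersolutionAt lam Lam b 0 0 (fun y => c * w y) x := by
  refine ⟨contDiffAt_const.mul h.1, fun η hη => ?_⟩
  obtain ⟨A, hA, hAt⟩ := h.2 (η / c) (by positivity)
  refine ⟨A, hA, ?_⟩
  rw [hess_const_mul c h.1, fderiv_const_mul (h.1.differentiableAt (by norm_num)) c, norm_smul,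
    Matrix.mul_smul, trace_smul, smul_eq_mul, Real.norm_eq_abs, abs_of_pos hc]
  calc c * (A * hess n w x).trace
      ≤ c * (b * (‖fderiv ℝ w x‖ + 0) + 0 + η / c) := by gcongr
    _ = b * (c * ‖fderiv ℝ w x‖ + 0) + 0 + η := by field_simp; ring

lemma mul_trace_hess_le (h : IsSupersolutionAt lam Lam b β α w x)
    (hH : (hess n w x).PosSemidef) :
    lam * (hess n w x).trace ≤ b * (‖fderiv ℝ w x‖ + β) + α := by
  refine le_of_forall_pos_le_add fun η hη => ?_
  obtain ⟨A, hA, hAt⟩ := h.2 η hη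
  exact (hA.mul_trace_le hH).trans hAt

end IsSupersolutionAt

end Hessian

/-! ### The Aleksandrov–Bakelman–Pucci estimate -/

section Gradient

variable {n : ℕ} {w : 𝔼 n → ℝ} {x : 𝔼 n}

lemma gradient_apply (w : 𝔼 n → ℝ) (x : 𝔼 n) (i : Fin n) :
    gradient w x i = fderiv ℝ w x (EuclideanSpace.single i 1) := by
  rw [← inner_gradient_left, EuclideanSpace.inner_single_right]
  simp

lemma differentiableAt_gradient (hw : ContDiffAt ℝ 2 w x) :
    DifferentiableAt ℝ (gradient w) x := by
  refine (differentiableAt_euclidean).2 fun i => ?_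
  simp only [gradient_apply]
  exact (differentiableAt_fderiv hw).clm_apply (differentiableAt_const _)

lemma det_fderiv_gradient (hw : ContDiffAt ℝ 2 w x) :
    (fderiv ℝ (gradient w) x).det = (hess n w x).det := by
  rw [ContinuousLinearMap.det, ← LinearMap.det_toMatrix (EuclideanSpace.basisFun (Fin n) ℝ).toBasis,
    ← det_transpose]
  congr 1
  ext i j
  have := ((EuclideanSpace.proj j : 𝔼 n →L[ℝ] ℝ).hasFDerivAt.comp x
    (differentiableAt_gradient hw).hasFDerivAt).fderiv
  have hcomp : (EuclideanSpace.proj j : 𝔼 n →L[ℝ] ℝ) ∘ gradient w =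
      fun y => fderiv ℝ w y (EuclideanSpace.single j 1) := funext fun y => gradient_apply w y j
  rw [hcomp] at this
  simp [LinearMap.toMatrix_apply, hess, this]

end Gradient

section Contact

variable {n : ℕ} {K : Set (𝔼 n)} {w : 𝔼 n → ℝ} {d m t : ℝ} {x₀ : 𝔼 n}

/-- The points where `w` is negative and of gradient smaller than `t`, with positive semidefinite
Hessian: this contains the points of contact of `w` with its convex envelope having slope less than
`t`. -/
def contactSet (K : Set (𝔼 n)) (w : 𝔼 n → ℝ) (t : ℝ) : Set (𝔼 n) :=
  {x | x ∈ interior K ∧ w x < 0 ∧ ‖fderiv ℝ w x‖ < t ∧ ∀ v, 0 ≤ fderiv ℝ (fderiv ℝ w) x v v}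

lemma contactSet_subset : contactSet K w t ⊆ {x ∈ K | w x < 0} :=
  fun _ hx => ⟨interior_subset hx.1, hx.2.1⟩

lemma ball_subset_gradient_image_contactSet (hK : IsCompact K) (hw : ContinuousOn w K)
    (hC2 : ∀ x ∈ K, w x < 0 → x ∈ interior K ∧ ContDiffAt ℝ 2 w x) (hd : 0 < d)
    (hdiam : ∀ x ∈ K, ∀ y ∈ K, ‖x - y‖ ≤ d) (hx₀ : x₀ ∈ K) (hwx₀ : w x₀ ≤ -m) :
    ball 0 (m / d) ⊆ gradient w '' contactSet K w (m / d) := by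
  intro p hp
  rw [mem_ball_zero_iff] at hp
  set P : StrongDual ℝ (𝔼 n) := InnerProductSpace.toDual ℝ (𝔼 n) p with hP
  have hPp : ‖P‖ = ‖p‖ := LinearIsometryEquiv.norm_map _ _
  obtain ⟨x, hxK, hmin⟩ := hK.exists_isMinOn ⟨x₀, hx₀⟩ (hw.sub P.continuous.continuousOn)
  have hneg : w x < 0 := by
    have hle : w x - P x ≤ w x₀ - P x₀ := hmin hx₀
    have hslope : P (x - x₀) ≤ ‖p‖ * d := by
      rw [← hPp]
      exact (le_abs_self _).trans ((P.le_opNorm _).trans (by gcongr; exact hdiam x hxK x₀ hx₀))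
    rw [map_sub] at hslope
    linarith [(lt_div_iff₀ hd).1 hp]
  obtain ⟨hxint, hwx⟩ := hC2 x hxK hneg
  have hlocal : IsLocalMin (fun y => w y - P y) x :=
    hmin.isLocalMin (mem_interior_iff_mem_nhds.1 hxint)
  have hderiv : fderiv ℝ (fun y => w y - P y) =ᶠ[𝓝 x] fun y => fderiv ℝ w y - P := by
    filter_upwards [eventually_differentiableAt hwx] with y hy
    rw [fderiv_fun_sub hy P.differentiableAt, ContinuousLinearMap.fderiv]
  have hgrad : fderiv ℝ w x = P := by
    simpa [hderiv.eq_of_nhds, sub_eq_zero] using hlocal.fderiv_eq_zero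
  refine ⟨x, ⟨hxint, hneg, by rwa [hgrad, hPp], fun v => ?_⟩, ?_⟩
  · have := fderiv_fderiv_nonneg_of_isLocalMin (hwx.sub P.contDiff.contDiffAt) hlocal v
    rwa [hderiv.fderiv_eq, fderiv_sub_const] at this
  · rw [gradient, hgrad, hP, LinearIsometryEquiv.symm_apply_apply]

lemma measurableSet_contactSet (hw : ContinuousOn w K)
    (hC2 : ∀ x ∈ K, w x < 0 → ContDiffAt ℝ 2 w x) : MeasurableSet (contactSet K w t) := by
  set G := interior K ∩ w ⁻¹' Set.Iio 0
  have hG : IsOpen G := (hw.mono interior_subset).isOpen_inter_preimage isOpen_interior isOpen_Iio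
  have hC2G : ∀ x ∈ G, ContDiffAt ℝ 2 w x := fun x hx => hC2 x (interior_subset hx.1) hx.2
  have hD : ContinuousOn (fderiv ℝ w) G := fun x hx =>
    (differentiableAt_fderiv (hC2G x hx)).continuousAt.continuousWithinAt
  have hD2 : ∀ v, ContinuousOn (fun x => fderiv ℝ (fderiv ℝ w) x v v) G := fun v x hx =>
    (((hC2G x hx).fderiv_right (m := 1) (by norm_num)).fderiv_right (m := 0)
      (by norm_num)).continuousAt.clm_apply continuousAt_const
      |>.clm_apply continuousAt_const |>.continuousWithinAt
  have hopen : IsOpen (G ∩ ⋃ v, {x | fderiv ℝ (fderiv ℝ w) x v v < 0}) := by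
    rw [Set.inter_iUnion]
    exact isOpen_iUnion fun v => (hD2 v).isOpen_inter_preimage hG isOpen_Iio
  have heq : contactSet K w t =
      (G ∩ fderiv ℝ w ⁻¹' ball 0 t) \ (G ∩ ⋃ v, {x | fderiv ℝ (fderiv ℝ w) x v v < 0}) := by
    ext x
    simp only [contactSet, G, Set.mem_sdiff, Set.mem_inter_iff, Set.mem_preimage, Set.mem_Iio,
      mem_ball_zero_iff, Set.mem_iUnion, Set.mem_ofPred_eq]
    constructor
    · exact fun ⟨hK, hneg, ht, hpos⟩ =>
        ⟨⟨⟨hK, hneg⟩, ht⟩, fun ⟨_, v, hv⟩ => hv.not_ge (hpos v)⟩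
    · exact fun ⟨⟨hxG, ht⟩, hpos⟩ =>
        ⟨hxG.1, hxG.2, ht, fun v => not_lt.1 fun hv => hpos ⟨hxG, v, hv⟩⟩
  rw [heq]
  exact (hD.isOpen_inter_preimage hG isOpen_ball).measurableSet.diff hopen.measurableSet

end Contact

section ABP

variable {n : ℕ} {lam Lam β : ℝ} {K S : Set (𝔼 n)} {w b f : 𝔼 n → ℝ}

lemma IsSupersolutionAt.abs_det_hess_le {x : 𝔼 n} {b α t : ℝ}
    (h : IsSupersolutionAt lam Lam b β α w x) (hlam : 0 < lam) (hb : 0 ≤ b) (hβ : 0 ≤ β)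
    (hα : 0 ≤ α) (hpos : (hess n w x).PosSemidef) (ht : ‖fderiv ℝ w x‖ ≤ t) :
    |(hess n w x).det| ≤ (2 / lam) ^ n * ((t + β) ^ n * b ^ n + α ^ n) := by
  have ht0 : 0 ≤ t := (norm_nonneg _).trans ht
  have htrace : (hess n w x).trace ≤ ((t + β) * b + α) / lam := by
    rw [le_div_iff₀ hlam]
    linarith [h.mul_trace_hess_le hpos, mul_le_mul_of_nonneg_left ht hb]
  rw [abs_of_nonneg hpos.det_nonneg]
  calc (hess n w x).det
      ≤ (((t + β) * b + α) / lam) ^ n := (det_le_trace_pow hpos).trans (by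
        rw [Fintype.card_fin]; exact pow_le_pow_left₀ hpos.trace_nonneg htrace n)
    _ ≤ (2 ^ (n - 1) * (((t + β) * b) ^ n + α ^ n)) / lam ^ n := by
        rw [div_pow]; gcongr; exact add_pow_le (by positivity) hα n
    _ ≤ (2 ^ n * (((t + β) * b) ^ n + α ^ n)) / lam ^ n := by
        gcongr
        · norm_num
        · exact n.sub_le 1
    _ = (2 / lam) ^ n * ((t + β) ^ n * b ^ n + α ^ n) := by rw [div_pow, mul_pow]; ring

/-- The setting of the Aleksandrov–Bakelman–Pucci estimate: `w` is continuous on `K`, and wherever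
it is negative it satisfies `𝓜⁻(D²w) ≤ b (|Dw| + β) + f` with `b ≥ 0`, away from `∂K`. -/
structure NegSetSupersolution (lam Lam β : ℝ) (K : Set (𝔼 n)) (b f w : 𝔼 n → ℝ) : Prop where
  continuousOn : ContinuousOn w K
  mem_interior : ∀ x ∈ K, w x < 0 → x ∈ interior K
  drift_nonneg : ∀ x ∈ K, w x < 0 → 0 ≤ b x
  isSupersolutionAt : ∀ x ∈ K, w x < 0 → IsSupersolutionAt lam Lam (b x) β (f x) w x

namespace NegSetSupersolution

variable {d m : ℝ} {x₀ : 𝔼 n}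

lemma ofReal_abs_det_fderiv_gradient_le {t : ℝ} {x : 𝔼 n}
    (h : NegSetSupersolution lam Lam β K b f w) (hlam : 0 < lam) (hβ : 0 ≤ β) (hf0 : 0 ≤ f)
    (hx : x ∈ contactSet K w t) :
    ENNReal.ofReal |(fderiv ℝ (gradient w) x).det| ≤ ENNReal.ofReal ((2 / lam) ^ n) *
      (ENNReal.ofReal ((t + β) ^ n) * ENNReal.ofReal (b x ^ n) + ENNReal.ofReal (f x ^ n)) := by
  obtain ⟨hxK, hneg⟩ := contactSet_subset hx
  have hsup := h.isSupersolutionAt x hxK hneg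
  have hbx := h.drift_nonneg x hxK hneg
  have htβ : 0 ≤ t + β := add_nonneg ((norm_nonneg _).trans hx.2.2.1.le) hβ
  have hfx := hf0 x
  rw [← ENNReal.ofReal_mul (by positivity), ← ENNReal.ofReal_add (by positivity)
    (pow_nonneg hfx n), ← ENNReal.ofReal_mul (by positivity), det_fderiv_gradient hsup.1]
  exact ENNReal.ofReal_le_ofReal (hsup.abs_det_hess_le hlam hbx hβ hfx
    (posSemidef_hess hsup.1 hx.2.2.2) hx.2.2.1.le)

lemma volume_ball_le (h : NegSetSupersolution lam Lam β K b f w) (hlam : 0 < lam) (hβ : 0 ≤ β)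
    (hf : Measurable f) (hf0 : 0 ≤ f) (hK : IsCompact K) (hd : 0 < d)
    (hdiam : ∀ x ∈ K, ∀ y ∈ K, ‖x - y‖ ≤ d) (hx₀ : x₀ ∈ K) (hwx₀ : w x₀ ≤ -m) :
    volume (ball (0 : 𝔼 n) (m / d)) ≤ ENNReal.ofReal ((2 / lam) ^ n) *
      (ENNReal.ofReal ((m / d + β) ^ n) * (∫⁻ x in {x ∈ K | w x < 0}, ENNReal.ofReal (b x ^ n)) +
        ∫⁻ x in {x ∈ K | w x < 0}, ENNReal.ofReal (f x ^ n)) := by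
  set t := m / d
  set Γ := contactSet K w t
  have hΓ : Γ ⊆ {x ∈ K | w x < 0} := contactSet_subset
  have hΓm : MeasurableSet Γ :=
    measurableSet_contactSet h.continuousOn fun x hx hneg => (h.isSupersolutionAt x hx hneg).1
  have hcover : ball 0 t ⊆ gradient w '' Γ :=
    ball_subset_gradient_image_contactSet hK h.continuousOn
      (fun x hx hneg => ⟨h.mem_interior x hx hneg, (h.isSupersolutionAt x hx hneg).1⟩)
      hd hdiam hx₀ hwx₀
  calc volume (ball (0 : 𝔼 n) t) ≤ volume (gradient w '' Γ) := measure_mono hcover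
    _ ≤ ∫⁻ x in Γ, ENNReal.ofReal |(fderiv ℝ (gradient w) x).det| :=
        addHaar_image_le_lintegral_abs_det_fderiv volume hΓm fun x hx =>
          (differentiableAt_gradient
            (h.isSupersolutionAt x (hΓ hx).1 (hΓ hx).2).1).hasFDerivAt.hasFDerivWithinAt
    _ ≤ ∫⁻ x in Γ, _ := setLIntegral_mono' hΓm fun x hx =>
        h.ofReal_abs_det_fderiv_gradient_le hlam hβ hf0 hx
    _ = ENNReal.ofReal ((2 / lam) ^ n) * (ENNReal.ofReal ((t + β) ^ n) *
          (∫⁻ x in Γ, ENNReal.ofReal (b x ^ n)) + ∫⁻ x in Γ, ENNReal.ofReal (f x ^ n)) := by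
        rw [lintegral_const_mul' _ _ ENNReal.ofReal_ne_top,
          lintegral_add_right _ (hf.pow_const n).ennreal_ofReal,
          lintegral_const_mul' _ _ ENNReal.ofReal_ne_top]
    _ ≤ _ := by gcongr

end NegSetSupersolution

/-- The volume of the unit ball of `ℝⁿ`, the constant of all volume estimates. -/
noncomputable def unitBallVolume (n : ℕ) : ℝ := volume.real (ball (0 : 𝔼 n) 1)

lemma unitBallVolume_pos (n : ℕ) : 0 < unitBallVolume n :=
  ENNReal.toReal_pos (measure_ball_pos _ _ one_pos).ne' measure_ball_lt_top.ne

lemma volume_ball_eq {r : ℝ} (hr : 0 < r) (x : 𝔼 n) :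
    volume (ball x r) = ENNReal.ofReal (unitBallVolume n * r ^ n) := by
  rw [Measure.addHaar_ball_of_pos _ _ hr, finrank_euclideanSpace_fin, mul_comm, unitBallVolume,
    ENNReal.ofReal_mul measureReal_nonneg, ofReal_measureReal measure_ball_lt_top.ne]

lemma volume_closedBall_eq {r : ℝ} (hr : 0 < r) (x : 𝔼 n) :
    volume (closedBall x r) = ENNReal.ofReal (unitBallVolume n * r ^ n) := by
  rw [Measure.addHaar_closedBall _ _ hr.le, finrank_euclideanSpace_fin, mul_comm, unitBallVolume,
    ENNReal.ofReal_mul measureReal_nonneg, ofReal_measureReal measure_ball_lt_top.ne]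

lemma lintegral_indicator_const_pow {α : ℝ} (hn : n ≠ 0) (hα : 0 ≤ α) (hS : MeasurableSet S)
    (N : Set (𝔼 n)) (hN : volume N ≠ ⊤) :
    ∫⁻ x in N, ENNReal.ofReal ((S.indicator (fun _ => α) x) ^ n) =
      ENNReal.ofReal (α ^ n * volume.real (S ∩ N)) := by
  have hind : (fun x => ENNReal.ofReal ((S.indicator (fun _ => α) x) ^ n)) =
      S.indicator fun _ => ENNReal.ofReal (α ^ n) := by
    ext x; by_cases hx : x ∈ S <;> simp [hx, hn]
  rw [hind, lintegral_indicator hS, setLIntegral_const, Measure.restrict_apply hS,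
    ENNReal.ofReal_mul (by positivity),
    ofReal_measureReal (measure_ne_top_of_subset Set.inter_subset_right hN)]

lemma NegSetSupersolution.unitBallVolume_mul_pow_le {d m α B : ℝ} {x₀ : 𝔼 n} (hn : n ≠ 0)
    (h : NegSetSupersolution lam Lam β K b (S.indicator fun _ => α) w) (hlam : 0 < lam)
    (hK : IsCompact K) (hS : MeasurableSet S) (hd : 0 < d) (hm : 0 < m) (hα : 0 ≤ α) (hβ : 0 ≤ β)
    (hB : 0 ≤ B) (hdiam : ∀ x ∈ K, ∀ y ∈ K, ‖x - y‖ ≤ d)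
    (hdrift : ∫⁻ x in {x ∈ K | w x < 0}, ENNReal.ofReal (b x ^ n) ≤ ENNReal.ofReal B)
    (hx₀ : x₀ ∈ K) (hwx₀ : w x₀ ≤ -m) :
    unitBallVolume n * (m / d) ^ n ≤
      (2 / lam) ^ n * ((m / d + β) ^ n * B + α ^ n * volume.real (S ∩ {x ∈ K | w x < 0})) := by
  have ht : 0 < m / d := div_pos hm hd
  rw [← ENNReal.ofReal_le_ofReal_iff (by positivity), ← volume_ball_eq ht 0,
    ENNReal.ofReal_mul (by positivity), ENNReal.ofReal_add (by positivity) (by positivity),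
    ENNReal.ofReal_mul (p := (m / d + β) ^ n) (by positivity),
    ← lintegral_indicator_const_pow hn hα hS _
      (measure_ne_top_of_subset (fun x hx => hx.1) hK.measure_ne_top)]
  refine (h.volume_ball_le hlam hβ (measurable_const.indicator hS)
    (Set.indicator_nonneg fun _ _ => hα) hK hd hdiam hx₀ hwx₀).trans ?_
  gcongr

lemma exists_abp_constants (hn : n ≠ 0) (hlam : 0 < lam) : ∃ C > 0, ∃ ε > 0,
    ∀ {K S : Set (𝔼 n)} {w b : 𝔼 n → ℝ} {d m α β B : ℝ} {x₀ : 𝔼 n},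
      NegSetSupersolution lam Lam β K b (S.indicator fun _ => α) w →
      IsCompact K → MeasurableSet S → 0 < d → 0 < m → 0 ≤ α → 0 ≤ β → 0 ≤ B → B ≤ ε →
      (∀ x ∈ K, ∀ y ∈ K, ‖x - y‖ ≤ d) →
      (∫⁻ x in {x ∈ K | w x < 0}, ENNReal.ofReal (b x ^ n)) ≤ ENNReal.ofReal B →
      x₀ ∈ K → w x₀ ≤ -m →
      (m / d) ^ n ≤ C * (α ^ n * volume.real (S ∩ {x ∈ K | w x < 0}) + β ^ n * B) := by
  set ω := unitBallVolume n
  have hω : 0 < ω := unitBallVolume_pos n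
  refine ⟨2 / ω * (4 / lam) ^ n, by positivity, ω / 2 / (4 / lam) ^ n, by positivity, ?_⟩
  intro K S w b d m α β B x₀ h hK hS hd hm hα hβ hB hBε hdiam hdrift hx₀ hwx₀
  have harea := h.unitBallVolume_mul_pow_le hn hlam hK hS hd hm hα hβ hB hdiam hdrift hx₀ hwx₀
  set t := m / d
  set V := volume.real (S ∩ {x ∈ K | w x < 0})
  have ht : 0 < t := div_pos hm hd
  have hV : 0 ≤ V := measureReal_nonneg
  have hsum : (t + β) ^ n ≤ 2 ^ n * (t ^ n + β ^ n) := (add_pow_le ht.le hβ n).trans <| by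
    gcongr
    · norm_num
    · exact n.sub_le 1
  have htwo : (1 : ℝ) ≤ 2 ^ n := one_le_pow₀ one_le_two
  have hpow : (4 / lam) ^ n = (2 / lam) ^ n * 2 ^ n := by rw [← mul_pow]; congr 1; ring
  have habsorb : (4 / lam) ^ n * B ≤ ω / 2 := by
    rwa [le_div_iff₀ (by positivity), mul_comm] at hBε
  have hexpand : ω * t ^ n ≤ (4 / lam) ^ n * ((t ^ n + β ^ n) * B + α ^ n * V) :=
    calc ω * t ^ n ≤ (2 / lam) ^ n * ((t + β) ^ n * B + α ^ n * V) := harea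
      _ ≤ (2 / lam) ^ n * (2 ^ n * (t ^ n + β ^ n) * B + 2 ^ n * (α ^ n * V)) := by
          refine mul_le_mul_of_nonneg_left (add_le_add ?_ ?_) (by positivity)
          · exact mul_le_mul_of_nonneg_right hsum hB
          · exact le_mul_of_one_le_left (by positivity) htwo
      _ = (4 / lam) ^ n * ((t ^ n + β ^ n) * B + α ^ n * V) := by rw [hpow]; ring
  have hhalf : ω / 2 * t ^ n ≤ (4 / lam) ^ n * (α ^ n * V + β ^ n * B) := by
    linarith [mul_le_mul_of_nonneg_right habsorb (pow_nonneg ht.le n)]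
  calc t ^ n = 2 / ω * (ω / 2 * t ^ n) := by field_simp
    _ ≤ 2 / ω * ((4 / lam) ^ n * (α ^ n * V + β ^ n * B)) := by gcongr
    _ = 2 / ω * (4 / lam) ^ n * (α ^ n * V + β ^ n * B) := by ring

lemma exists_volume_lower_bound_of_abp (hn : n ≠ 0) (hlam : 0 < lam) {κ : ℝ} (hκ : 0 < κ) :
    ∃ μ > 0, ∃ ε > 0, ∀ {K S : Set (𝔼 n)} {w b : 𝔼 n → ℝ} {d m : ℝ} {x₀ : 𝔼 n},
      NegSetSupersolution lam Lam (κ * m / d) K b (S.indicator fun _ => κ * m / d ^ 2) w →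
      IsCompact K → MeasurableSet S → 0 < d → 0 < m →
      (∀ x ∈ K, ∀ y ∈ K, ‖x - y‖ ≤ d) →
      (∫⁻ x in {x ∈ K | w x < 0}, ENNReal.ofReal (b x ^ n)) ≤ ENNReal.ofReal ε →
      x₀ ∈ K → w x₀ ≤ -m →
      μ * d ^ n ≤ volume.real (S ∩ {x ∈ K | w x < 0}) := by
  obtain ⟨C, hC, ε, hε, habp⟩ := exists_abp_constants (Lam := Lam) hn hlam
  set μ := 1 / (2 * C * κ ^ n)
  have hμ : 0 < μ := by positivity
  refine ⟨μ, hμ, min ε μ, lt_min hε hμ, ?_⟩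
  intro K S w b d m x₀ h hK hS hd hm hdiam hdrift hx₀ hwx₀
  have hle := habp h hK hS hd hm (by positivity) (by positivity) (lt_min hε hμ).le
    (min_le_left _ _) hdiam hdrift hx₀ hwx₀
  set V := volume.real (S ∩ {x ∈ K | w x < 0})
  have hscaled : (m / d) ^ n * 1 ≤ (m / d) ^ n * (C * κ ^ n * (V / d ^ n + μ)) :=
    calc (m / d) ^ n * 1
        ≤ C * ((κ * m / d ^ 2) ^ n * V + (κ * m / d) ^ n * min ε μ) := by rwa [mul_one]
      _ ≤ C * ((κ * m / d ^ 2) ^ n * V + (κ * m / d) ^ n * μ) := by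
          gcongr; exact min_le_right _ _
      _ = (m / d) ^ n * (C * κ ^ n * (V / d ^ n + μ)) := by
          simp only [div_pow, mul_pow, ← pow_mul]
          field_simp
          ring
  have hone : 1 ≤ C * κ ^ n * (V / d ^ n + μ) := le_of_mul_le_mul_left hscaled (by positivity)
  have hμC : C * κ ^ n * μ = 1 / 2 := by simp only [μ]; field_simp
  rw [← le_div_iff₀ (by positivity)]
  refine le_of_mul_le_mul_left (a := C * κ ^ n) ?_ (by positivity)
  linarith [mul_add (C * κ ^ n) (V / d ^ n) μ]

end ABP

/-! ### Test functions -/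

section InnerProductSpace

variable {E : Type*} [NormedAddCommGroup E] [InnerProductSpace ℝ E]

lemma contDiff_norm_sub_sq (z : E) : ContDiff ℝ 2 fun y => ‖y - z‖ ^ 2 :=
  (contDiff_id.sub contDiff_const).norm_sq ℝ

lemma hasFDerivAt_norm_sub_sq (z x : E) :
    HasFDerivAt (fun y => ‖y - z‖ ^ 2) (2 • innerSL ℝ (x - z)) x := by
  simpa using ((hasFDerivAt_id x).sub_const z).norm_sq

lemma norm_fderiv_norm_sub_sq (z x : E) :
    ‖fderiv ℝ (fun y => ‖y - z‖ ^ 2) x‖ = 2 * ‖x - z‖ := by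
  rw [(hasFDerivAt_norm_sub_sq z x).fderiv, RCLike.norm_nsmul ℝ, innerSL_apply_norm, nsmul_eq_mul,
    Nat.cast_ofNat]

lemma contDiff_exp_neg_mul_norm_sub_sq (γ : ℝ) (z : E) :
    ContDiff ℝ 2 fun y => Real.exp (-γ * ‖y - z‖ ^ 2) :=
  (contDiff_const.mul (contDiff_norm_sub_sq z)).exp

lemma hasFDerivAt_exp_neg_mul_norm_sub_sq (γ : ℝ) (z x : E) :
    HasFDerivAt (fun y => Real.exp (-γ * ‖y - z‖ ^ 2))
      (Real.exp (-γ * ‖x - z‖ ^ 2) • (-γ) • (2 • innerSL ℝ (x - z))) x :=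
  ((hasFDerivAt_norm_sub_sq z x).const_mul (-γ)).exp

lemma exp_neg_mul_sq_le_one {γ : ℝ} (hγ : 0 ≤ γ) (t : ℝ) : Real.exp (-γ * t ^ 2) ≤ 1 :=
  Real.exp_le_one_iff.2 (by nlinarith [mul_nonneg hγ (sq_nonneg t)])

lemma norm_fderiv_exp_neg_mul_norm_sub_sq_le {γ : ℝ} (hγ : 0 ≤ γ) (z x : E) :
    ‖fderiv ℝ (fun y => Real.exp (-γ * ‖y - z‖ ^ 2)) x‖ ≤ 2 * γ * ‖x - z‖ := by
  rw [(hasFDerivAt_exp_neg_mul_norm_sub_sq γ z x).fderiv, norm_smul, norm_smul, norm_neg,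
    RCLike.norm_nsmul ℝ, innerSL_apply_norm, Real.norm_of_nonneg hγ, Real.norm_of_nonneg
    (Real.exp_nonneg _), nsmul_eq_mul, Nat.cast_ofNat]
  calc Real.exp (-γ * ‖x - z‖ ^ 2) * (γ * (2 * ‖x - z‖))
      ≤ 1 * (γ * (2 * ‖x - z‖)) := by gcongr; exact exp_neg_mul_sq_le_one hγ _
    _ = 2 * γ * ‖x - z‖ := by ring

lemma norm_sub_le_two_mul_of_mem_closedBall {F : Type*} [SeminormedAddCommGroup F] {z x y : F}
    {r : ℝ} (hx : x ∈ closedBall z r) (hy : y ∈ closedBall z r) : ‖x - y‖ ≤ 2 * r := by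
  rw [← dist_eq_norm]
  rw [mem_closedBall] at hx hy
  linarith [dist_triangle_right x y z]

end InnerProductSpace

section TestFunctions

variable {n : ℕ} {lam Lam : ℝ} {A : Matrix (Fin n) (Fin n) ℝ}

lemma hasFDerivAt_coord (i : Fin n) (x : 𝔼 n) :
    HasFDerivAt (fun y : 𝔼 n => y i) (EuclideanSpace.proj i : 𝔼 n →L[ℝ] ℝ) x :=
  (EuclideanSpace.proj i : 𝔼 n →L[ℝ] ℝ).hasFDerivAt

lemma contDiff_coord (i : Fin n) : ContDiff ℝ 2 fun y : 𝔼 n => y i :=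
  (EuclideanSpace.proj i : 𝔼 n →L[ℝ] ℝ).contDiff

lemma norm_fderiv_coord_le (i : Fin n) (x : 𝔼 n) : ‖fderiv ℝ (fun y : 𝔼 n => y i) x‖ ≤ 1 := by
  rw [(hasFDerivAt_coord i x).fderiv]
  exact ContinuousLinearMap.opNorm_le_bound _ zero_le_one fun y => by
    simpa using PiLp.norm_apply_le y i

lemma hess_norm_sub_sq (z x : 𝔼 n) :
    hess n (fun y => ‖y - z‖ ^ 2) x = (2 : ℝ) • (1 : Matrix (Fin n) (Fin n) ℝ) := by
  ext i j
  have hD : (fun y => fderiv ℝ (fun y => ‖y - z‖ ^ 2) y (EuclideanSpace.single j 1)) =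
      fun y => 2 * (y j - z j) := by
    ext y
    rw [(hasFDerivAt_norm_sub_sq z y).fderiv]
    simp [EuclideanSpace.inner_single_right]
  rw [hess, hD, (((hasFDerivAt_coord j x).sub_const (z j)).const_mul 2).fderiv]
  simp [Matrix.one_apply, eq_comm]

lemma hess_coord (k : Fin n) (x : 𝔼 n) : hess n (fun y => y k) x = 0 := by
  ext i j
  have hD : (fun y => fderiv ℝ (fun y : 𝔼 n => y k) y (EuclideanSpace.single j (1 : ℝ))) =
      fun _ => (EuclideanSpace.single j (1 : ℝ) : 𝔼 n) k := by
    ext y; rw [(hasFDerivAt_coord k y).fderiv, EuclideanSpace.coe_proj]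
  rw [hess, hD]
  simp

lemma hess_coord_sq (k : Fin n) (x : 𝔼 n) :
    hess n (fun y => y k ^ 2) x = (2 : ℝ) • vecMulVec (Pi.single k 1) (Pi.single k 1) := by
  ext i j
  have hD : (fun y => fderiv ℝ (fun y : 𝔼 n => y k ^ 2) y (EuclideanSpace.single j (1 : ℝ))) =
      fun y => (2 * (EuclideanSpace.single j (1 : ℝ) : 𝔼 n) k) * y k := by
    ext y
    rw [((hasFDerivAt_coord k y).pow 2).fderiv]
    simp [mul_comm]
  rw [hess, hD, ((hasFDerivAt_coord k x).const_mul _).fderiv]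
  by_cases h : j = k <;> by_cases h' : i = k <;>
    simp [vecMulVec_apply, h, h', Ne.symm]

lemma hess_exp_neg_mul_norm_sub_sq (γ : ℝ) (z x : 𝔼 n) :
    hess n (fun y => Real.exp (-γ * ‖y - z‖ ^ 2)) x = Real.exp (-γ * ‖x - z‖ ^ 2) •
      ((4 * γ ^ 2) • vecMulVec (x - z).ofLp (x - z).ofLp
        - (2 * γ) • (1 : Matrix (Fin n) (Fin n) ℝ)) := by
  ext i j
  have hD : (fun y => fderiv ℝ (fun y => Real.exp (-γ * ‖y - z‖ ^ 2)) y
      (EuclideanSpace.single j 1)) =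
      fun y => Real.exp (-γ * ‖y - z‖ ^ 2) * ((-2 * γ) * (y j - z j)) := by
    ext y
    rw [(hasFDerivAt_exp_neg_mul_norm_sub_sq γ z y).fderiv]
    simp [EuclideanSpace.inner_single_right]
    ring
  rw [hess, hD, ((hasFDerivAt_exp_neg_mul_norm_sub_sq γ z x).fun_mul
    (((hasFDerivAt_coord j x).sub_const (z j)).const_mul (-2 * γ))).fderiv]
  by_cases h : i = j
  · subst h; simp [EuclideanSpace.inner_single_right, vecMulVec_apply]; ring
  · simp [EuclideanSpace.inner_single_right, vecMulVec_apply, Matrix.one_apply_ne h, h]; ring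

lemma IsElliptic.trace_mul_hess_norm_sub_sq_le (hA : IsElliptic lam Lam A) (z x : 𝔼 n) :
    (A * hess n (fun y => ‖y - z‖ ^ 2) x).trace ≤ 2 * (n * Lam) := by
  have htrace := hA.trace_le
  rw [Fintype.card_fin] at htrace
  simpa [hess_norm_sub_sq] using htrace

lemma IsElliptic.mul_dotProduct_self_le (hA : IsElliptic lam Lam A) (v : Fin n → ℝ) :
    lam * (v ⬝ᵥ v) ≤ (A * vecMulVec v v).trace := by
  rw [← trace_vecMulVec]
  exact hA.mul_trace_le (by simpa using posSemidef_vecMulVec_self_star v)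

lemma IsElliptic.le_trace_mul_hess_exp {γ : ℝ} (hγ : 0 ≤ γ) (hA : IsElliptic lam Lam A)
    (z x : 𝔼 n) :
    Real.exp (-γ * ‖x - z‖ ^ 2) * (2 * γ * (2 * γ * lam * ‖x - z‖ ^ 2 - n * Lam)) ≤
      (A * hess n (fun y => Real.exp (-γ * ‖y - z‖ ^ 2)) x).trace := by
  have hrank := hA.mul_dotProduct_self_le (x - z).ofLp
  have htrace := hA.trace_le
  have hnorm : (x - z).ofLp ⬝ᵥ (x - z).ofLp = ‖x - z‖ ^ 2 := by
    simp_rw [EuclideanSpace.norm_sq_eq, dotProduct, Real.norm_eq_abs, sq_abs, sq]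
  rw [hnorm] at hrank
  rw [Fintype.card_fin] at htrace
  simp only [hess_exp_neg_mul_norm_sub_sq, Matrix.mul_smul, trace_smul, Matrix.mul_sub, trace_sub,
    Matrix.mul_one, smul_eq_mul]
  gcongr
  linarith [mul_le_mul_of_nonneg_left hrank (by positivity : 0 ≤ 4 * γ ^ 2),
    mul_le_mul_of_nonneg_left htrace (by positivity : 0 ≤ 2 * γ)]

end TestFunctions

/-! ### The growth lemma and the measure lemma -/

section MeasureLemma

variable {n : ℕ} {lam Lam : ℝ}

lemma NegSetSupersolution.add_const_mul_add_const {K : Set (𝔼 n)} {u φ b f : 𝔼 n → ℝ}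
    {c e β : ℝ} (hu : ContinuousOn u K) (hφ : ContDiff ℝ 2 φ)
    (hneg : ∀ x ∈ K, u x + c * φ x + e < 0 →
      x ∈ interior K ∧ 0 ≤ b x ∧ IsSupersolutionAt lam Lam (b x) 0 0 u x)
    (hDφ : ∀ x ∈ K, |c| * ‖fderiv ℝ φ x‖ ≤ β)
    (hD2φ : ∀ x ∈ K, ∀ A, IsElliptic lam Lam A → c * (A * hess n φ x).trace ≤ f x) :
    NegSetSupersolution lam Lam β K b f fun x => u x + c * φ x + e where
  continuousOn :=
    (hu.add (continuousOn_const.mul hφ.continuous.continuousOn)).add continuousOn_const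
  mem_interior x hx h := (hneg x hx h).1
  drift_nonneg x hx h := (hneg x hx h).2.1
  isSupersolutionAt x hx h := by
    obtain ⟨-, hb, hux⟩ := hneg x hx h
    simpa using (hux.add_const_mul hb hφ.contDiffAt (hDφ x hx) (hD2φ x hx)).add_const hb e

lemma mem_interior_closedBall {x z : 𝔼 n} {r : ℝ} (h : ‖x - z‖ < r) :
    x ∈ interior (closedBall z r) :=
  ball_subset_interior_closedBall (mem_ball_iff_norm.2 h)

lemma lt_and_lt_of_neg_add_paraboloid_neg {r M D a t : ℝ} (hr : 0 < r) (hM : 0 ≤ M) (hD : 0 ≤ D)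
    (ha : a ≤ D * M) (h : -a + D * M / r ^ 2 * t ^ 2 + M / 2 < 0) : M / 2 < a ∧ t < r := by
  have hpar : 0 ≤ D * M / r ^ 2 * t ^ 2 := by positivity
  refine ⟨by linarith, lt_of_not_ge fun hge => ?_⟩
  have hfull : D * M ≤ D * M / r ^ 2 * t ^ 2 :=
    calc D * M = D * M / r ^ 2 * r ^ 2 := by field_simp
      _ ≤ D * M / r ^ 2 * t ^ 2 := by gcongr
  linarith

/-- Adding the paraboloid `D M |x - x₀|² / r²` to `-u` and applying the
Aleksandrov–Bakelman–Pucci estimate. -/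
lemma exists_superlevel_volume_lower_bound (hn : n ≠ 0) (hlam : 0 < lam) (hLam : lam ≤ Lam)
    {D : ℝ} (hD : 1 ≤ D) : ∃ μ > 0, ∃ ε > 0, ∀ {u b : 𝔼 n → ℝ} {x₀ : 𝔼 n} {r M : ℝ},
      0 < r → 0 < M → ContinuousOn u (closedBall x₀ r) → M ≤ u x₀ →
      (∀ x ∈ closedBall x₀ r, u x ≤ D * M) →
      (∀ x ∈ closedBall x₀ r, M / 2 < u x →
        0 ≤ b x ∧ IsSupersolutionAt lam Lam (b x) 0 0 (fun y => -u y) x) →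
      (∫⁻ x in {x ∈ closedBall x₀ r | M / 2 < u x}, ENNReal.ofReal (b x ^ n)) ≤
        ENNReal.ofReal ε →
      μ * r ^ n ≤ volume.real {x ∈ closedBall x₀ r | M / 2 < u x} := by
  have hLam0 : 0 < Lam := hlam.trans_le hLam
  obtain ⟨μ, hμ, ε, hε, habp⟩ := exists_volume_lower_bound_of_abp (Lam := Lam) hn hlam
    (κ := 8 * D * (1 + 2 * n * Lam)) (by positivity)
  refine ⟨μ * 2 ^ n, by positivity, ε, hε, ?_⟩
  intro u b x₀ r M hr hM hu hux₀ huD hsup hdrift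
  set c := D * M / r ^ 2
  set w : 𝔼 n → ℝ := fun x => -u x + c * ‖x - x₀‖ ^ 2 + M / 2
  have hneg : ∀ x ∈ closedBall x₀ r, w x < 0 → M / 2 < u x ∧ ‖x - x₀‖ < r :=
    fun x hx => lt_and_lt_of_neg_add_paraboloid_neg hr hM.le (by positivity) (huD x hx)
  have hsubset : {x ∈ closedBall x₀ r | w x < 0} ⊆ {x ∈ closedBall x₀ r | M / 2 < u x} :=
    fun x hx => ⟨hx.1, (hneg x hx.1 hx.2).1⟩
  have hw : NegSetSupersolution lam Lam (8 * D * (1 + 2 * n * Lam) * (M / 2) / (2 * r))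
      (closedBall x₀ r) b
      (Set.univ.indicator fun _ => 8 * D * (1 + 2 * n * Lam) * (M / 2) / (2 * r) ^ 2) w := by
    refine .add_const_mul_add_const hu.neg (contDiff_norm_sub_sq x₀) (fun x hx hwx => ?_)
      (fun x hx => ?_) fun x _ A hA => ?_
    · exact ⟨mem_interior_closedBall (hneg x hx hwx).2, hsup x hx (hneg x hx hwx).1⟩
    · rw [norm_fderiv_norm_sub_sq, abs_of_pos (by positivity)]
      calc c * (2 * ‖x - x₀‖) ≤ c * (2 * r) := by gcongr; exact mem_closedBall_iff_norm.1 hx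
        _ = 8 * D * (1 + 0) * (M / 2) / (2 * r) := by simp only [c]; field_simp; norm_num
        _ ≤ _ := by gcongr; positivity
    · rw [Set.indicator_univ]
      calc c * (A * hess n (fun y => ‖y - x₀‖ ^ 2) x).trace
          ≤ c * (2 * (n * Lam)) := by gcongr; exact hA.trace_mul_hess_norm_sub_sq_le x₀ x
        _ = 8 * D * (0 + 2 * n * Lam) * (M / 2) / (2 * r) ^ 2 := by simp only [c]; field_simp; ring
        _ ≤ _ := by gcongr; exact zero_le_one
  calc μ * 2 ^ n * r ^ n = μ * (2 * r) ^ n := by rw [mul_pow, mul_assoc]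
    _ ≤ volume.real (Set.univ ∩ {x ∈ closedBall x₀ r | w x < 0}) :=
        habp hw (isCompact_closedBall _ _) .univ (by positivity) (by positivity)
          (fun x hx y hy => norm_sub_le_two_mul_of_mem_closedBall hx hy)
          ((lintegral_mono_set hsubset).trans hdrift) (mem_closedBall_self hr.le)
          (by simp only [w]; simp; linarith)
    _ ≤ _ := measureReal_mono (by rwa [Set.univ_inter])
        (measure_ne_top_of_subset (fun x hx => hx.1) (isCompact_closedBall x₀ r).measure_ne_top)

lemma exp_neg_div_sq_mul_sq_le {γ r k t : ℝ} (hγ : 0 ≤ γ) (hr : 0 < r) (hk : 0 ≤ k)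
    (ht : k * r ≤ t) : Real.exp (-(γ / r ^ 2) * t ^ 2) ≤ Real.exp (-γ * k ^ 2) := by
  rw [Real.exp_le_exp, neg_mul, neg_mul, neg_le_neg_iff]
  calc γ * k ^ 2 = γ / r ^ 2 * (k * r) ^ 2 := by field_simp
    _ ≤ γ / r ^ 2 * t ^ 2 := by gcongr

lemma le_exp_neg_div_sq_mul_sq {γ r k t : ℝ} (hγ : 0 ≤ γ) (hr : 0 < r) (ht₀ : 0 ≤ t)
    (ht : t ≤ k * r) : Real.exp (-γ * k ^ 2) ≤ Real.exp (-(γ / r ^ 2) * t ^ 2) := by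
  rw [Real.exp_le_exp, neg_mul, neg_mul, neg_le_neg_iff]
  calc γ / r ^ 2 * t ^ 2 ≤ γ / r ^ 2 * (k * r) ^ 2 := by gcongr
    _ = γ * k ^ 2 := by field_simp

/-- The exponent `γ = n Lam / (2 lam)` is chosen so that `-exp (-γ |x - y|² / r²)` is a
supersolution outside `closedBall y r`. -/
lemma IsElliptic.neg_mul_trace_hess_barrier_le {A : Matrix (Fin n) (Fin n) ℝ}
    (hA : IsElliptic lam Lam A) (hlam : 0 < lam) (hLam : 0 ≤ Lam) {a r : ℝ} (ha : 0 ≤ a)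
    (hr : 0 < r) (y x : 𝔼 n) :
    -a * (A * hess n (fun x => Real.exp (-(n * Lam / (2 * lam) / r ^ 2) * ‖x - y‖ ^ 2)) x).trace ≤
      (closedBall y r).indicator
        (fun _ => a * (2 * (n * Lam / (2 * lam) / r ^ 2) * (n * Lam))) x := by
  set γ := n * Lam / (2 * lam) / r ^ 2 with hγ
  have hγ0 : 0 ≤ γ := by positivity
  have hle := mul_le_mul_of_nonneg_left (hA.le_trace_mul_hess_exp hγ0 y x) ha
  by_cases hx : x ∈ closedBall y r
  · have hmin : -(1 * (2 * γ * (n * Lam))) ≤ Real.exp (-γ * ‖x - y‖ ^ 2) *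
        (2 * γ * (2 * γ * lam * ‖x - y‖ ^ 2 - n * Lam)) := by
      have hexp := mul_le_mul_of_nonneg_right (exp_neg_mul_sq_le_one hγ0 ‖x - y‖)
        (by positivity : 0 ≤ 2 * γ * (n * Lam))
      have hpos : 0 ≤ Real.exp (-γ * ‖x - y‖ ^ 2) * (2 * γ * (2 * γ * lam * ‖x - y‖ ^ 2)) := by
        positivity
      linarith
    rw [Set.indicator_of_mem hx]
    linarith [mul_le_mul_of_nonneg_left hmin ha]
  · rw [mem_closedBall_iff_norm, not_le] at hx
    have hcoef : 2 * γ * lam * r ^ 2 = n * Lam := by rw [hγ]; field_simp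
    have hsign : 0 ≤ 2 * γ * lam * ‖x - y‖ ^ 2 - n * Lam := by
      rw [sub_nonneg, ← hcoef]; gcongr
    rw [Set.indicator_of_notMem (by rwa [mem_closedBall_iff_norm, not_le])]
    have : 0 ≤ a * (Real.exp (-γ * ‖x - y‖ ^ 2) *
        (2 * γ * (2 * γ * lam * ‖x - y‖ ^ 2 - n * Lam))) := by positivity
    linarith

lemma exists_exp_barrier_height {γ : ℝ} (hγ : 0 < γ) :
    ∃ a > 1, a * Real.exp (-γ * 3 ^ 2) - a * Real.exp (-γ * 4 ^ 2) = 2 := by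
  set g := Real.exp (-γ * 3 ^ 2) - Real.exp (-γ * 4 ^ 2) with hg
  have hg0 : 0 < g := sub_pos.2 (Real.exp_lt_exp.2 (by linarith))
  have hg1 : g < 1 := by linarith [exp_neg_mul_sq_le_one hγ.le 3, Real.exp_pos (-γ * 4 ^ 2)]
  refine ⟨2 / g, by rw [gt_iff_lt, lt_div_iff₀ hg0]; linarith, ?_⟩
  rw [← mul_sub, ← hg]; field_simp

lemma le_and_lt_of_sub_barrier_neg {γ r a t s : ℝ} (hγ : 0 ≤ γ) (hr : 0 < r) (ha : 0 ≤ a)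
    (hs : 0 ≤ s)
    (h : s + -a * Real.exp (-(γ / r ^ 2) * t ^ 2) + a * Real.exp (-γ * 4 ^ 2) < 0) :
    s ≤ a ∧ t < 4 * r := by
  constructor
  · have hone := mul_le_mul_of_nonneg_left
      (exp_neg_mul_sq_le_one (γ := γ / r ^ 2) (by positivity) t) ha
    have hpos : 0 ≤ a * Real.exp (-γ * 4 ^ 2) := by positivity
    rw [neg_mul] at h
    generalize a * Real.exp (-γ * 4 ^ 2) = E at *
    linarith
  · by_contra! hge
    linarith [mul_le_mul_of_nonneg_left
      (exp_neg_div_sq_mul_sq_le hγ hr (by norm_num) hge) ha]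

lemma negSetSupersolution_sub_barrier (hlam : 0 < lam) (hLam : 0 ≤ Lam) {a r γ : ℝ} (ha : 0 ≤ a)
    (hr : 0 < r) (hγ : γ = n * Lam / (2 * lam)) {u b : 𝔼 n → ℝ} {y : 𝔼 n}
    (hu : ContinuousOn u (closedBall y (4 * r)))
    (hsup : ∀ x ∈ closedBall y (4 * r),
      0 ≤ u x ∧ 0 ≤ b x ∧ IsSupersolutionAt lam Lam (b x) 0 0 u x) :
    NegSetSupersolution lam Lam (64 * a * γ * (1 + 2 * n * Lam) / (8 * r))
      (closedBall y (4 * r)) b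
      ((closedBall y r).indicator fun _ => 64 * a * γ * (1 + 2 * n * Lam) / (8 * r) ^ 2)
      fun x => u x + -a * Real.exp (-(γ / r ^ 2) * ‖x - y‖ ^ 2) + a * Real.exp (-γ * 4 ^ 2) := by
  have hγ0 : 0 ≤ γ := by rw [hγ]; positivity
  refine .add_const_mul_add_const hu (contDiff_exp_neg_mul_norm_sub_sq _ y)
    (fun x hx hwx => ⟨mem_interior_closedBall
      (le_and_lt_of_sub_barrier_neg hγ0 hr ha (hsup x hx).1 hwx).2, (hsup x hx).2⟩)
    (fun x hx => ?_) fun x _ A hA => ?_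
  · rw [abs_neg, abs_of_nonneg ha]
    calc a * _ ≤ a * (2 * (γ / r ^ 2) * (4 * r)) := by
          gcongr
          exact (norm_fderiv_exp_neg_mul_norm_sub_sq_le (by positivity) y x).trans
            (by gcongr; exact mem_closedBall_iff_norm.1 hx)
      _ = 64 * a * γ * (1 + 0) / (8 * r) := by field_simp; ring
      _ ≤ _ := by gcongr; positivity
  · subst hγ
    refine (hA.neg_mul_trace_hess_barrier_le hlam hLam ha hr y x).trans
      (Set.indicator_le_indicator ?_)
    calc a * (2 * (n * Lam / (2 * lam) / r ^ 2) * (n * Lam))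
        = 64 * a * (n * Lam / (2 * lam)) * (0 + 2 * n * Lam) / (8 * r) ^ 2 := by
          field_simp; ring
      _ ≤ _ := by gcongr; exact zero_le_one

lemma exists_sublevel_volume_lower_bound (hn : n ≠ 0) (hlam : 0 < lam) (hLam : lam ≤ Lam) :
    ∃ μ > 0, ∃ ε > 0, ∃ M > 1, ∀ {u b : 𝔼 n → ℝ} {y x₁ : 𝔼 n} {r : ℝ}, 0 < r →
      ContinuousOn u (closedBall y (4 * r)) →
      (∀ x ∈ closedBall y (4 * r),
        0 ≤ u x ∧ 0 ≤ b x ∧ IsSupersolutionAt lam Lam (b x) 0 0 u x) →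
      (∫⁻ x in closedBall y (4 * r), ENNReal.ofReal (b x ^ n)) ≤ ENNReal.ofReal ε →
      x₁ ∈ closedBall y (3 * r) → u x₁ ≤ 1 →
      μ * r ^ n ≤ volume.real {x ∈ closedBall y r | u x ≤ M} := by
  have hLam0 : 0 < Lam := hlam.trans_le hLam
  set γ := n * Lam / (2 * lam)
  have hγ : 0 < γ := by positivity
  obtain ⟨a, ha1, ha⟩ := exists_exp_barrier_height hγ
  have ha0 : 0 < a := one_pos.trans ha1
  set κ := 64 * a * γ * (1 + 2 * n * Lam)
  obtain ⟨μ, hμ, ε, hε, habp⟩ :=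
    exists_volume_lower_bound_of_abp (Lam := Lam) hn hlam (κ := κ) (by positivity)
  refine ⟨μ * 8 ^ n, by positivity, ε, hε, a, ha1, ?_⟩
  intro u b y x₁ r hr hu hsup hdrift hx₁ hux₁
  set w : 𝔼 n → ℝ := fun x =>
    u x + -a * Real.exp (-(γ / r ^ 2) * ‖x - y‖ ^ 2) + a * Real.exp (-γ * 4 ^ 2)
  have hneg : ∀ x ∈ closedBall y (4 * r), w x < 0 → u x ≤ a ∧ ‖x - y‖ < 4 * r := fun x hx =>
    le_and_lt_of_sub_barrier_neg hγ.le hr ha0.le (hsup x hx).1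
  have hw : NegSetSupersolution lam Lam (κ * 1 / (8 * r)) (closedBall y (4 * r)) b
      ((closedBall y r).indicator fun _ => κ * 1 / (8 * r) ^ 2) w := by
    simpa only [κ, mul_one] using
      negSetSupersolution_sub_barrier hlam hLam0.le ha0.le hr rfl hu hsup
  have hwx₁ : w x₁ ≤ -1 := by
    have hexp := le_exp_neg_div_sq_mul_sq (k := 3) hγ.le hr (norm_nonneg _)
      (mem_closedBall_iff_norm.1 hx₁)
    have hle := mul_le_mul_of_nonneg_left hexp ha0.le
    calc w x₁ ≤ 1 - (a * Real.exp (-γ * 3 ^ 2) - a * Real.exp (-γ * 4 ^ 2)) := by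
          simp only [w, neg_mul a, ← sub_eq_add_neg, ← sub_add]; gcongr
      _ = -1 := by rw [ha]; norm_num
  calc μ * 8 ^ n * r ^ n = μ * (8 * r) ^ n := by rw [mul_pow, mul_assoc]
    _ ≤ volume.real (closedBall y r ∩ {x ∈ closedBall y (4 * r) | w x < 0}) :=
        habp hw (isCompact_closedBall _ _) isClosed_closedBall.measurableSet (by positivity)
          one_pos (fun x hx z hz => (norm_sub_le_two_mul_of_mem_closedBall hx hz).trans_eq
            (by ring)) ((lintegral_mono_set fun x hx => hx.1).trans hdrift)
          (closedBall_subset_closedBall (by linarith) hx₁) hwx₁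
    _ ≤ volume.real {x ∈ closedBall y r | u x ≤ a} :=
        measureReal_mono (fun x hx => ⟨hx.1, (hneg x hx.2.1 hx.2.2).1⟩)
        (measure_ne_top_of_subset (fun x hx => hx.1) (isCompact_closedBall y r).measure_ne_top)

end MeasureLemma

/-! ### Ink spots and the weak Harnack inequality -/

section InkSpots

lemma exists_center_closedBall_two_mul {V : Type*} [NormedAddCommGroup V] [NormedSpace ℝ V]
    {y z : V} {r R : ℝ} (hr : 0 < r) (hyr : ‖y - z‖ + r ≤ R) (hR : 2 * r ≤ R) :
    ∃ y', ‖y' - z‖ + 2 * r ≤ R ∧ ‖y - y'‖ ≤ r := by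
  have hRr : 0 < R - r := by linarith
  set t := (R - 2 * r) / (R - r) with ht
  have ht0 : 0 ≤ t := div_nonneg (by linarith) hRr.le
  have ht1 : 0 ≤ 1 - t := by rw [ht, sub_nonneg, div_le_one hRr]; linarith
  have htR : t * (R - r) = R - 2 * r := div_mul_cancel₀ _ hRr.ne'
  have hyz : ‖y - z‖ ≤ R - r := by linarith
  refine ⟨z + t • (y - z), ?_, ?_⟩
  · rw [add_sub_cancel_left, norm_smul, Real.norm_of_nonneg ht0]
    linarith [mul_le_mul_of_nonneg_left hyz ht0]
  · rw [show y - (z + t • (y - z)) = (1 - t) • (y - z) by module, norm_smul,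
      Real.norm_of_nonneg ht1]
    linarith [mul_le_mul_of_nonneg_left hyz ht1]

variable {n : ℕ} {μ R : ℝ} {E F : Set (𝔼 n)} {z : 𝔼 n}

lemma ae_eventually_volume_closedBall_sdiff_lt (hE : MeasurableSet E) (hμ : 0 < μ) :
    ∀ᵐ x, x ∈ E → ∀ᶠ r in 𝓝[>] 0, volume.real (closedBall x r \ E) < μ * r ^ n := by
  have hω := unitBallVolume_pos n
  filter_upwards [Besicovitch.ae_tendsto_measure_inter_div_of_measurableSet volume hE.compl]
    with x hx hxE
  rw [Set.indicator_of_notMem (by simpa using hxE)] at hx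
  have hlim := hx.eventually_lt_const (ENNReal.ofReal_pos.2 (div_pos hμ hω))
  filter_upwards [hlim, self_mem_nhdsWithin] with r hr (hr0 : 0 < r)
  have hvol := volume_closedBall_eq hr0 x
  rw [ENNReal.div_lt_iff (Or.inl (by rw [hvol]; positivity)) (Or.inl (by simp [hvol])), hvol,
    ← ENNReal.ofReal_mul (by positivity), Set.inter_comm, ← Set.sdiff_eq, ← mul_assoc,
    div_mul_cancel₀ _ hω.ne'] at hr
  exact (ENNReal.lt_ofReal_iff_toReal_lt hr.ne_top).1 hr

/-- The hypothesis of the ink-spots covering lemma in the ball `closedBall z R`: a ball of radius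
`r` in which the complement of `E` has volume less than `μ * r ^ n` has its threefold enlargement
in `F`, and `closedBall z R` itself is not such a ball. -/
structure InkSpots (μ : ℝ) (E F : Set (𝔼 n)) (z : 𝔼 n) (R : ℝ) : Prop where
  measurableSet : MeasurableSet E
  subset_closedBall : E ⊆ closedBall z R
  closedBall_inter_subset : ∀ {y : 𝔼 n} {r : ℝ}, 0 < r → ‖y - z‖ + r ≤ R →
    volume.real (closedBall y r \ E) < μ * r ^ n → closedBall y (3 * r) ∩ closedBall z R ⊆ F
  le_volume_sdiff : μ * R ^ n ≤ volume.real (closedBall z R \ E)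

/-- Double the radius until the complement of `E` is no longer small. -/
lemma InkSpots.exists_closedBall_subset (h : InkSpots μ E F z R) {x y : 𝔼 n} {r : ℝ} (hr : 0 < r)
    (hyr : ‖y - z‖ + r ≤ R) (hxy : x ∈ closedBall y r)
    (hlt : volume.real (closedBall y r \ E) < μ * r ^ n) :
    ∃ y' r', 0 < r' ∧ r' ≤ R ∧ x ∈ closedBall y' r' ∧ closedBall y' r' ⊆ F ∧
      μ * r' ^ n ≤ volume.real (closedBall y' r' \ E) := by
  obtain ⟨k, hk⟩ := pow_unbounded_of_one_lt (R / (2 * r)) one_lt_two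
  rw [div_lt_iff₀ (by positivity)] at hk
  induction k generalizing y r with
  | zero =>
    have hyz : dist z y + r ≤ R := by rwa [dist_comm, dist_eq_norm]
    have hzR : closedBall z R ⊆ closedBall y (3 * r) :=
      closedBall_subset_closedBall' (by linarith)
    exact ⟨z, R, by linarith [dist_nonneg (x := z) (y := y)], le_rfl,
      closedBall_subset_closedBall' (by rw [dist_comm]; linarith) hxy,
      fun p hp => h.closedBall_inter_subset hr hyr hlt ⟨hzR hp, hp⟩, h.le_volume_sdiff⟩
  | succ k ih =>
    by_cases hR : R < 2 * r
    · exact ih hr hyr hxy hlt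
        (hR.trans_le (le_mul_of_one_le_left (by positivity) (one_le_pow₀ one_le_two)))
    obtain ⟨y', hy'z, hyy'⟩ := exists_center_closedBall_two_mul hr hyr (not_lt.1 hR)
    have hxy' : x ∈ closedBall y' (2 * r) :=
      closedBall_subset_closedBall' (by rw [dist_eq_norm]; linarith) hxy
    by_cases hlt' : volume.real (closedBall y' (2 * r) \ E) < μ * (2 * r) ^ n
    · exact ih (by positivity) hy'z hxy' hlt' (by rw [pow_succ] at hk; linarith)
    · refine ⟨y', 2 * r, by positivity, by linarith [norm_nonneg (y' - z)], hxy',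
        fun p hp => h.closedBall_inter_subset hr hyr hlt ⟨?_, ?_⟩, not_lt.1 hlt'⟩
      · exact closedBall_subset_closedBall' (by rw [dist_comm, dist_eq_norm]; linarith) hp
      · exact closedBall_subset_closedBall' (by rw [dist_eq_norm]; linarith) hp

lemma InkSpots.ae_exists_closedBall_subset (h : InkSpots μ E F z R) (hn : n ≠ 0) (hμ : 0 < μ) :
    ∀ᵐ x, x ∈ E → ∃ y r, 0 < r ∧ r ≤ R ∧ x ∈ closedBall y r ∧ closedBall y r ⊆ F ∧
      μ * r ^ n ≤ volume.real (closedBall y r \ E) := by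
  have : Nonempty (Fin n) := Fin.pos_iff_nonempty.1 hn.bot_lt
  have hsphere : ∀ᵐ x : 𝔼 n, x ∉ sphere z R :=
    measure_eq_zero_iff_ae_notMem.1 (Measure.addHaar_sphere _ _ _)
  filter_upwards [ae_eventually_volume_closedBall_sdiff_lt h.measurableSet hμ, hsphere]
    with x hx hxR hxE
  have hdist : 0 < R - ‖x - z‖ := sub_pos.2
    (lt_of_le_of_ne (mem_closedBall_iff_norm.1 (h.subset_closedBall hxE))
      (by rwa [mem_sphere_iff_norm] at hxR))
  obtain ⟨r, ⟨hlt, hrR⟩, hr⟩ := (((hx hxE).and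
    ((eventually_lt_nhds hdist).filter_mono nhdsWithin_le_nhds)).and self_mem_nhdsWithin).exists
  exact h.exists_closedBall_subset hr (by linarith) (mem_closedBall_self (le_of_lt hr)) hlt

lemma volume_biUnion_closedBall_five_mul_le (hμ : 0 < μ) {U : Set (𝔼 n)} {y : 𝔼 n → 𝔼 n}
    {r : 𝔼 n → ℝ} (hE : MeasurableSet E) (hU : U.PairwiseDisjoint fun a => closedBall (y a) (r a))
    (hr : ∀ a ∈ U, 0 < r a) (hF : ∀ a ∈ U, closedBall (y a) (r a) ⊆ F)
    (hvol : ∀ a ∈ U, μ * r a ^ n ≤ volume.real (closedBall (y a) (r a) \ E)) :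
    volume (⋃ a ∈ U, closedBall (y a) (5 * r a)) ≤
      ENNReal.ofReal (5 ^ n * unitBallVolume n / μ) * volume (F \ E) := by
  have hω := unitBallVolume_pos n
  have hUc : U.Countable := hU.countable_of_nonempty_interior fun a ha =>
    ⟨y a, ball_subset_interior_closedBall (mem_ball_self (hr a ha))⟩
  have hball : ∀ a ∈ U, volume (closedBall (y a) (5 * r a)) ≤
      ENNReal.ofReal (5 ^ n * unitBallVolume n / μ) * volume (closedBall (y a) (r a) \ E) := by
    intro a ha
    have hra := hr a ha
    rw [volume_closedBall_eq (by positivity),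
      ← ofReal_measureReal (measure_ne_top_of_subset Set.sdiff_subset
        (isCompact_closedBall (y a) (r a)).measure_ne_top), ← ENNReal.ofReal_mul (by positivity)]
    refine ENNReal.ofReal_le_ofReal ?_
    calc unitBallVolume n * (5 * r a) ^ n
        = 5 ^ n * unitBallVolume n / μ * (μ * r a ^ n) := by field_simp; ring
      _ ≤ _ := by gcongr; exact hvol a ha
  calc volume (⋃ a ∈ U, closedBall (y a) (5 * r a))
      ≤ ∑' a : U, volume (closedBall (y a) (5 * r a)) := measure_biUnion_le _ hUc _
    _ ≤ ∑' a : U, ENNReal.ofReal (5 ^ n * unitBallVolume n / μ) *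
          volume (closedBall (y a) (r a) \ E) := ENNReal.tsum_le_tsum fun a => hball a a.2
    _ = ENNReal.ofReal (5 ^ n * unitBallVolume n / μ) *
          volume (⋃ a ∈ U, closedBall (y a) (r a) \ E) := by
        rw [ENNReal.tsum_mul_left, measure_biUnion hUc
          (fun a ha b hb hab => (hU ha hb hab).mono Set.sdiff_subset Set.sdiff_subset)
          fun a _ => isClosed_closedBall.measurableSet.diff hE]
    _ ≤ _ := by
        gcongr
        exact Set.iUnion₂_subset fun a ha => Set.sdiff_subset_sdiff_left (hF a ha)

theorem InkSpots.volume_le (h : InkSpots μ E F z R) (hn : n ≠ 0) (hμ : 0 < μ) :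
    volume E ≤ ENNReal.ofReal (5 ^ n * unitBallVolume n / μ) * volume (F \ E) := by
  set T := {x | ∃ y r, 0 < r ∧ r ≤ R ∧ x ∈ closedBall y r ∧ closedBall y r ⊆ F ∧
    μ * r ^ n ≤ volume.real (closedBall y r \ E)}
  have hET : volume E ≤ volume T := measure_mono_ae (h.ae_exists_closedBall_subset hn hμ)
  choose! y r hr hrR hmem hF hvol using fun x (hx : x ∈ T) => hx
  obtain ⟨U, hUT, hUd, hUc⟩ := Vitali.exists_disjoint_subfamily_covering_enlargement_closedBall
    T y r R hrR 5 (by norm_num)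
  have hTU : T ⊆ ⋃ a ∈ U, closedBall (y a) (5 * r a) := fun x hx =>
    let ⟨a, ha, hsub⟩ := hUc x hx
    Set.mem_biUnion ha (hsub (hmem x hx))
  exact hET.trans ((measure_mono hTU).trans (volume_biUnion_closedBall_five_mul_le hμ
    h.measurableSet hUd (fun a ha => hr a (hUT ha)) (fun a ha => hF a (hUT ha))
    fun a ha => hvol a (hUT ha)))

end InkSpots

section WeakHarnack

variable {n : ℕ} {lam Lam : ℝ}

lemma InkSpots.volume_real_le {μ R : ℝ} {E F : Set (𝔼 n)} {z : 𝔼 n} (h : InkSpots μ E F z R)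
    (hn : n ≠ 0) (hμ : 0 < μ) (hEF : E ⊆ F) (hF : volume F ≠ ∞) :
    volume.real E ≤ 5 ^ n * unitBallVolume n / (μ + 5 ^ n * unitBallVolume n) * volume.real F := by
  have hω := unitBallVolume_pos n
  have hle := ENNReal.toReal_mono (ENNReal.mul_ne_top ENNReal.ofReal_ne_top
    (measure_ne_top_of_subset Set.sdiff_subset hF)) (h.volume_le hn hμ)
  rw [ENNReal.toReal_mul, ENNReal.toReal_ofReal (by positivity), ← measureReal_def,
    ← measureReal_def, measureReal_sdiff hEF h.measurableSet hF,
    div_mul_eq_mul_div, le_div_iff₀ hμ] at hle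
  rw [div_mul_eq_mul_div, le_div_iff₀ (by positivity)]
  linarith

lemma exists_sublevel_volume_lower_bound_scaled (hn : n ≠ 0) (hlam : 0 < lam) (hLam : lam ≤ Lam) :
    ∃ μ > 0, ∃ ε > 0, ∃ M > 1, ∀ {u b : 𝔼 n → ℝ} {y x₁ : 𝔼 n} {r m : ℝ}, 0 < r → 0 < m →
      ContinuousOn u (closedBall y (4 * r)) →
      (∀ x ∈ closedBall y (4 * r),
        0 ≤ u x ∧ 0 ≤ b x ∧ IsSupersolutionAt lam Lam (b x) 0 0 u x) →
      (∫⁻ x in closedBall y (4 * r), ENNReal.ofReal (b x ^ n)) ≤ ENNReal.ofReal ε →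
      x₁ ∈ closedBall y (3 * r) → u x₁ ≤ m →
      μ * r ^ n ≤ volume.real {x ∈ closedBall y r | u x ≤ M * m} := by
  obtain ⟨μ, hμ, ε, hε, M, hM, hmeas⟩ := exists_sublevel_volume_lower_bound hn hlam hLam
  refine ⟨μ, hμ, ε, hε, M, hM, fun {u b y x₁ r m} hr hm hu hsup hdrift hx₁ hux₁ => ?_⟩
  have hscaled := hmeas (u := fun x => m⁻¹ * u x) hr (continuousOn_const.mul hu)
    (fun x hx => ⟨mul_nonneg (by positivity) (hsup x hx).1, (hsup x hx).2.1,
      by simpa using (hsup x hx).2.2.const_mul (inv_pos.2 hm)⟩) hdrift hx₁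
    (inv_mul_le_one_of_le₀ hux₁ hm.le)
  simpa only [inv_mul_le_iff₀ hm, mul_comm m] using hscaled

/-- The superlevel set of `u` in `closedBall z R` at height `t`, a step in the geometric sequence
of heights of the weak Harnack inequality. -/
def superlevel (u : 𝔼 n → ℝ) (z : 𝔼 n) (R t : ℝ) : Set (𝔼 n) := {x ∈ closedBall z R | t < u x}

lemma superlevel_subset_closedBall (u : 𝔼 n → ℝ) (z : 𝔼 n) (R t : ℝ) :
    superlevel u z R t ⊆ closedBall z R := Set.sep_subset _ _

lemma measurableSet_superlevel {u : 𝔼 n → ℝ} {z : 𝔼 n} {R : ℝ}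
    (hu : ContinuousOn u (closedBall z R)) (t : ℝ) : MeasurableSet (superlevel u z R t) := by
  obtain ⟨V, hV, heq⟩ := continuousOn_iff'.1 hu _ (isOpen_Ioi (a := t))
  have : superlevel u z R t = V ∩ closedBall z R := by
    rw [← heq, Set.inter_comm]; rfl
  rw [this]
  exact hV.measurableSet.inter isClosed_closedBall.measurableSet

lemma volume_superlevel_ne_top (u : 𝔼 n → ℝ) (z : 𝔼 n) (R t : ℝ) :
    volume (superlevel u z R t) ≠ ∞ :=
  measure_ne_top_of_subset (superlevel_subset_closedBall u z R t)
    (isCompact_closedBall z R).measure_ne_top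

lemma inkSpots_superlevel {u : 𝔼 n → ℝ} {z x₁ : 𝔼 n} {μ M R t : ℝ} (hR : 0 < R)
    (hu : ContinuousOn u (closedBall z R)) (hx₁ : x₁ ∈ closedBall z (3 * R)) (hux₁ : u x₁ ≤ t)
    (hsub : ∀ {y r}, 0 < r → ‖y - z‖ + r ≤ R → ∀ x ∈ closedBall y (3 * r), u x ≤ t →
      μ * r ^ n ≤ volume.real {p ∈ closedBall y r | u p ≤ M * t}) :
    InkSpots μ (superlevel u z R (M * t)) (superlevel u z R t) z R := by
  have hsdiff : ∀ {y r}, 0 < r → ‖y - z‖ + r ≤ R → ∀ x ∈ closedBall y (3 * r), u x ≤ t →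
      μ * r ^ n ≤ volume.real (closedBall y r \ superlevel u z R (M * t)) :=
    fun {y r} hr hyr x hx hux => (hsub hr hyr x hx hux).trans
      (measureReal_mono (fun p hp => ⟨hp.1, fun hp' => hp'.2.not_ge hp.2⟩)
        (measure_ne_top_of_subset Set.sdiff_subset (isCompact_closedBall y r).measure_ne_top))
  exact
    { measurableSet := measurableSet_superlevel hu _
      subset_closedBall := superlevel_subset_closedBall _ _ _ _
      closedBall_inter_subset := fun hr hyr hlt x hx =>
        ⟨hx.2, not_le.1 fun hux => (hsdiff hr hyr x hx.1 hux).not_gt hlt⟩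
      le_volume_sdiff := hsdiff hR (by simp) x₁ hx₁ hux₁ }

lemma volume_superlevel_pow_mul_le {u : 𝔼 n → ℝ} {z : 𝔼 n} {μ M R m : ℝ} (hn : n ≠ 0)
    (hμ : 0 < μ) (hM : 1 ≤ M) (hm : 0 ≤ m) (hR : 0 < R)
    (hink : ∀ j : ℕ, InkSpots μ (superlevel u z R (M * (M ^ j * m)))
      (superlevel u z R (M ^ j * m)) z R) (k : ℕ) :
    volume.real (superlevel u z R (M ^ k * m)) ≤
      (5 ^ n * unitBallVolume n / (μ + 5 ^ n * unitBallVolume n)) ^ k *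
        (unitBallVolume n * R ^ n) := by
  have hω := unitBallVolume_pos n
  induction k with
  | zero =>
    rw [pow_zero, one_mul, ← ENNReal.toReal_ofReal (by positivity : 0 ≤ unitBallVolume n * R ^ n),
      ← volume_closedBall_eq hR z, pow_zero, one_mul, ← measureReal_def]
    exact measureReal_mono (superlevel_subset_closedBall _ _ _ _)
      (isCompact_closedBall z R).measure_ne_top
  | succ k ih =>
    have hmono : superlevel u z R (M * (M ^ k * m)) ⊆ superlevel u z R (M ^ k * m) :=
      fun x hx => ⟨hx.1, (le_mul_of_one_le_left (by positivity) hM).trans_lt hx.2⟩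
    have hdecay := (hink k).volume_real_le hn hμ hmono (volume_superlevel_ne_top _ _ _ _)
    rw [pow_succ', mul_assoc, pow_succ', mul_assoc]
    exact hdecay.trans (mul_le_mul_of_nonneg_left ih (by positivity))

theorem exists_weak_harnack (hn : n ≠ 0) (hlam : 0 < lam) (hLam : lam ≤ Lam) :
    ∃ ε > 0, ∀ η > 0, ∃ T ≥ 1, ∀ {u b : 𝔼 n → ℝ} {z x₁ : 𝔼 n} {R m : ℝ}, 0 < R → 0 < m →
      ContinuousOn u (closedBall z (4 * R)) →
      (∀ x ∈ closedBall z (4 * R),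
        0 ≤ u x ∧ 0 ≤ b x ∧ IsSupersolutionAt lam Lam (b x) 0 0 u x) →
      (∫⁻ x in closedBall z (4 * R), ENNReal.ofReal (b x ^ n)) ≤ ENNReal.ofReal ε →
      x₁ ∈ closedBall z R → u x₁ ≤ m → volume.real (superlevel u z R (T * m)) ≤ η * R ^ n := by
  obtain ⟨μ, hμ, ε, hε, M, hM, hmeas⟩ := exists_sublevel_volume_lower_bound_scaled hn hlam hLam
  have hω := unitBallVolume_pos n
  refine ⟨ε, hε, fun η hη => ?_⟩
  set θ := 5 ^ n * unitBallVolume n / (μ + 5 ^ n * unitBallVolume n)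
  obtain ⟨k, hk⟩ := exists_pow_lt_of_lt_one (div_pos hη hω)
    (show θ < 1 from (div_lt_one (by positivity)).2 (by linarith))
  refine ⟨M ^ k, one_le_pow₀ hM.le, fun {u b z x₁ R m} hR hm hu hsup hdrift hx₁ hux₁ => ?_⟩
  have hball : closedBall z R ⊆ closedBall z (4 * R) :=
    closedBall_subset_closedBall (by linarith)
  have hink : ∀ j : ℕ, InkSpots μ (superlevel u z R (M * (M ^ j * m)))
      (superlevel u z R (M ^ j * m)) z R := by
    refine fun j => inkSpots_superlevel hR (hu.mono hball)
      (closedBall_subset_closedBall (by linarith) hx₁)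
      (hux₁.trans (le_mul_of_one_le_left hm.le (one_le_pow₀ hM.le))) ?_
    intro y r hr hyr x hx hux
    have hyz : closedBall y (4 * r) ⊆ closedBall z (4 * R) :=
      closedBall_subset_closedBall' (by rw [dist_eq_norm]; linarith [norm_nonneg (y - z)])
    exact hmeas hr (by positivity) (hu.mono hyz) (fun p hp => hsup p (hyz hp))
      ((lintegral_mono_set hyz).trans hdrift) hx hux
  rw [lt_div_iff₀ hω] at hk
  calc _ ≤ θ ^ k * (unitBallVolume n * R ^ n) :=
        volume_superlevel_pow_mul_le hn hμ hM.le hm.le hR hink k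
    _ = θ ^ k * unitBallVolume n * R ^ n := (mul_assoc _ _ _).symm
    _ ≤ η * R ^ n := by gcongr

end WeakHarnack

/-! ### Solutions in the half ball -/

section Drift

variable {n : ℕ}

/-- A nonnegative drift on `halfBall n hn 2` whose `Lⁿ` norm on balls decays like `s * R ^ a`
with the radius `R`. Hölder's inequality gives this for a drift in `L^q` with `q > n` and
`a = 1 - n / q`, and it is all that is used of the drift. -/
structure IsScaledDrift (hn : 1 ≤ n) (s a : ℝ) (b : 𝔼 n → ℝ) : Prop where
  nonneg : ∀ x ∈ halfBall n hn 2, 0 ≤ b x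
  lintegral_pow_le : ∀ {S : Set (𝔼 n)} {y : 𝔼 n} {R : ℝ}, 0 < R → S ⊆ closedBall y R →
    S ⊆ halfBall n hn 2 →
    ∫⁻ x in S, ENNReal.ofReal (b x ^ n) ≤ ENNReal.ofReal ((s * R ^ a) ^ n)

lemma continuous_lastC (hn : 1 ≤ n) : Continuous (lastC n hn) := by
  unfold lastC; fun_prop

lemma isOpen_halfBall (hn : 1 ≤ n) (R : ℝ) : IsOpen (halfBall n hn R) :=
  (isOpen_lt continuous_norm continuous_const).inter
    (isOpen_lt continuous_const (continuous_lastC hn))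

lemma LpNormE_eq_eLpNorm' {p : ℝ} (hp : 0 ≤ p) (g : 𝔼 n → ℝ) (S : Set (𝔼 n)) :
    LpNormE n p g S = eLpNorm' g p (volume.restrict S) := by
  simp only [LpNormE, eLpNorm', Real.enorm_eq_ofReal_abs,
    ENNReal.ofReal_rpow_of_nonneg (abs_nonneg _) hp]

lemma volume_closedBall_rpow_one_div_sub_one_div (hn : (0 : ℝ) < n) {q R : ℝ} (hq : n ≤ q)
    (hR : 0 < R) (y : 𝔼 n) :
    volume (closedBall y R) ^ (1 / n - 1 / q : ℝ) =
      ENNReal.ofReal (unitBallVolume n ^ (1 / n - 1 / q : ℝ) * R ^ (1 - n / q)) := by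
  have hω := unitBallVolume_pos n
  rw [volume_closedBall_eq hR, ENNReal.ofReal_rpow_of_nonneg (by positivity)
    (sub_nonneg.2 (one_div_le_one_div_of_le hn hq)), Real.mul_rpow hω.le (by positivity),
    ← Real.rpow_natCast, ← Real.rpow_mul hR.le]
  congr 3; field_simp

lemma isScaledDrift_of_LpNormE_le (hn : 1 ≤ n) {q K : ℝ} (hq : n < q) (hK : 0 ≤ K) {b : 𝔼 n → ℝ}
    (hb : ContinuousOn b (halfBall n hn 2)) (hb0 : ∀ x ∈ halfBall n hn 2, 0 ≤ b x)
    (hbK : LpNormE n q b (halfBall n hn 2) ≤ ENNReal.ofReal K) :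
    IsScaledDrift hn (K * unitBallVolume n ^ (1 / n - 1 / q : ℝ)) (1 - n / q) b where
  nonneg := hb0
  lintegral_pow_le {S y R} hR hSy hSb := by
    have hn0 : (0 : ℝ) < n := by exact_mod_cast hn
    have hω := unitBallVolume_pos n
    set S' := closedBall y R ∩ halfBall n hn 2
    have hSm : MeasurableSet S' :=
      isClosed_closedBall.measurableSet.inter (isOpen_halfBall hn 2).measurableSet
    have hnorm : eLpNorm' b n (volume.restrict S') ≤
        ENNReal.ofReal (K * unitBallVolume n ^ (1 / n - 1 / q : ℝ) * R ^ (1 - n / q)) := by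
      refine (eLpNorm'_le_eLpNorm'_mul_rpow_measure_univ hn0 hq.le
        ((hb.mono Set.inter_subset_right).aestronglyMeasurable hSm)).trans ?_
      rw [Measure.restrict_apply_univ, mul_assoc, ENNReal.ofReal_mul hK]
      refine mul_le_mul' (le_trans ?_ hbK) ?_
      · rw [← LpNormE_eq_eLpNorm' (hn0.le.trans hq.le)]
        exact ENNReal.rpow_le_rpow (lintegral_mono_set Set.inter_subset_right)
          (one_div_nonneg.2 (hn0.trans hq).le)
      · rw [← volume_closedBall_rpow_one_div_sub_one_div hn0 hq.le hR y]
        exact ENNReal.rpow_le_rpow (measure_mono Set.inter_subset_left)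
          (sub_nonneg.2 (one_div_le_one_div_of_le hn0 hq.le))
    calc ∫⁻ x in S, ENNReal.ofReal (b x ^ n)
        ≤ ∫⁻ x in S', ENNReal.ofReal (b x ^ n) := lintegral_mono_set (Set.subset_inter hSy hSb)
      _ = ∫⁻ x in S', ‖b x‖ₑ ^ (n : ℝ) := setLIntegral_congr_fun hSm fun x hx => by
          simp only [Real.enorm_eq_ofReal (hb0 x hx.2), ENNReal.rpow_natCast,
            ENNReal.ofReal_pow (hb0 x hx.2)]
      _ = eLpNorm' b n (volume.restrict S') ^ (n : ℝ) :=
          lintegral_rpow_enorm_eq_rpow_eLpNorm' hn0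
      _ ≤ _ := by
          rw [ENNReal.rpow_natCast, ENNReal.ofReal_pow (by positivity)]
          exact pow_le_pow_left' hnorm n

lemma exists_forall_mul_rpow_pow_le (hn : n ≠ 0) {s a ε : ℝ} (ha : 0 < a) (hε : 0 < ε) :
    ∃ R₀ > 0, ∀ R, 0 < R → R ≤ R₀ → (s * R ^ a) ^ n ≤ ε := by
  have hlim : Filter.Tendsto (fun R : ℝ => (s * R ^ a) ^ n) (𝓝 0) (𝓝 0) := by
    have : Continuous fun R : ℝ => (s * R ^ a) ^ n := by fun_prop (disch := exact ha.le)
    simpa [Real.zero_rpow ha.ne', hn] using this.tendsto 0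
  obtain ⟨δ, hδ, h⟩ := Metric.eventually_nhds_iff.1 (hlim.eventually_lt_const hε)
  refine ⟨δ / 2, by positivity, fun R hR hRδ => (h ?_).le⟩
  rw [Real.dist_0_eq_abs, abs_of_pos hR]
  linarith

end Drift

section PositiveSolution

variable {n : ℕ} {hn : 1 ≤ n} {lam Lam : ℝ} {b u : 𝔼 n → ℝ}

/-- The open upper half space, outside of which solutions are extended by zero. -/
def upperHalfSpace (n : ℕ) (hn : 1 ≤ n) : Set (𝔼 n) := {x | 0 < lastC n hn x}

/-- A positive solution of the extremal inequalities in `halfBall n hn 2` vanishing on the flat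
boundary, extended by zero to the lower half space so that it is continuous on a full ball. -/
structure PositiveSolution (hn : 1 ≤ n) (lam Lam : ℝ) (b u : 𝔼 n → ℝ) : Prop where
  continuousOn : ContinuousOn u (ball 0 2)
  eq_zero : ∀ x, lastC n hn x ≤ 0 → u x = 0
  pos : ∀ x ∈ halfBall n hn 2, 0 < u x
  isSupersolutionAt : ∀ x ∈ halfBall n hn 2, IsSupersolutionAt lam Lam (b x) 0 0 u x
  isSupersolutionAt_neg : ∀ x ∈ halfBall n hn 2,
    IsSupersolutionAt lam Lam (b x) 0 0 (fun y => -u y) x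

lemma halfBall_subset_ball (hn : 1 ≤ n) (R : ℝ) : halfBall n hn R ⊆ ball 0 R := fun _ hx =>
  mem_ball_zero_iff.2 hx.1

lemma PositiveSolution.nonneg (hu : PositiveSolution hn lam Lam b u) {x : 𝔼 n}
    (hx : x ∈ ball 0 2) : 0 ≤ u x := by
  rcases le_or_gt (lastC n hn x) 0 with h | h
  · exact (hu.eq_zero x h).ge
  · exact (hu.pos x ⟨mem_ball_zero_iff.1 hx, h⟩).le

lemma eventuallyEq_indicator_upperHalfSpace {R : ℝ} {x : 𝔼 n} (hx : x ∈ halfBall n hn R)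
    (u : 𝔼 n → ℝ) : u =ᶠ[𝓝 x] (upperHalfSpace n hn).indicator u :=
  Filter.eventually_of_mem ((isOpen_halfBall hn R).mem_nhds hx) fun y hy =>
    (Set.indicator_of_mem (show y ∈ upperHalfSpace n hn from hy.2) u).symm

lemma continuousOn_indicator_upperHalfSpace {R : ℝ}
    (hu : ContinuousOn u (halfBall n hn R ∪ flatB n hn R)) (hz : ∀ x ∈ flatB n hn R, u x = 0) :
    ContinuousOn ((upperHalfSpace n hn).indicator u) (ball 0 R) := by
  classical
  have hlast := continuous_lastC hn
  rw [← Set.piecewise_eq_indicator]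
  refine ContinuousOn.piecewise (fun x hx => ?_) (hu.mono fun x hx => ?_) continuousOn_const
  · have hx0 : (0 : ℝ) = lastC n hn x := frontier_lt_subset_eq continuous_const hlast hx.2
    exact hz x ⟨(mem_ball_zero_iff.1 hx.1).le, hx0.symm⟩
  · have hx0 : 0 ≤ lastC n hn x := closure_lt_subset_le continuous_const hlast hx.2
    have hxR := mem_ball_zero_iff.1 hx.1
    exact hx0.lt_or_eq.imp (fun h => ⟨hxR, h⟩) fun h => ⟨hxR.le, h.symm⟩

lemma positiveSolution_indicator (hLam : lam ≤ Lam)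
    (hu : ContinuousOn u (halfBall n hn 2 ∪ flatB n hn 2))
    (hu2 : ContDiffOn ℝ 2 u (halfBall n hn 2))
    (hm : ∀ x ∈ halfBall n hn 2, pucciMinus n lam Lam (hess n u x) - b x * gradNorm n u x ≤ 0)
    (hp : ∀ x ∈ halfBall n hn 2, 0 ≤ pucciPlus n lam Lam (hess n u x) + b x * gradNorm n u x)
    (hpos : ∀ x ∈ halfBall n hn 2, 0 < u x) (hz : ∀ x ∈ flatB n hn 2, u x = 0) :
    PositiveSolution hn lam Lam b ((upperHalfSpace n hn).indicator u) where
  continuousOn := continuousOn_indicator_upperHalfSpace hu hz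
  eq_zero x hx := Set.indicator_of_notMem (show x ∉ upperHalfSpace n hn from not_lt.2 hx) u
  pos x hx := by
    rw [Set.indicator_of_mem (show x ∈ upperHalfSpace n hn from hx.2)]
    exact hpos x hx
  isSupersolutionAt x hx :=
    (IsSupersolutionAt.of_pucciMinus hLam (hu2.contDiffAt ((isOpen_halfBall hn 2).mem_nhds hx))
      (hm x hx)).congr (eventuallyEq_indicator_upperHalfSpace hx u)
  isSupersolutionAt_neg x hx :=
    (IsSupersolutionAt.neg_of_pucciPlus hLam
      (hu2.contDiffAt ((isOpen_halfBall hn 2).mem_nhds hx)) (hp x hx)).congr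
      (eventuallyEq_indicator_upperHalfSpace hx u).neg

end PositiveSolution

/-! ### Harnack chains -/

section Chains

variable {n : ℕ} {hn : 1 ≤ n} {lam Lam : ℝ}

theorem exists_weak_harnack_halfBall (hlam : 0 < lam) (hLam : lam ≤ Lam) (s : ℝ) {a : ℝ}
    (ha : 0 < a) :
    ∃ R₀ > 0, ∀ η > 0, ∃ T ≥ 1, ∀ {b u : 𝔼 n → ℝ}, IsScaledDrift hn s a b →
      PositiveSolution hn lam Lam b u → ∀ {z x : 𝔼 n} {R m : ℝ}, 0 < R → R ≤ R₀ → 0 < m →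
      closedBall z (4 * R) ⊆ halfBall n hn 2 → x ∈ closedBall z R → u x ≤ m →
      volume.real (superlevel u z R (T * m)) ≤ η * R ^ n := by
  have hn0 : n ≠ 0 := Nat.one_le_iff_ne_zero.1 hn
  obtain ⟨ε, hε, hweak⟩ := exists_weak_harnack hn0 hlam hLam
  obtain ⟨R₀, hR₀, hsmall⟩ := exists_forall_mul_rpow_pow_le hn0 (s := s) ha hε
  refine ⟨R₀ / 4, by positivity, fun η hη => ?_⟩
  obtain ⟨T, hT, hweak⟩ := hweak η hη
  refine ⟨T, hT, fun {b u} hb hu {z x R m} hR hRR₀ hm hz =>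
    hweak (b := b) hR hm
      (hu.continuousOn.mono (hz.trans (halfBall_subset_ball hn 2))) (fun y hy => ?_) ?_⟩
  · exact ⟨(hu.pos y (hz hy)).le, hb.nonneg y (hz hy), hu.isSupersolutionAt y (hz hy)⟩
  · exact (hb.lintegral_pow_le (by positivity) subset_rfl hz).trans
      (ENNReal.ofReal_le_ofReal (hsmall _ (by positivity) (by linarith)))

/-- One step of a Harnack chain for `u`: at scales `ρ ≤ R₀`, an upper bound at some point of a
ball in the half ball is inherited, up to the factor `T`, by a point close to any `y` near the
center. The radius is halved so that the conclusion feeds the next step. -/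
def HarnackChainStep (hn : 1 ≤ n) (R₀ T : ℝ) (u : 𝔼 n → ℝ) : Prop :=
  ∀ ⦃z y : 𝔼 n⦄ ⦃ρ m : ℝ⦄, 0 < ρ → ρ ≤ R₀ → 0 < m → closedBall z (4 * ρ) ⊆ halfBall n hn 2 →
    (∃ x ∈ closedBall z ρ, u x ≤ m) → dist y z ≤ ρ / 2 →
    ∃ x ∈ closedBall y (ρ / 2), u x ≤ T * m

theorem exists_harnackChainStep (hlam : 0 < lam) (hLam : lam ≤ Lam) (s : ℝ) {a : ℝ}
    (ha : 0 < a) :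
    ∃ R₀ > 0, ∃ T > 1, ∀ {b u : 𝔼 n → ℝ}, IsScaledDrift hn s a b →
      PositiveSolution hn lam Lam b u → HarnackChainStep hn R₀ T u := by
  have hω := unitBallVolume_pos n
  obtain ⟨R₀, hR₀, hweak⟩ := exists_weak_harnack_halfBall (hn := hn) hlam hLam s ha
  obtain ⟨T, hT, hweak⟩ := hweak (unitBallVolume n * (1 / 2) ^ n / 2) (by positivity)
  refine ⟨R₀, hR₀, T + 1, by linarith, fun {b u} hb hu => ?_⟩
  rintro z y ρ m hρ hρR₀ hm hz ⟨x, hx, hux⟩ hyz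
  by_contra! hlarge
  have hball : closedBall y (ρ / 2) ⊆ superlevel u z ρ (T * m) := fun p hp =>
    ⟨closedBall_subset_closedBall' (by linarith) hp, by linarith [hlarge p hp]⟩
  have hvol := (measureReal_mono hball (volume_superlevel_ne_top _ _ _ _)).trans
    (hweak hb hu hρ hρR₀ hm hz hx hux)
  rw [measureReal_def, volume_closedBall_eq (by positivity), ENNReal.toReal_ofReal (by positivity),
    div_pow] at hvol
  have : 0 < unitBallVolume n * ρ ^ n / 2 ^ n := by positivity
  ring_nf at hvol this
  linarith

lemma abs_lastC_sub_le (hn : 1 ≤ n) (x y : 𝔼 n) : |lastC n hn x - lastC n hn y| ≤ dist x y := by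
  rw [dist_eq_norm]
  exact PiLp.norm_apply_le (x - y) _

/-- The part of the closed ball of radius `3 / 2` at height at least `h`. -/
def upperRegion (n : ℕ) (hn : 1 ≤ n) (h : ℝ) : Set (𝔼 n) :=
  closedBall 0 (3 / 2) ∩ {x | h ≤ lastC n hn x}

lemma convex_upperRegion (hn : 1 ≤ n) (h : ℝ) : Convex ℝ (upperRegion n hn h) :=
  (convex_closedBall _ _).inter (convex_halfSpace_ge ⟨fun _ _ => rfl, fun _ _ => rfl⟩ h)

lemma upperRegion_anti {h h' : ℝ} (hh : h ≤ h') : upperRegion n hn h' ⊆ upperRegion n hn h :=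
  Set.inter_subset_inter_right _ fun _ => hh.trans

lemma closedBall_subset_halfBall {y : 𝔼 n} {h ρ : ℝ} (hy : y ∈ upperRegion n hn h) (hρh : ρ < h)
    (hρ : ρ < 1 / 2) : closedBall y ρ ⊆ halfBall n hn 2 := by
  intro x hx
  have hy0 : dist y 0 ≤ 3 / 2 := hy.1
  have hyh : h ≤ lastC n hn y := hy.2
  rw [mem_closedBall] at hx
  have hxy := (abs_le.1 ((abs_lastC_sub_le hn x y).trans hx)).1
  refine ⟨?_, by linarith⟩
  rw [← dist_zero_right]
  linarith [dist_triangle x y 0]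

/-- The point `(0, …, 0, 1 / 2)`, written as in the main theorem. -/
noncomputable def referencePoint (n : ℕ) (hn : 1 ≤ n) : 𝔼 n :=
  EuclideanSpace.single ⟨n - 1, Nat.sub_one_lt_of_lt hn⟩ (1 / 2)

lemma norm_referencePoint (hn : 1 ≤ n) : ‖referencePoint n hn‖ = 1 / 2 := by
  simp [referencePoint]

lemma lastC_referencePoint (hn : 1 ≤ n) : lastC n hn (referencePoint n hn) = 1 / 2 := by
  simp [referencePoint, lastC]

lemma referencePoint_mem_halfBall (hn : 1 ≤ n) : referencePoint n hn ∈ halfBall n hn 2 :=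
  ⟨by rw [norm_referencePoint]; norm_num, by rw [lastC_referencePoint]; norm_num⟩

lemma referencePoint_mem_upperRegion (hn : 1 ≤ n) :
    referencePoint n hn ∈ upperRegion n hn (1 / 2) :=
  ⟨by rw [mem_closedBall_zero_iff, norm_referencePoint]; norm_num, (lastC_referencePoint hn).ge⟩

theorem HarnackChainStep.exists_le_of_mem_upperRegion {R₀ T ρ h m : ℝ} {u : 𝔼 n → ℝ} {p q : 𝔼 n}
    {N : ℕ} (hstep : HarnackChainStep hn R₀ T u) (hT : 1 ≤ T) (hρ : 0 < ρ) (hρR₀ : ρ ≤ R₀)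
    (hρh : 4 * ρ < h) (hρ2 : 4 * ρ < 1 / 2) (hp : p ∈ upperRegion n hn h)
    (hq : q ∈ upperRegion n hn h) (hm : 0 < m) (hN : 6 ≤ N * ρ)
    (hex : ∃ x ∈ closedBall p ρ, u x ≤ m) : ∃ x ∈ closedBall q ρ, u x ≤ T ^ N * m := by
  have hN0 : (0 : ℝ) < N := pos_of_mul_pos_left (lt_of_lt_of_le (by norm_num) hN) hρ.le
  have hpq : dist p q ≤ 3 := by
    linarith [dist_triangle_right p q 0, mem_closedBall.1 hp.1, mem_closedBall.1 hq.1]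
  let z : ℕ → 𝔼 n := fun k => AffineMap.lineMap p q (k / N : ℝ)
  have hz : ∀ k ≤ N, z k ∈ upperRegion n hn h := fun k hk =>
    (convex_upperRegion hn h).lineMap_mem hp hq
      ⟨by positivity, (div_le_one hN0).2 (by exact_mod_cast hk)⟩
  have hzz : ∀ k, dist (z (k + 1)) (z k) ≤ ρ / 2 := fun k => by
    rw [dist_lineMap_lineMap, Real.dist_eq, ← sub_div, Nat.cast_succ, add_sub_cancel_left,
      abs_of_pos (by positivity), one_div_mul_eq_div, div_le_iff₀ hN0]
    linarith
  have hchain : ∀ k ≤ N, ∃ x ∈ closedBall (z k) ρ, u x ≤ T ^ k * m := by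
    intro k
    induction k with
    | zero => simpa [z] using hex
    | succ k ih =>
      intro hk
      obtain ⟨x, hx, hux⟩ := hstep hρ hρR₀ (by positivity)
        (closedBall_subset_halfBall (hz k (by omega)) hρh hρ2) (ih (by omega)) (hzz k)
      exact ⟨x, closedBall_subset_closedBall (by linarith) hx, by rwa [pow_succ', mul_assoc]⟩
  simpa [z, hN0.ne'] using hchain N le_rfl

/-- Moving `y` towards the reference point by a fraction `κ / 4` of its height raises it by the
factor needed for the next layer, while staying within reach of a chain step. -/
lemma exists_mem_upperRegion_dist_le {κ h : ℝ} {y : 𝔼 n} (hκ : 0 < κ) (hκ1 : κ ≤ 1 / 16)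
    (hh : 0 < h) (hh1 : h ≤ 1 / 4) (hy : y ∈ upperRegion n hn ((1 - κ / 16) * h)) :
    ∃ z ∈ upperRegion n hn h, dist y z ≤ κ * h / 2 := by
  rcases le_or_gt h (lastC n hn y) with hle | hlt
  · exact ⟨y, ⟨hy.1, hle⟩, by rw [dist_self]; positivity⟩
  set e := referencePoint n hn
  have hy1 : dist y 0 ≤ 3 / 2 := hy.1
  have hyh : (1 - κ / 16) * h ≤ lastC n hn y := hy.2
  have he1 : dist e 0 = 1 / 2 := by rw [dist_zero_right, norm_referencePoint]
  have hye : dist y e ≤ 2 := by linarith [dist_triangle_right y e 0]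
  refine ⟨AffineMap.lineMap y e (κ * h / 4), ⟨?_, ?_⟩, ?_⟩
  · exact (convex_closedBall _ _).lineMap_mem hy.1 (mem_closedBall.2 (by linarith))
      ⟨by positivity, by nlinarith⟩
  · have heq : lastC n hn (AffineMap.lineMap y e (κ * h / 4)) =
        κ * h / 4 * (1 / 2 - lastC n hn y) + lastC n hn y := by
      rw [← lastC_referencePoint hn]
      simp [AffineMap.lineMap_apply, lastC, e]
    rw [Set.mem_ofPred_eq, heq]
    nlinarith
  · rw [dist_left_lineMap, Real.norm_of_nonneg (by positivity)]
    nlinarith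

/-- Each layer costs one chain step, hence one factor `T`. -/
theorem exists_le_mul_pow_of_mem_upperRegion (hlam : 0 < lam) (hLam : lam ≤ Lam) (s : ℝ) {a R₁ : ℝ}
    (ha : 0 < a) (hR₁ : 0 < R₁) :
    ∃ κ > 0, κ ≤ 1 / 16 ∧ κ ≤ R₁ ∧ ∃ T > 1, ∃ C ≥ 1, ∀ {b u : 𝔼 n → ℝ}, IsScaledDrift hn s a b →
      PositiveSolution hn lam Lam b u → ∀ (m : ℕ), ∀ y ∈ upperRegion n hn ((1 - κ / 16) ^ m / 4),
      ∃ x ∈ closedBall y (κ * ((1 - κ / 16) ^ m / 4)),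
        u x ≤ C * T ^ m * u (referencePoint n hn) := by
  obtain ⟨R₀, hR₀, T, hT, hstep⟩ := exists_harnackChainStep (hn := hn) hlam hLam s ha
  obtain ⟨κ, hκ, hκmin⟩ : ∃ κ > 0, κ ≤ min (1 / 16) (min R₀ R₁) := ⟨_, by positivity, le_rfl⟩
  obtain ⟨hκ1, hκR₀, hκR₁⟩ := by simpa only [le_min_iff] using hκmin
  obtain ⟨N, hN⟩ := exists_nat_ge (6 / (κ / 4))
  rw [div_le_iff₀ (by positivity)] at hN
  refine ⟨κ, hκ, hκ1, hκR₁, T, hT, T ^ N, one_le_pow₀ hT.le, fun {b u} hb hu m => ?_⟩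
  have hue := hu.pos _ (referencePoint_mem_halfBall hn)
  induction m with
  | zero =>
    intro y hy
    rw [pow_zero] at hy ⊢
    rw [pow_zero, mul_one, mul_one_div]
    exact (hstep hb hu).exists_le_of_mem_upperRegion hT.le (by positivity) (by linarith)
      (by linarith) (by linarith)
      (upperRegion_anti (by norm_num) (referencePoint_mem_upperRegion hn)) hy hue hN
      ⟨_, mem_closedBall_self (by positivity), le_rfl⟩
  | succ m ih =>
    intro y hy
    set θ := 1 - κ / 16 with hθ
    have hθ0 : 1 / 2 ≤ θ := by linarith
    set h := θ ^ m / 4 with hh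
    have hh0 : 0 < h := by positivity
    have hh1 : h ≤ 1 / 4 := by
      linarith [pow_le_one₀ (n := m) (by linarith : 0 ≤ θ) (by linarith)]
    have hsucc : θ ^ (m + 1) / 4 = θ * h := by rw [hh, pow_succ', mul_div_assoc]
    rw [hsucc] at hy ⊢
    obtain ⟨z, hz, hyz⟩ := exists_mem_upperRegion_dist_le hκ hκ1 hh0 hh1 hy
    obtain ⟨x, hx, hux⟩ := hstep hb hu (by positivity) (by nlinarith) (by positivity)
      (closedBall_subset_halfBall hz (by nlinarith) (by nlinarith)) (ih z hz) hyz
    refine ⟨x, closedBall_subset_closedBall (by nlinarith [mul_pos hκ hh0]) hx, hux.trans_eq ?_⟩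
    ring

end Chains

/-! ### The Carleson estimate -/

section Carleson

variable {n : ℕ} {hn : 1 ≤ n} {lam Lam : ℝ}

lemma volume_real_closedBall_inter_slab_le (hn : 1 ≤ n) (x₀ : 𝔼 n) {r h : ℝ} (hr : 0 ≤ r)
    (hh : 0 ≤ h) :
    volume.real (closedBall x₀ r ∩ lastC n hn ⁻¹' Set.Ioo 0 h) ≤ (2 * r) ^ (n - 1) * h := by
  let l : Fin n := ⟨n - 1, Nat.sub_one_lt_of_lt hn⟩
  let box := Function.update (fun i => Set.Icc (x₀ i - r) (x₀ i + r)) l (Set.Ioo 0 h)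
  have hbox : MeasurableSet (Set.univ.pi box) := .univ_pi fun i => by
    rcases eq_or_ne i l with rfl | hi
    · simp [box]
    · simp [box, hi]
  have hsub : closedBall x₀ r ∩ lastC n hn ⁻¹' Set.Ioo 0 h ⊆
      (WithLp.ofLp : 𝔼 n → Fin n → ℝ) ⁻¹' Set.univ.pi box := by
    rintro x ⟨hx, hxh⟩ i -
    rcases eq_or_ne i l with rfl | hi
    · simp only [box, Function.update_self]
      exact hxh
    · have := (PiLp.norm_apply_le (x - x₀) i).trans (mem_closedBall_iff_norm.1 hx)
      simpa only [box, Function.update_of_ne hi, ← Real.closedBall_eq_Icc, mem_closedBall,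
        Real.dist_eq, Real.norm_eq_abs, PiLp.sub_apply] using this
  have hvol : volume (Set.univ.pi box) = ENNReal.ofReal ((2 * r) ^ (n - 1) * h) := by
    have hwidth : ∀ i, x₀ i + r - (x₀ i - r) = 2 * r := fun i => by ring
    simp_rw [volume_pi_pi, box, Function.apply_update (fun _ => (volume : Set ℝ → ℝ≥0∞))]
    rw [Finset.prod_update_of_mem (Finset.mem_univ l)]
    simp only [Real.volume_Ioo, Real.volume_Icc, hwidth, Finset.prod_const, sub_zero]
    rw [Finset.card_sdiff_of_subset (Finset.subset_univ _), Finset.card_univ, Fintype.card_fin,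
      Finset.card_singleton, ← ENNReal.ofReal_pow (by positivity), mul_comm,
      ← ENNReal.ofReal_mul (by positivity)]
  refine ENNReal.toReal_le_of_le_ofReal (by positivity) ((measure_mono hsub).trans_eq ?_)
  rw [(PiLp.volume_preserving_ofLp (Fin n)).measure_preimage hbox.nullMeasurableSet, hvol]

lemma exists_nat_volume_real_le_mul_of_forall_ball (n : ℕ) {δ : ℝ} (hδ : 0 < δ) :
    ∃ N : ℕ, ∀ {E : Set (𝔼 n)} {x₀ : 𝔼 n} {r v : ℝ}, 0 < r → E ⊆ closedBall x₀ r →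
      (∀ c, volume.real (E ∩ ball c (δ * r)) ≤ v) → volume.real E ≤ N * v := by
  obtain ⟨F, -, hF, hcover⟩ := (isCompact_closedBall (0 : 𝔼 n) 1).finite_cover_balls hδ
  refine ⟨hF.toFinset.card, fun {E x₀ r v} hr hE hv => ?_⟩
  have hsub : E ⊆ ⋃ c ∈ hF.toFinset, E ∩ ball (x₀ + r • c) (δ * r) := by
    intro x hx
    have hx1 : r⁻¹ • (x - x₀) ∈ closedBall (0 : 𝔼 n) 1 := by
      rw [mem_closedBall_zero_iff, norm_smul, norm_inv, Real.norm_of_nonneg hr.le,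
        inv_mul_le_one₀ hr]
      exact mem_closedBall_iff_norm.1 (hE hx)
    obtain ⟨c, hc, hxc⟩ := Set.mem_iUnion₂.1 (hcover hx1)
    refine Set.mem_iUnion₂.2 ⟨c, hF.mem_toFinset.2 hc, hx, ?_⟩
    have heq : x - (x₀ + r • c) = r • (r⁻¹ • (x - x₀) - c) := by
      rw [smul_sub, smul_inv_smul₀ hr.ne', sub_sub]
    rw [mem_ball_iff_norm, heq, norm_smul, Real.norm_of_nonneg hr.le, mul_comm]
    exact mul_lt_mul_of_pos_right (mem_ball_iff_norm.1 hxc) hr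
  have hfin : volume (⋃ c ∈ hF.toFinset, E ∩ ball (x₀ + r • c) (δ * r)) ≠ ⊤ :=
    measure_ne_top_of_subset (Set.iUnion₂_subset fun _ _ => Set.inter_subset_left.trans hE)
      (isCompact_closedBall x₀ r).measure_ne_top
  calc volume.real E ≤ _ := measureReal_mono hsub hfin
    _ ≤ ∑ c ∈ hF.toFinset, volume.real (E ∩ ball (x₀ + r • c) (δ * r)) :=
        measureReal_biUnion_finset_le _ _
    _ ≤ _ := (Finset.sum_le_card_nsmul _ _ v fun c _ => hv _).trans_eq (nsmul_eq_mul _ _)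

theorem exists_volume_superlevel_le_of_mem_upperRegion (hlam : 0 < lam) (hLam : lam ≤ Lam) (s : ℝ)
    {a : ℝ} (ha : 0 < a) :
    ∃ κ > 0, κ ≤ 1 / 16 ∧ ∃ T > 1, ∀ η > 0, ∃ C > 0, ∀ {b u : 𝔼 n → ℝ}, IsScaledDrift hn s a b →
      PositiveSolution hn lam Lam b u → ∀ (m : ℕ), ∀ y ∈ upperRegion n hn ((1 - κ / 16) ^ m / 4),
      volume.real (superlevel u y (κ * ((1 - κ / 16) ^ m / 4))
        (C * T ^ m * u (referencePoint n hn))) ≤ η * (κ * ((1 - κ / 16) ^ m / 4)) ^ n := by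
  obtain ⟨R₀, hR₀, hweak⟩ := exists_weak_harnack_halfBall (hn := hn) hlam hLam s ha
  obtain ⟨κ, hκ, hκ1, hκR₀, T, hT, C, hC, hlayer⟩ :=
    exists_le_mul_pow_of_mem_upperRegion (hn := hn) hlam hLam s ha hR₀
  refine ⟨κ, hκ, hκ1, T, hT, fun η hη => ?_⟩
  obtain ⟨Tη, hTη, hweak⟩ := hweak η hη
  refine ⟨Tη * C, by positivity, fun {b u} hb hu m y hy => ?_⟩
  have hue := hu.pos _ (referencePoint_mem_halfBall hn)
  have hθ0 : 0 < 1 - κ / 16 := by linarith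
  obtain ⟨x, hx, hux⟩ := hlayer hb hu m y hy
  have hh1 : (1 - κ / 16) ^ m / 4 ≤ 1 / 4 := by gcongr; exact pow_le_one₀ hθ0.le (by linarith)
  set h := (1 - κ / 16) ^ m / 4
  have hh0 : 0 < h := by positivity
  have hball := closedBall_subset_halfBall (ρ := 4 * (κ * h)) hy (by nlinarith) (by nlinarith)
  simpa only [mul_assoc] using
    hweak hb hu (by positivity) (by nlinarith) (by positivity) hball hx hux

theorem exists_volume_superlevel_inter_le_mul_pow (hlam : 0 < lam) (hLam : lam ≤ Lam) (s : ℝ)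
    {a : ℝ} (ha : 0 < a) :
    ∃ θ, 0 < θ ∧ θ < 1 ∧ ∃ T > 1, ∀ t > 0, ∀ ν > 0, ∃ C > 0, ∀ {b u : 𝔼 n → ℝ},
      IsScaledDrift hn s a b → PositiveSolution hn lam Lam b u → ∀ (m : ℕ) {x₀ : 𝔼 n} {r : ℝ},
      t * r = θ ^ m / 4 → closedBall x₀ r ⊆ closedBall 0 (3 / 2) →
      volume.real (superlevel u x₀ r (C * T ^ m * u (referencePoint n hn)) ∩
        {x | t * r ≤ lastC n hn x}) ≤ ν * r ^ n := by
  obtain ⟨κ, hκ, hκ1, T, hT, hpiece⟩ :=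
    exists_volume_superlevel_le_of_mem_upperRegion (hn := hn) hlam hLam s ha
  refine ⟨1 - κ / 16, by linarith, by linarith, T, hT, fun t ht ν hν => ?_⟩
  obtain ⟨N, hN⟩ := exists_nat_volume_real_le_mul_of_forall_ball n
    (show 0 < κ * t / 2 by positivity)
  obtain ⟨C, hC, hpiece⟩ := hpiece (ν / ((N + 1) * (κ * t) ^ n)) (by positivity)
  refine ⟨C, hC, fun {b u} hb hu m x₀ r hr hx₀ => ?_⟩
  have hθ0 : 0 < 1 - κ / 16 := by linarith
  have hr0 : 0 < r := pos_of_mul_pos_right (hr ▸ by positivity) ht.le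
  set L := C * T ^ m * u (referencePoint n hn)
  set upper := superlevel u x₀ r L ∩ {x | t * r ≤ lastC n hn x}
  have hvol : volume.real upper ≤ N * (ν / ((N + 1) * (κ * t) ^ n) * (κ * (t * r)) ^ n) := by
    refine hN hr0 (Set.inter_subset_left.trans (superlevel_subset_closedBall _ _ _ _)) fun c => ?_
    rcases (upper ∩ ball c (κ * t / 2 * r)).eq_empty_or_nonempty with hempty | ⟨y, hy, hyc⟩
    · rw [hempty, measureReal_empty]; positivity
    have hsub : upper ∩ ball c (κ * t / 2 * r) ⊆ superlevel u y (κ * (t * r)) L := by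
      refine fun x hx => ⟨mem_closedBall.2 ?_, hx.1.1.2⟩
      linarith [dist_triangle_right x y c, mem_ball.1 hyc, mem_ball.1 hx.2]
    have hpiece := hpiece hb hu m y ⟨hx₀ hy.1.1, hr ▸ hy.2⟩
    rw [← hr] at hpiece
    exact (measureReal_mono hsub (volume_superlevel_ne_top _ _ _ _)).trans hpiece
  calc volume.real upper ≤ _ := hvol
    _ = N / (N + 1) * (ν * r ^ n) := by rw [← mul_assoc κ, mul_pow (κ * t)]; field_simp
    _ ≤ ν * r ^ n := mul_le_of_le_one_left (by positivity)
        (div_le_one_of_le₀ (by linarith) (by positivity))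

/-- Below height `θ ^ m / 4` the ball is a slab, thin because `t` is small; above it the estimate
on the layers applies. -/
theorem exists_volume_superlevel_le_mul_pow (hlam : 0 < lam) (hLam : lam ≤ Lam) (s : ℝ) {a : ℝ}
    (ha : 0 < a) :
    ∃ θ, 0 < θ ∧ θ < 1 ∧ ∃ T > 1, ∀ μ > 0, ∃ t > 0, ∃ C > 0, ∀ {b u : 𝔼 n → ℝ},
      IsScaledDrift hn s a b → PositiveSolution hn lam Lam b u → ∀ (m : ℕ) (x₀ : 𝔼 n),
      closedBall x₀ (θ ^ m / t) ⊆ closedBall 0 (3 / 2) →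
      volume.real (superlevel u x₀ (θ ^ m / t) (C * T ^ m * u (referencePoint n hn))) ≤
        μ * (θ ^ m / t) ^ n := by
  obtain ⟨θ, hθ0, hθ1, T, hT, hupper⟩ :=
    exists_volume_superlevel_inter_le_mul_pow (hn := hn) hlam hLam s ha
  refine ⟨θ, hθ0, hθ1, T, hT, fun μ hμ => ?_⟩
  obtain ⟨t, ht, htμ⟩ : ∃ t > 0, 2 ^ n * t = μ := ⟨μ / 2 ^ n, by positivity, by field_simp⟩
  obtain ⟨C, hC, hupper⟩ := hupper t ht (μ / 2) (by positivity)
  refine ⟨4 * t, by positivity, C, hC, fun {b u} hb hu m x₀ hx₀ => ?_⟩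
  have hue := hu.pos _ (referencePoint_mem_halfBall hn)
  set L := C * T ^ m * u (referencePoint n hn)
  have hL : 0 ≤ L := by positivity
  obtain ⟨r, hr⟩ : ∃ r, r = θ ^ m / (4 * t) := ⟨_, rfl⟩
  rw [← hr] at hx₀ ⊢
  have hr0 : 0 < r := hr ▸ by positivity
  set upper := superlevel u x₀ r L ∩ {x | t * r ≤ lastC n hn x}
  have hcover : superlevel u x₀ r L ⊆
      closedBall x₀ r ∩ lastC n hn ⁻¹' Set.Ioo 0 (t * r) ∪ upper := by
    rintro x ⟨hx, hLx⟩
    rcases lt_or_ge (lastC n hn x) (t * r) with hlow | hhigh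
    · refine Or.inl ⟨hx, lt_of_not_ge fun hneg => hLx.not_ge ?_, hlow⟩
      exact (hu.eq_zero x hneg).trans_le hL
    · exact Or.inr ⟨⟨hx, hLx⟩, hhigh⟩
  calc volume.real (superlevel u x₀ r L) ≤ _ := measureReal_mono hcover <|
        measure_ne_top_of_subset (Set.union_subset Set.inter_subset_left
          (Set.inter_subset_left.trans (superlevel_subset_closedBall _ _ _ _)))
          (isCompact_closedBall x₀ r).measure_ne_top
    _ ≤ _ := measureReal_union_le _ _
    _ ≤ (2 * r) ^ (n - 1) * (t * r) + μ / 2 * r ^ n :=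
        add_le_add (volume_real_closedBall_inter_slab_le hn x₀ hr0.le (by positivity))
          (hupper hb hu m (by rw [hr]; field_simp) hx₀)
    _ = μ * r ^ n := by
        obtain ⟨k, rfl⟩ : ∃ k, n = k + 1 := ⟨n - 1, by omega⟩
        rw [← htμ, Nat.add_sub_cancel, mul_pow]; ring

theorem exists_volume_superlevel_lower_bound (hlam : 0 < lam) (hLam : lam ≤ Lam) (s : ℝ) {a D : ℝ}
    (ha : 0 < a) (hD : 1 ≤ D) :
    ∃ μ > 0, ∃ R₀ > 0, ∀ {b u : 𝔼 n → ℝ}, IsScaledDrift hn s a b →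
      PositiveSolution hn lam Lam b u → ∀ {x₀ : 𝔼 n} {r M : ℝ}, 0 < r → r ≤ R₀ → 0 < M →
      closedBall x₀ r ⊆ ball 0 2 → M ≤ u x₀ → (∀ x ∈ closedBall x₀ r, u x ≤ D * M) →
      μ * r ^ n ≤ volume.real (superlevel u x₀ r (M / 2)) := by
  have hn0 : n ≠ 0 := Nat.one_le_iff_ne_zero.1 hn
  obtain ⟨μ, hμ, ε, hε, hgrowth⟩ := exists_superlevel_volume_lower_bound hn0 hlam hLam hD
  obtain ⟨R₀, hR₀, hsmall⟩ := exists_forall_mul_rpow_pow_le hn0 (s := s) ha hε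
  refine ⟨μ, hμ, R₀, hR₀, fun {b u} hb hu {x₀ r M} hr hrR₀ hM hball hMu hD => ?_⟩
  have hhalf : superlevel u x₀ r (M / 2) ⊆ halfBall n hn 2 := fun x hx =>
    ⟨mem_ball_zero_iff.1 (hball hx.1), lt_of_not_ge fun hneg => hx.2.not_ge <|
      (hu.eq_zero x hneg).trans_le (by positivity)⟩
  refine hgrowth hr hM (hu.continuousOn.mono hball) hMu hD (fun x hx hux => ?_)
    ((hb.lintegral_pow_le hr (superlevel_subset_closedBall _ _ _ _) hhalf).trans
      (ENNReal.ofReal_le_ofReal (hsmall r hr hrR₀)))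
  exact ⟨hb.nonneg x (hhalf ⟨hx, hux⟩), hu.isSupersolutionAt_neg x (hhalf ⟨hx, hux⟩)⟩

lemma not_bddAbove_image_closedBall_of_step {X : Type*} [PseudoMetricSpace X] {f : X → ℝ} {x₀ : X}
    {θ T M r : ℝ} (hθ : 0 ≤ θ) (hr : 0 ≤ r) (hT : 1 < T) (hM : 0 < M) (hx₀ : M ≤ f x₀)
    (hstep : ∀ k : ℕ, ∀ y ∈ closedBall x₀ (r * (1 - θ ^ k)), T ^ k * M ≤ f y →
      ∃ p ∈ closedBall y (r * (1 - θ) * θ ^ k), T ^ (k + 1) * M ≤ f p) :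
    ¬BddAbove (f '' closedBall x₀ r) := by
  have hseq : ∀ k : ℕ, ∃ y ∈ closedBall x₀ (r * (1 - θ ^ k)), T ^ k * M ≤ f y := by
    intro k
    induction k with
    | zero => exact ⟨x₀, by simp, by simpa using hx₀⟩
    | succ k ih =>
      obtain ⟨y, hy, hfy⟩ := ih
      obtain ⟨p, hp, hfp⟩ := hstep k y hy hfy
      refine ⟨p, mem_closedBall.2 ((dist_triangle p y x₀).trans ?_), hfp⟩
      rw [pow_succ]
      linarith [mem_closedBall.1 hp, mem_closedBall.1 hy]
  rintro ⟨B, hB⟩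
  obtain ⟨k, hk⟩ := pow_unbounded_of_one_lt (B / M) hT
  rw [div_lt_iff₀ hM] at hk
  obtain ⟨y, hy, hfy⟩ := hseq k
  refine (hk.trans_le hfy).not_ge (hB ⟨y, closedBall_subset_closedBall ?_ hy, rfl⟩)
  linarith [mul_nonneg hr (pow_nonneg hθ k)]

/-- If `u` were too large at a point, the growth lemma would produce nearby points at which it is
larger still, at distances that are summable because the superlevel sets near the flat boundary
are small; this contradicts boundedness. -/
theorem exists_carleson_estimate (hlam : 0 < lam) (hLam : lam ≤ Lam) (s : ℝ) {a : ℝ}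
    (ha : 0 < a) :
    ∃ C ≥ 1, ∀ {b u : 𝔼 n → ℝ}, IsScaledDrift hn s a b → PositiveSolution hn lam Lam b u →
      ∀ x ∈ closedBall (0 : 𝔼 n) (5 / 4), u x ≤ C * u (referencePoint n hn) := by
  obtain ⟨θ, hθ0, hθ1, T, hT, hdecay⟩ :=
    exists_volume_superlevel_le_mul_pow (hn := hn) hlam hLam s ha
  obtain ⟨μ, hμ, R₀, hR₀, hgrowth⟩ :=
    exists_volume_superlevel_lower_bound (hn := hn) hlam hLam s ha hT.le
  obtain ⟨t, ht, C, hC, hdecay⟩ := hdecay (μ / 2) (by positivity)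
  obtain ⟨m, hm⟩ := exists_pow_lt_of_lt_one
    (show 0 < min R₀ (1 / 4 * (1 - θ)) * t by have := sub_pos.2 hθ1; positivity) hθ1
  obtain ⟨hmR₀, hmθ⟩ := lt_min_iff.1 ((div_lt_iff₀ ht).2 hm)
  refine ⟨max 1 (2 * C * T ^ m), le_max_left _ _, fun {b u} hb hu x hx => ?_⟩
  have hue := hu.pos _ (referencePoint_mem_halfBall hn)
  set e := referencePoint n hn
  refine le_trans (le_of_not_ge fun hux => ?_)
    (mul_le_mul_of_nonneg_right (le_max_right _ _) hue.le)
  have hball : closedBall x (1 / 4) ⊆ closedBall 0 (3 / 2) :=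
    closedBall_subset_closedBall' (by linarith [mem_closedBall.1 hx])
  have h32 : closedBall (0 : 𝔼 n) (3 / 2) ⊆ ball 0 2 := closedBall_subset_ball (by norm_num)
  refine not_bddAbove_image_closedBall_of_step hθ0.le (by norm_num) hT (by positivity) hux
    (fun k y hy huy => ?_) ((isCompact_closedBall x (1 / 4)).image_of_continuousOn
      (hu.continuousOn.mono (hball.trans h32))).bddAbove
  have hθk : θ ^ k ≤ 1 := pow_le_one₀ hθ0.le hθ1.le
  have hr : θ ^ (m + k) / t ≤ 1 / 4 * (1 - θ) * θ ^ k := by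
    rw [pow_add, mul_div_right_comm]
    gcongr
  have hrR₀ : θ ^ (m + k) / t ≤ R₀ := by
    rw [pow_add, mul_div_right_comm]
    exact (mul_le_of_le_one_right (by positivity) hθk).trans hmR₀.le
  have hy32 : closedBall y (θ ^ (m + k) / t) ⊆ closedBall 0 (3 / 2) := by
    refine (closedBall_subset_closedBall' ?_).trans hball
    linarith [mem_closedBall.1 hy, pow_pos hθ0 k, mul_nonneg hθ0.le (pow_pos hθ0 k).le]
  by_contra! hle
  have hlower := hgrowth hb hu (x₀ := y) (by positivity) hrR₀ (by positivity) (hy32.trans h32) huy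
    fun p hp => by
      rw [← mul_assoc, ← pow_succ']
      exact (hle p (closedBall_subset_closedBall hr hp)).le
  have hupper := hdecay hb hu (m + k) y hy32
  have hM : T ^ k * (2 * C * T ^ m * u e) / 2 = C * T ^ (m + k) * u e := by
    rw [pow_add]; ring
  rw [hM] at hlower
  have : 0 < μ * (θ ^ (m + k) / t) ^ n := by positivity
  linarith

end Carleson

section InteriorLowerBound

variable {n : ℕ} {hn : 1 ≤ n} {lam Lam : ℝ}

lemma exists_lt_on_closedBall_referencePoint (hlam : 0 < lam) (hLam : lam ≤ Lam) (s : ℝ) {a : ℝ}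
    (ha : 0 < a) :
    ∃ R₀ > 0, ∃ c > 0, ∀ {b u : 𝔼 n → ℝ}, IsScaledDrift hn s a b →
      PositiveSolution hn lam Lam b u → ∀ {ρ : ℝ}, 0 < ρ → ρ ≤ R₀ →
      ∀ x ∈ closedBall (referencePoint n hn) ρ, c * u (referencePoint n hn) < u x := by
  obtain ⟨C, hC, hcarleson⟩ := exists_carleson_estimate (hn := hn) hlam hLam s ha
  obtain ⟨μ, hμ, R₁, hR₁, hgrowth⟩ :=
    exists_volume_superlevel_lower_bound (hn := hn) hlam hLam s ha hC
  obtain ⟨R₂, hR₂, hweak⟩ := exists_weak_harnack_halfBall (hn := hn) hlam hLam s ha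
  obtain ⟨T, hT, hweak⟩ := hweak (μ / 2) (by positivity)
  refine ⟨min (1 / 16) (min R₁ R₂), by positivity, 1 / (2 * T), by positivity,
    fun {b u} hb hu {ρ} hρ hρR₀ x hx => ?_⟩
  obtain ⟨hρ16, hρR₁, hρR₂⟩ := by simpa only [le_min_iff] using hρR₀
  have hue := hu.pos _ (referencePoint_mem_halfBall hn)
  set e := referencePoint n hn with he
  have he0 : dist e 0 = 1 / 2 := by rw [dist_zero_right, he, norm_referencePoint]
  have hball : closedBall e (4 * ρ) ⊆ halfBall n hn 2 :=
    closedBall_subset_halfBall (referencePoint_mem_upperRegion hn) (by linarith) (by linarith)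
  by_contra! hux
  have hupper := hweak hb hu hρ hρR₂ (by positivity) hball hx hux
  have hlower := hgrowth hb hu hρ hρR₁ hue (closedBall_subset_ball' (by linarith)) le_rfl
    fun p hp => hcarleson hb hu p (closedBall_subset_closedBall' (by linarith) hp)
  have hTe : T * (1 / (2 * T) * u e) = u e / 2 := by field_simp
  rw [hTe] at hupper
  have : 0 < μ * ρ ^ n := by positivity
  linarith

theorem exists_interior_lower_bound (hlam : 0 < lam) (hLam : lam ≤ Lam) (s : ℝ) {a τ : ℝ}
    (ha : 0 < a) (hτ : 0 < τ) :
    ∃ c > 0, ∀ {b u : 𝔼 n → ℝ}, IsScaledDrift hn s a b → PositiveSolution hn lam Lam b u →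
      ∀ y ∈ upperRegion n hn τ, c * u (referencePoint n hn) ≤ u y := by
  obtain ⟨R₁, hR₁, c, hc, hnear⟩ :=
    exists_lt_on_closedBall_referencePoint (hn := hn) hlam hLam s ha
  obtain ⟨R₂, hR₂, T, hT, hstep⟩ := exists_harnackChainStep (hn := hn) hlam hLam s ha
  obtain ⟨ρ, hρ, hρmin⟩ : ∃ ρ > 0, ρ ≤ min (min R₁ R₂) (min (1 / 16) (τ / 8)) :=
    ⟨_, by positivity, le_rfl⟩
  obtain ⟨⟨hρR₁, hρR₂⟩, hρ16, hρτ⟩ := by simpa only [le_min_iff] using hρmin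
  obtain ⟨N, hN⟩ := exists_nat_ge (6 / ρ)
  refine ⟨c / T ^ N, by positivity, fun {b u} hb hu y hy => ?_⟩
  have huy : 0 < u y := hu.pos y <| closedBall_subset_halfBall hy
    (by linarith : ρ < τ) (by linarith) (mem_closedBall_self hρ.le)
  obtain ⟨x, hx, hux⟩ := (hstep hb hu).exists_le_of_mem_upperRegion hT.le hρ hρR₂
    (lt_min (by linarith) (by linarith)) (by linarith) (upperRegion_anti (min_le_left _ _) hy)
    (upperRegion_anti (min_le_right τ (1 / 2)) (referencePoint_mem_upperRegion hn)) huy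
    ((div_le_iff₀ hρ).1 hN) ⟨y, mem_closedBall_self hρ.le, le_rfl⟩
  rw [div_mul_eq_mul_div, div_le_iff₀ (by positivity), mul_comm (u y)]
  exact (hnear hb hu hρ hρR₁ x hx).le.trans hux

end InteriorLowerBound

/-! ### Linear bounds near the flat boundary -/

section FlatBarrier

variable {n : ℕ} {G r : ℝ} {z x : 𝔼 n} {k : Fin n}

/-- The barrier controlling a supersolution near a point `z` of the flat boundary `{x | x k = 0}`:
it dominates `r ^ 2` on the lateral boundary of the half ball of radius `r`, and for large `G` the
concave quadratic term makes it a supersolution. -/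
noncomputable def flatBarrier (G r : ℝ) (z : 𝔼 n) (k : Fin n) (x : 𝔼 n) : ℝ :=
  ‖x - z‖ ^ 2 + G * (2 * r * x k - x k ^ 2)

lemma flatBarrier_eq (G r : ℝ) (z : 𝔼 n) (k : Fin n) : flatBarrier G r z k =
    fun x => ‖x - z‖ ^ 2 + ((2 * G * r) * x k + (-G) * x k ^ 2) := by
  ext x; rw [flatBarrier]; ring

lemma contDiff_flatBarrier (G r : ℝ) (z : 𝔼 n) (k : Fin n) : ContDiff ℝ 2 (flatBarrier G r z k) :=
  (contDiff_norm_sub_sq z).add <| contDiff_const.mul <|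
    (contDiff_const.mul (contDiff_coord k)).sub ((contDiff_coord k).pow 2)

lemma sq_norm_sub_le_flatBarrier (hG : 0 ≤ G) (hx : 0 ≤ x k) (hxr : x k ≤ r) :
    ‖x - z‖ ^ 2 ≤ flatBarrier G r z k x :=
  le_add_of_nonneg_right (mul_nonneg hG (by nlinarith))

lemma flatBarrier_le (hG : 0 ≤ G) : flatBarrier G r z k x ≤ ‖x - z‖ ^ 2 + 2 * G * r * x k := by
  rw [flatBarrier]
  nlinarith [mul_nonneg hG (sq_nonneg (x k))]

lemma norm_fderiv_flatBarrier_le (hG : 0 ≤ G) (hxz : ‖x - z‖ ≤ r) (hx : 0 ≤ x k) (hxr : x k ≤ r) :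
    ‖fderiv ℝ (flatBarrier G r z k) x‖ ≤ 2 * (1 + G) * r := by
  have hcoord := hasFDerivAt_coord k x
  have hquad := ((hcoord.const_mul (2 * r)).sub (hcoord.pow 2)).const_mul G
  have hD : fderiv ℝ (flatBarrier G r z k) x = fderiv ℝ (fun y => ‖y - z‖ ^ 2) x +
      (2 * G * (r - x k)) • fderiv ℝ (fun y : 𝔼 n => y k) x := by
    have hsum : HasFDerivAt (flatBarrier G r z k) _ x := (hasFDerivAt_norm_sub_sq z x).add hquad
    rw [hsum.fderiv, (hasFDerivAt_norm_sub_sq z x).fderiv, hcoord.fderiv]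
    ext v
    simp
    ring
  have hcoef : 0 ≤ 2 * G * (r - x k) := mul_nonneg (by positivity) (sub_nonneg.2 hxr)
  calc ‖fderiv ℝ (flatBarrier G r z k) x‖ ≤ 2 * ‖x - z‖ + 2 * G * (r - x k) * 1 := by
        rw [hD]
        refine (norm_add_le _ _).trans (add_le_add (norm_fderiv_norm_sub_sq z x).le ?_)
        rw [norm_smul, Real.norm_of_nonneg hcoef]
        exact mul_le_mul_of_nonneg_left (norm_fderiv_coord_le k x) hcoef
    _ ≤ 2 * (1 + G) * r := by nlinarith [mul_nonneg hG hx]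

lemma hess_flatBarrier (G r : ℝ) (z : 𝔼 n) (k : Fin n) (x : 𝔼 n) :
    hess n (flatBarrier G r z k) x = (2 : ℝ) • (1 : Matrix (Fin n) (Fin n) ℝ) -
      (2 * G) • vecMulVec (Pi.single k 1) (Pi.single k 1) := by
  have hcoord := (contDiff_coord (n := n) k).contDiffAt (x := x)
  rw [flatBarrier_eq, hess_add (contDiff_norm_sub_sq z).contDiffAt
      ((contDiffAt_const.mul hcoord).add (contDiffAt_const.mul (hcoord.pow 2))),
    hess_add (contDiffAt_const.mul hcoord) (contDiffAt_const.mul (hcoord.pow 2)),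
    hess_const_mul _ hcoord, hess_const_mul _ (hcoord.pow 2), hess_norm_sub_sq, hess_coord,
    hess_coord_sq, smul_zero, zero_add, smul_smul, sub_eq_add_neg, ← neg_smul]
  congr 2
  ring

lemma IsElliptic.trace_mul_hess_flatBarrier_nonpos {lam Lam : ℝ} {A : Matrix (Fin n) (Fin n) ℝ}
    (hA : IsElliptic lam Lam A) (hG0 : 0 ≤ G) (hG : n * Lam ≤ G * lam) :
    (A * hess n (flatBarrier G r z k) x).trace ≤ 0 := by
  have hupper := hA.trace_le
  have hlower := hA.mul_dotProduct_self_le (Pi.single k 1)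
  rw [Fintype.card_fin] at hupper
  rw [single_dotProduct, Pi.single_eq_same, mul_one, mul_one] at hlower
  rw [hess_flatBarrier, Matrix.mul_sub, trace_sub, Matrix.mul_smul, Matrix.mul_smul, trace_smul,
    trace_smul, Matrix.mul_one, smul_eq_mul, smul_eq_mul]
  nlinarith

end FlatBarrier

section FlatSupersolution

variable {n : ℕ} {hn : 1 ≤ n} {lam Lam s a : ℝ} {b v : 𝔼 n → ℝ}

/-- A supersolution in `halfBall n hn 2` that is continuous up to the flat boundary and nonnegative
there; both a positive solution and its negative are of this kind. -/
structure FlatSupersolution (hn : 1 ≤ n) (lam Lam : ℝ) (b v : 𝔼 n → ℝ) : Prop where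
  continuousOn : ContinuousOn v (ball 0 2)
  nonneg : ∀ x, lastC n hn x = 0 → 0 ≤ v x
  isSupersolutionAt : ∀ x ∈ halfBall n hn 2, IsSupersolutionAt lam Lam (b x) 0 0 v x

lemma PositiveSolution.flatSupersolution (hv : PositiveSolution hn lam Lam b v) :
    FlatSupersolution hn lam Lam b v where
  continuousOn := hv.continuousOn
  nonneg x hx := (hv.eq_zero x hx.le).ge
  isSupersolutionAt := hv.isSupersolutionAt

lemma PositiveSolution.flatSupersolution_neg (hv : PositiveSolution hn lam Lam b v) :
    FlatSupersolution hn lam Lam b fun x => -v x where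
  continuousOn := hv.continuousOn.neg
  nonneg x hx := by rw [hv.eq_zero x hx.le, neg_zero]
  isSupersolutionAt := hv.isSupersolutionAt_neg

/-- The part of the closed ball about `z` in the closed upper half space. -/
def closedHalfBall (n : ℕ) (hn : 1 ≤ n) (z : 𝔼 n) (r : ℝ) : Set (𝔼 n) :=
  closedBall z r ∩ {x | 0 ≤ lastC n hn x}

lemma isCompact_closedHalfBall (hn : 1 ≤ n) (z : 𝔼 n) (r : ℝ) :
    IsCompact (closedHalfBall n hn z r) :=
  (isCompact_closedBall z r).inter_right (isClosed_le continuous_const (continuous_lastC hn))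

lemma closedHalfBall_subset_closedBall {z : 𝔼 n} {r : ℝ} (hz : ‖z‖ ≤ 1) (hr : r ≤ 1 / 4) :
    closedHalfBall n hn z r ⊆ closedBall 0 (5 / 4) :=
  Set.inter_subset_left.trans <| closedBall_subset_closedBall' <| by
    rw [dist_zero_right]; linarith

lemma lastC_le_of_mem_closedHalfBall {z x : 𝔼 n} {r : ℝ} (hz : lastC n hn z = 0)
    (hx : x ∈ closedHalfBall n hn z r) : lastC n hn x ≤ r := by
  have := (le_abs_self _).trans ((abs_lastC_sub_le hn x z).trans (mem_closedBall.1 hx.1))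
  rwa [hz, sub_zero] at this

lemma mem_interior_closedHalfBall {z x : 𝔼 n} {r : ℝ} (hxz : ‖x - z‖ < r)
    (hx : 0 < lastC n hn x) : x ∈ interior (closedHalfBall n hn z r) := by
  rw [closedHalfBall, interior_inter]
  exact ⟨mem_interior_closedBall hxz, interior_maximal (fun y hy => le_of_lt hy)
    (isOpen_lt continuous_const (continuous_lastC hn)) hx⟩

lemma lt_and_pos_of_add_flatBarrier_neg {k : Fin n} (hk : ∀ x, lastC n hn x = x k) {z x : 𝔼 n}
    {r A G δ : ℝ} (hr : 0 < r) (hG : 0 ≤ G) (hδ : 0 ≤ δ) (hz : lastC n hn z = 0)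
    (hv0 : lastC n hn x = 0 → 0 ≤ v x) (hv : A * lastC n hn x - δ ≤ v x)
    (hx : x ∈ closedHalfBall n hn z r)
    (hneg : v x + (-A) * x k + δ / r ^ 2 * flatBarrier G r z k x < 0) :
    ‖x - z‖ < r ∧ 0 < lastC n hn x := by
  have hbarrier := mul_le_mul_of_nonneg_left (sq_norm_sub_le_flatBarrier (z := z) hG
    (hk x ▸ hx.2) (hk x ▸ lastC_le_of_mem_closedHalfBall hz hx)) (show 0 ≤ δ / r ^ 2 by positivity)
  constructor
  · by_contra! hxr
    rw [le_antisymm (mem_closedBall_iff_norm.1 hx.1) hxr, div_mul_cancel₀ δ (by positivity)]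
      at hbarrier
    rw [hk] at hv
    linarith
  · by_contra! hx0
    have hx0 := le_antisymm hx0 hx.2
    have : 0 ≤ δ / r ^ 2 * ‖x - z‖ ^ 2 := by positivity
    rw [← hk, hx0] at hneg
    linarith [hv0 hx0]

lemma FlatSupersolution.negSetSupersolution {k : Fin n} (hk : ∀ x, lastC n hn x = x k)
    (hv : FlatSupersolution hn lam Lam b v) (hb : ∀ x ∈ halfBall n hn 2, 0 ≤ b x) {z : 𝔼 n}
    {r A G δ : ℝ} (hr : 0 < r) (hr4 : r ≤ 1 / 4) (hG : 0 ≤ G) (hGlam : n * Lam ≤ G * lam)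
    (hδ : 0 ≤ δ) (hz : ‖z‖ ≤ 1) (hz0 : lastC n hn z = 0)
    (hlow : ∀ x ∈ closedHalfBall n hn z r, A * lastC n hn x - δ ≤ v x) :
    NegSetSupersolution lam Lam (|A| + 2 * (1 + G) * δ / r) (closedHalfBall n hn z r) b
      ((∅ : Set (𝔼 n)).indicator fun _ => 0)
      fun x => v x + (-A) * x k + δ / r ^ 2 * flatBarrier G r z k x := by
  have hball := (closedHalfBall_subset_closedBall (hn := hn) hz hr4).trans
    (closedBall_subset_ball (show (5 / 4 : ℝ) < 2 by norm_num))
  have hsign {x} (hx : x ∈ closedHalfBall n hn z r) :=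
    lt_and_pos_of_add_flatBarrier_neg hk hr hG hδ hz0 (hv.nonneg x) (hlow x hx) hx
  have hhalf {x} (hx : x ∈ closedHalfBall n hn z r) hneg : x ∈ halfBall n hn 2 :=
    ⟨mem_ball_zero_iff.1 (hball hx), (hsign hx hneg).2⟩
  refine ⟨?_, fun x hx hneg => mem_interior_closedHalfBall (hsign hx hneg).1 (hsign hx hneg).2,
    fun x hx hneg => hb x (hhalf hx hneg), fun x hx hneg => ?_⟩
  · have hbarrier := (contDiff_flatBarrier G r z k).continuous
    have hvK := hv.continuousOn.mono hball
    fun_prop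
  · have hbx := hb x (hhalf hx hneg)
    have hlinear := (hv.isSupersolutionAt x (hhalf hx hneg)).add_const_mul (c := -A) (β' := |A|)
      (α' := 0) hbx (contDiff_coord k).contDiffAt
      (by rw [abs_neg]; exact mul_le_of_le_one_right (abs_nonneg A) (norm_fderiv_coord_le k x))
      fun A' _ => by rw [hess_coord, mul_zero, trace_zero, mul_zero]
    have hbarrier := hlinear.add_const_mul (c := δ / r ^ 2)
      (β' := δ / r ^ 2 * (2 * (1 + G) * r)) (α' := 0) hbx
      (contDiff_flatBarrier G r z k).contDiffAt (by
        rw [abs_of_nonneg (by positivity)]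
        exact mul_le_mul_of_nonneg_left (norm_fderiv_flatBarrier_le hG
          (mem_closedBall_iff_norm.1 hx.1) (hk x ▸ hx.2)
          (hk x ▸ lastC_le_of_mem_closedHalfBall hz0 hx)) (by positivity))
      fun A' hA' => mul_nonpos_of_nonneg_of_nonpos (by positivity)
        (hA'.trace_mul_hess_flatBarrier_nonpos hG hGlam)
    refine hbarrier.mono hbx (le_of_eq ?_) ?_
    · field_simp; ring
    · rw [Set.indicator_empty, add_zero, add_zero]

theorem exists_sub_flatBarrier_le (hlam : 0 < lam) (hs : 0 ≤ s) (ha : 0 < a) :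
    ∃ C > 0, ∃ R₀ > 0, ∀ {b v : 𝔼 n → ℝ}, IsScaledDrift hn s a b →
      FlatSupersolution hn lam Lam b v → ∀ {z : 𝔼 n} {k : Fin n} {r A G δ : ℝ},
      (∀ x, lastC n hn x = x k) → 0 < r → r ≤ R₀ → r ≤ 1 / 4 → 0 ≤ G → n * Lam ≤ G * lam →
      0 ≤ δ → ‖z‖ ≤ 1 → lastC n hn z = 0 →
      (∀ x ∈ closedHalfBall n hn z r, A * lastC n hn x - δ ≤ v x) →
      ∀ x ∈ closedHalfBall n hn z r, A * lastC n hn x - δ / r ^ 2 * flatBarrier G r z k x -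
        C * (s * r ^ a) * (r * |A| + 2 * (1 + G) * δ) ≤ v x := by
  have hn0 : n ≠ 0 := Nat.one_le_iff_ne_zero.1 hn
  obtain ⟨C, hC, ε, hε, habp⟩ := exists_abp_constants (Lam := Lam) hn0 hlam
  obtain ⟨R₀, hR₀, hsmall⟩ := exists_forall_mul_rpow_pow_le hn0 (s := s) ha hε
  obtain ⟨c, hc, hcC⟩ : ∃ c > 0, c ^ n = C :=
    ⟨C ^ (n⁻¹ : ℝ), by positivity, Real.rpow_inv_natCast_pow hC.le hn0⟩
  refine ⟨2 * c, by positivity, R₀, hR₀,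
    fun {b v} hb hv {z k r A G δ} hk hr hrR₀ hr4 hG hGlam hδ hz hz0 hlow x hx => ?_⟩
  have hW := hv.negSetSupersolution hk hb.nonneg hr hr4 hG hGlam hδ hz hz0 hlow
  set W := fun x => v x + (-A) * x k + δ / r ^ 2 * flatBarrier G r z k x
  set β := |A| + 2 * (1 + G) * δ / r
  have hnegball : {y ∈ closedHalfBall n hn z r | W y < 0} ⊆ closedBall z r := fun y hy => hy.1.1
  have hneghalf : {y ∈ closedHalfBall n hn z r | W y < 0} ⊆ halfBall n hn 2 := fun y hy => by
    obtain ⟨-, hpos⟩ := lt_and_pos_of_add_flatBarrier_neg hk hr hG hδ hz0 (hv.nonneg y)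
      (hlow y hy.1) hy.1 hy.2
    have := mem_closedBall_zero_iff.1 (closedHalfBall_subset_closedBall hz hr4 hy.1)
    exact ⟨by linarith, hpos⟩
  have herr : C * (β ^ n * (s * r ^ a) ^ n) = (c * (s * r ^ a) * β) ^ n := by
    rw [mul_pow _ β, mul_pow c, hcC]; ring
  have hWx : -(2 * r * (c * (s * r ^ a) * β)) ≤ W x := by
    rcases le_or_gt 0 (W x) with h0 | hneg
    · exact le_trans (neg_nonpos.2 (by positivity)) h0
    have hle := habp (d := 2 * r) (B := (s * r ^ a) ^ n) hW (isCompact_closedHalfBall hn z r)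
      MeasurableSet.empty (by positivity) (neg_pos.2 hneg) le_rfl (by positivity) (by positivity)
      (hsmall r hr hrR₀) (fun y hy y' hy' => norm_sub_le_two_mul_of_mem_closedBall hy.1 hy'.1)
      (hb.lintegral_pow_le hr hnegball hneghalf) hx (neg_neg (W x)).ge
    rw [zero_pow hn0, zero_mul, zero_add, herr] at hle
    have := (div_le_iff₀ (by positivity)).1 (le_of_pow_le_pow_left₀ hn0 (by positivity) hle)
    linarith
  have hβ : 2 * r * (c * (s * r ^ a) * β) =
      2 * c * (s * r ^ a) * (r * |A| + 2 * (1 + G) * δ) := by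
    simp only [β]; field_simp
  rw [hβ] at hWx
  simp only [W, ← hk] at hWx
  linarith

theorem exists_slope_improvement (hlam : 0 < lam) (hLam : lam ≤ Lam) (hs : 0 ≤ s) (ha : 0 < a) :
    ∃ G > 0, ∃ C > 0, ∃ R₀ > 0, ∀ {b v : 𝔼 n → ℝ}, IsScaledDrift hn s a b →
      FlatSupersolution hn lam Lam b v → ∀ {z : 𝔼 n} {r ρ A δ : ℝ}, 0 < r → r ≤ R₀ → r ≤ 1 / 4 →
      ρ ≤ 1 → 0 ≤ δ → ‖z‖ ≤ 1 → lastC n hn z = 0 →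
      (∀ x ∈ closedHalfBall n hn z r, A * lastC n hn x - δ ≤ v x) →
      ∀ x ∈ closedHalfBall n hn z (ρ * r), (A - G * δ / r) * lastC n hn x -
        (ρ ^ 2 * δ + C * (s * r ^ a) * (r * |A| + δ)) ≤ v x := by
  obtain ⟨C, hC, R₀, hR₀, hbarrier⟩ :=
    exists_sub_flatBarrier_le (hn := hn) (Lam := Lam) hlam hs ha
  obtain ⟨G, hG, hGlam⟩ : ∃ G > 0, n * Lam = G * lam :=
    ⟨n * Lam / lam, div_pos (mul_pos (by exact_mod_cast hn) (hlam.trans_le hLam)) hlam,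
      by field_simp⟩
  refine ⟨2 * G, by positivity, 2 * (1 + G) * C, by positivity, R₀, hR₀,
    fun {b v} hb hv {z r ρ A δ} hr hrR₀ hr4 hρ1 hδ hz hz0 hlow x hx => ?_⟩
  have hxr : x ∈ closedHalfBall n hn z r :=
    ⟨closedBall_subset_closedBall (mul_le_of_le_one_left hr.le hρ1) hx.1, hx.2⟩
  have hle := hbarrier hb hv (k := ⟨n - 1, Nat.sub_one_lt_of_lt hn⟩) (fun _ => rfl) hr hrR₀ hr4
    hG.le hGlam.le hδ hz hz0 hlow x hxr
  have hquad : δ / r ^ 2 * flatBarrier G r z ⟨n - 1, Nat.sub_one_lt_of_lt hn⟩ x ≤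
      ρ ^ 2 * δ + 2 * G * δ / r * lastC n hn x := by
    have hxρ := pow_le_pow_left₀ (norm_nonneg _) (mem_closedBall_iff_norm.1 hx.1) 2
    calc _ ≤ δ / r ^ 2 * ((ρ * r) ^ 2 + 2 * G * r * lastC n hn x) := by
          gcongr; exact (flatBarrier_le hG.le).trans (by gcongr; exact le_rfl)
      _ = _ := by field_simp
  have herr : C * (s * r ^ a) * (r * |A| + 2 * (1 + G) * δ) ≤
      2 * (1 + G) * C * (s * r ^ a) * (r * |A| + δ) := by
    have : 0 ≤ C * (s * r ^ a) * ((1 + 2 * G) * (r * |A|)) := by positivity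
    linarith
  linarith

lemma exists_eq_rpow_div_two (ha1 : a < 1) : ∃ ρ : ℝ, 0 < ρ ∧ ρ < 1 ∧ ρ = ρ ^ a / 2 := by
  have ha' : 0 < 1 - a := sub_pos.2 ha1
  set ρ : ℝ := (1 / 2) ^ (1 / (1 - a))
  have hρ : 0 < ρ := by positivity
  refine ⟨ρ, hρ, Real.rpow_lt_one (by norm_num) (by norm_num) (by positivity), ?_⟩
  have hhalf : ρ ^ (1 - a) = 1 / 2 := by
    rw [← Real.rpow_mul (by norm_num), one_div_mul_cancel ha'.ne', Real.rpow_one]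
  calc ρ = ρ ^ a * ρ ^ (1 - a) := by rw [← Real.rpow_add hρ, add_sub_cancel, Real.rpow_one]
    _ = ρ ^ a / 2 := by rw [hhalf]; ring

/-- The choice `ρ = ϑ / 2` with `ϑ = ρ ^ a` makes both `ρ ^ 2` and the drift term contribute at most
half of the error allowed at the next scale. -/
theorem exists_scaled_slope_improvement (hlam : 0 < lam) (hLam : lam ≤ Lam) (hs : 0 ≤ s)
    (ha : 0 < a) (ha1 : a < 1) :
    ∃ ρ : ℝ, 0 < ρ ∧ ρ < 1 ∧ ∃ δ₀ > 0, δ₀ ≤ ρ / 4 ∧ ∃ r₀ > 0, r₀ ≤ 1 / 4 ∧ ∀ {b v : 𝔼 n → ℝ},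
      IsScaledDrift hn s a b → FlatSupersolution hn lam Lam b v →
      ∀ {z : 𝔼 n} {r e A A' : ℝ}, 0 < r → r ≤ r₀ → 0 < e → e ≤ 1 → r ^ a ≤ e * r₀ ^ a →
      |A'| ≤ 2 * |A| → ‖z‖ ≤ 1 → lastC n hn z = 0 →
      (∀ x ∈ closedHalfBall n hn z r, A' * lastC n hn x - |A| * δ₀ * e * r ≤ v x) →
      ∀ x ∈ closedHalfBall n hn z (ρ * r), (A' - |A| / 4 * (e - ρ ^ a * e)) * lastC n hn x -
        |A| * δ₀ * (ρ ^ a * e) * (ρ * r) ≤ v x := by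
  obtain ⟨G, hG, C, hC, R₀, hR₀, himprove⟩ :=
    exists_slope_improvement (hn := hn) hlam hLam hs ha
  obtain ⟨ρ, hρ0, hρ1, hρ⟩ := exists_eq_rpow_div_two ha1
  set ϑ := ρ ^ a
  have hϑ0 : 0 < 1 - ϑ := sub_pos.2 (Real.rpow_lt_one hρ0.le hρ1 ha)
  obtain ⟨δ₀, hδ₀, hδ₀min⟩ : ∃ δ₀ > 0, δ₀ ≤ min (ρ / 4) ((1 - ϑ) / (4 * G)) :=
    ⟨_, by positivity, le_rfl⟩
  obtain ⟨hδ₀ρ, hδ₀G⟩ := le_min_iff.1 hδ₀min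
  rw [le_div_iff₀ (by positivity)] at hδ₀G
  obtain ⟨R₁, hR₁, hsmall⟩ := exists_forall_mul_rpow_pow_le one_ne_zero (s := C * s * (2 + δ₀)) ha
    (show 0 < δ₀ * ρ ^ 2 by positivity)
  obtain ⟨r₀, hr₀, hr₀min⟩ : ∃ r₀ > 0, r₀ ≤ min (1 / 4) (min R₀ R₁) := ⟨_, by positivity, le_rfl⟩
  obtain ⟨hr₀4, hr₀R₀, hr₀R₁⟩ := by simpa only [le_min_iff] using hr₀min
  have hdrift := hsmall r₀ hr₀ hr₀R₁
  rw [pow_one] at hdrift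
  refine ⟨ρ, hρ0, hρ1, δ₀, hδ₀, hδ₀ρ, r₀, hr₀, hr₀4,
    fun {b v} hb hv {z r e A A'} hr hrr₀ he he1 hre hA' hz hz0 hlow x hx => ?_⟩
  have hle := himprove hb hv hr (hrr₀.trans hr₀R₀) (hrr₀.trans hr₀4) hρ1.le
    (by positivity) hz hz0 hlow x hx
  have hslope : G * (|A| * δ₀ * e * r) / r * lastC n hn x ≤
      |A| / 4 * (e - ϑ * e) * lastC n hn x := by
    refine mul_le_mul_of_nonneg_right ?_ hx.2
    calc _ = |A| * e / 4 * (δ₀ * (4 * G)) := by field_simp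
      _ ≤ |A| * e / 4 * (1 - ϑ) := by gcongr
      _ = _ := by ring
  have herr : C * (s * r ^ a) * (r * |A'| + |A| * δ₀ * e * r) ≤ ρ ^ 2 * (|A| * δ₀ * e * r) := by
    calc _ ≤ C * (s * (e * r₀ ^ a)) * (r * (2 * |A|) + |A| * δ₀ * 1 * r) := by gcongr
      _ = |A| * e * r * (C * s * (2 + δ₀) * r₀ ^ a) := by ring
      _ ≤ |A| * e * r * (δ₀ * ρ ^ 2) := by gcongr
      _ = _ := by ring
  have hnext : |A| * δ₀ * (ϑ * e) * (ρ * r) = 2 * (ρ ^ 2 * (|A| * δ₀ * e * r)) := by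
    rw [show ϑ = 2 * ρ by linarith]; ring
  linarith

theorem exists_slope_iteration (hlam : 0 < lam) (hLam : lam ≤ Lam) (hs : 0 ≤ s) (ha : 0 < a)
    (ha1 : a < 1) :
    ∃ ρ : ℝ, 0 < ρ ∧ ρ < 1 ∧ ∃ δ₀ > 0, δ₀ ≤ ρ / 4 ∧ ∃ r₀ > 0, r₀ ≤ 1 / 4 ∧ ∀ {b v : 𝔼 n → ℝ},
      IsScaledDrift hn s a b → FlatSupersolution hn lam Lam b v →
      ∀ {z : 𝔼 n} {A : ℝ}, ‖z‖ ≤ 1 → lastC n hn z = 0 →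
      (∀ x ∈ closedHalfBall n hn z r₀, A * lastC n hn x - |A| * δ₀ * r₀ ≤ v x) →
      ∀ i : ℕ, ∀ x ∈ closedHalfBall n hn z (ρ ^ i * r₀),
        (A - |A| / 4) * lastC n hn x - |A| * δ₀ * (ρ ^ i * r₀) ≤ v x := by
  obtain ⟨ρ, hρ0, hρ1, δ₀, hδ₀, hδ₀ρ, r₀, hr₀, hr₀4, himprove⟩ :=
    exists_scaled_slope_improvement (hn := hn) hlam hLam hs ha ha1
  refine ⟨ρ, hρ0, hρ1, δ₀, hδ₀, hδ₀ρ, r₀, hr₀, hr₀4, fun {b v} hb hv {z A} hz hz0 hlow => ?_⟩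
  set ϑ := ρ ^ a
  have hϑ0 : 0 < ϑ := by positivity
  have hϑ1 (i : ℕ) : ϑ ^ i ≤ 1 := pow_le_one₀ hϑ0.le (Real.rpow_lt_one hρ0.le hρ1 ha).le
  have hiter (i : ℕ) : ∀ x ∈ closedHalfBall n hn z (ρ ^ i * r₀),
      (A - |A| / 4 * (1 - ϑ ^ i)) * lastC n hn x - |A| * δ₀ * ϑ ^ i * (ρ ^ i * r₀) ≤ v x := by
    induction i with
    | zero => simpa using hlow
    | succ i ih =>
      have hpow : (ρ ^ i * r₀) ^ a = ϑ ^ i * r₀ ^ a := by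
        rw [Real.mul_rpow (by positivity) hr₀.le, Real.rpow_pow_comm hρ0.le]
      have hA : |A - |A| / 4 * (1 - ϑ ^ i)| ≤ 2 * |A| := by
        refine (abs_sub _ _).trans ?_
        rw [abs_of_nonneg (mul_nonneg (by positivity) (sub_nonneg.2 (hϑ1 i)))]
        linarith [abs_nonneg A, mul_nonneg (abs_nonneg A) (pow_pos hϑ0 i).le]
      have hnext := himprove hb hv (by positivity)
        (mul_le_of_le_one_left hr₀.le (pow_le_one₀ hρ0.le hρ1.le)) (by positivity) (hϑ1 i) hpow.le
        hA hz hz0 ih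
      intro x hx
      rw [pow_succ' ρ, mul_assoc] at hx ⊢
      refine le_of_eq_of_le ?_ (hnext x hx)
      rw [pow_succ']
      ring
  intro i x hx
  refine le_trans (sub_le_sub ?_ ?_) (hiter i x hx)
  · exact mul_le_mul_of_nonneg_right (by linarith [mul_nonneg (abs_nonneg A) (pow_pos hϑ0 i).le])
      hx.2
  · exact mul_le_mul_of_nonneg_right (mul_le_of_le_one_right (by positivity) (hϑ1 i))
      (by positivity)

/-- The orthogonal projection onto the flat boundary. -/
noncomputable def flatProj (n : ℕ) (hn : 1 ≤ n) (x : 𝔼 n) : 𝔼 n :=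
  x - EuclideanSpace.single (⟨n - 1, Nat.sub_one_lt_of_lt hn⟩ : Fin n) (lastC n hn x)

lemma lastC_flatProj (hn : 1 ≤ n) (x : 𝔼 n) : lastC n hn (flatProj n hn x) = 0 := by
  simp [flatProj, lastC]

lemma norm_sub_flatProj (hn : 1 ≤ n) (x : 𝔼 n) : ‖x - flatProj n hn x‖ = |lastC n hn x| := by
  simp [flatProj]

lemma norm_flatProj_le (hn : 1 ≤ n) (x : 𝔼 n) : ‖flatProj n hn x‖ ≤ ‖x‖ := by
  rw [EuclideanSpace.norm_eq, EuclideanSpace.norm_eq]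
  refine Real.sqrt_le_sqrt (Finset.sum_le_sum fun i _ => ?_)
  rcases eq_or_ne i ⟨n - 1, Nat.sub_one_lt_of_lt hn⟩ with rfl | hi
  · rw [show flatProj n hn x _ = 0 from lastC_flatProj hn x, norm_zero, zero_pow two_ne_zero]
    positivity
  · simp [flatProj, hi]

theorem exists_linear_lower_bound (hlam : 0 < lam) (hLam : lam ≤ Lam) (hs : 0 ≤ s) (ha : 0 < a)
    (ha1 : a < 1) :
    ∃ δ₀ > 0, ∃ r₀ > 0, ∀ {b v : 𝔼 n → ℝ}, IsScaledDrift hn s a b →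
      FlatSupersolution hn lam Lam b v → ∀ {A : ℝ},
      (∀ x ∈ closedBall 0 (5 / 4), 0 ≤ lastC n hn x → lastC n hn x ≤ r₀ →
        A * lastC n hn x - |A| * δ₀ * r₀ ≤ v x) →
      ∀ x ∈ halfBall n hn 1, lastC n hn x ≤ r₀ → (A - |A| / 2) * lastC n hn x ≤ v x := by
  obtain ⟨ρ, hρ0, hρ1, δ₀, hδ₀, hδ₀ρ, r₀, hr₀, hr₀4, hiter⟩ :=
    exists_slope_iteration (hn := hn) hlam hLam hs ha ha1
  refine ⟨δ₀, hδ₀, r₀, hr₀, fun {b v} hb hv {A} hlow x hx hxr₀ => ?_⟩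
  have hz : ‖flatProj n hn x‖ ≤ 1 := (norm_flatProj_le hn x).trans hx.1.le
  have hz0 := lastC_flatProj hn x
  have hxz := norm_sub_flatProj hn x
  have ht : 0 < lastC n hn x := hx.2
  set t := lastC n hn x
  obtain ⟨i, hti, hit⟩ := exists_nat_pow_near_of_lt_one (div_pos ht hr₀)
    ((div_le_one hr₀).2 hxr₀) hρ0 hρ1
  rw [lt_div_iff₀ hr₀] at hti
  rw [div_le_iff₀ hr₀] at hit
  have hmem : x ∈ closedHalfBall n hn (flatProj n hn x) (ρ ^ i * r₀) :=
    ⟨mem_closedBall_iff_norm.2 (by rwa [hxz, abs_of_pos ht]), ht.le⟩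
  have hle := hiter hb hv hz hz0 (fun y hy => hlow y (closedHalfBall_subset_closedBall hz hr₀4 hy)
    hy.2 (lastC_le_of_mem_closedHalfBall hz0 hy)) i x hmem
  have herr : |A| * δ₀ * (ρ ^ i * r₀) ≤ |A| / 4 * t := by
    calc _ ≤ |A| * (ρ / 4) * (ρ ^ i * r₀) := by gcongr
      _ = |A| / 4 * (ρ ^ (i + 1) * r₀) := by rw [pow_succ]; ring
      _ ≤ _ := by gcongr
  linarith

end FlatSupersolution

section LinearBounds

variable {n : ℕ} {hn : 1 ≤ n} {lam Lam s a : ℝ}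

lemma lastC_le_of_mem_halfBall {R : ℝ} {x : 𝔼 n} (hx : x ∈ halfBall n hn R) : lastC n hn x ≤ R :=
  ((le_abs_self _).trans (PiLp.norm_apply_le x _)).trans hx.1.le

lemma mem_upperRegion_of_norm_le {h : ℝ} {x : 𝔼 n} (hx : ‖x‖ ≤ 5 / 4) (hh : h ≤ lastC n hn x) :
    x ∈ upperRegion n hn h :=
  ⟨mem_closedBall_zero_iff.2 (by linarith), hh⟩

theorem exists_linear_growth (hlam : 0 < lam) (hLam : lam ≤ Lam) (hs : 0 ≤ s) (ha : 0 < a)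
    (ha1 : a < 1) :
    ∃ c > 0, ∀ {b u : 𝔼 n → ℝ}, IsScaledDrift hn s a b → PositiveSolution hn lam Lam b u →
      ∀ x ∈ halfBall n hn 1, c * u (referencePoint n hn) * lastC n hn x ≤ u x := by
  obtain ⟨δ₀, hδ₀, r₀, hr₀, hlinear⟩ :=
    exists_linear_lower_bound (hn := hn) hlam hLam hs ha ha1
  obtain ⟨c, hc, hflat⟩ :=
    exists_interior_lower_bound (hn := hn) hlam hLam s ha (mul_pos hδ₀ hr₀)
  obtain ⟨c', hc', hfar⟩ := exists_interior_lower_bound (hn := hn) hlam hLam s ha hr₀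
  refine ⟨min (c / r₀ / 2) c', by positivity, fun {b u} hb hu x hx => ?_⟩
  have hue := hu.pos _ (referencePoint_mem_halfBall hn)
  set e := referencePoint n hn
  have hx0 : 0 < lastC n hn x := hx.2
  rcases le_or_gt (lastC n hn x) r₀ with hxr | hxr
  · have hle := hlinear hb hu.flatSupersolution (A := c / r₀ * u e) ?_ x hx hxr
    · rw [abs_of_pos (by positivity)] at hle
      calc _ ≤ c / r₀ / 2 * u e * lastC n hn x := by gcongr; exact min_le_left _ _
        _ = (c / r₀ * u e - c / r₀ * u e / 2) * lastC n hn x := by ring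
        _ ≤ u x := hle
    · intro y hy _ hyr
      rw [abs_of_pos (by positivity)]
      rcases le_or_gt (δ₀ * r₀) (lastC n hn y) with hyδ | hyδ
      · calc _ ≤ c / r₀ * u e * lastC n hn y := sub_le_self _ (by positivity)
          _ ≤ c / r₀ * u e * r₀ := by gcongr
          _ = c * u e := by field_simp
          _ ≤ u y := hflat hb hu y
            (mem_upperRegion_of_norm_le (mem_closedBall_zero_iff.1 hy) hyδ)
      · have := mul_le_mul_of_nonneg_left hyδ.le (show 0 ≤ c / r₀ * u e by positivity)
        linarith [hu.nonneg (closedBall_subset_ball (show (5 / 4 : ℝ) < 2 by norm_num) hy)]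
  · calc _ ≤ c' * u e * 1 := by
          gcongr
          · exact min_le_right _ _
          · exact lastC_le_of_mem_halfBall hx
      _ = c' * u e := mul_one _
      _ ≤ u x := hfar hb hu x (mem_upperRegion_of_norm_le (by linarith [hx.1]) hxr.le)

theorem exists_linear_bound (hlam : 0 < lam) (hLam : lam ≤ Lam) (hs : 0 ≤ s) (ha : 0 < a)
    (ha1 : a < 1) :
    ∃ C > 0, ∀ {b u : 𝔼 n → ℝ}, IsScaledDrift hn s a b → PositiveSolution hn lam Lam b u →
      ∀ x ∈ halfBall n hn 1, u x ≤ C * u (referencePoint n hn) * lastC n hn x := by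
  obtain ⟨δ₀, hδ₀, r₀, hr₀, hlinear⟩ :=
    exists_linear_lower_bound (hn := hn) hlam hLam hs ha ha1
  obtain ⟨C, hC, hcarleson⟩ := exists_carleson_estimate (hn := hn) hlam hLam s ha
  refine ⟨max (3 / 2 * (C / (δ₀ * r₀))) (C / r₀), by positivity, fun {b u} hb hu x hx => ?_⟩
  have hue := hu.pos _ (referencePoint_mem_halfBall hn)
  set e := referencePoint n hn
  have hx0 : 0 < lastC n hn x := hx.2
  rcases le_or_gt (lastC n hn x) r₀ with hxr | hxr
  · set M := C / (δ₀ * r₀) * u e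
    have hM : |-M| = M := by rw [abs_neg, abs_of_pos (by positivity)]
    have hle := hlinear hb hu.flatSupersolution_neg (A := -M) ?_ x hx hxr
    · rw [hM] at hle
      calc u x ≤ 3 / 2 * (C / (δ₀ * r₀)) * u e * lastC n hn x := by linarith
        _ ≤ _ := by gcongr; exact le_max_left _ _
    · intro y hy hy0 _
      have hCM : M * δ₀ * r₀ = C * u e := by simp only [M]; field_simp
      rw [hM, hCM]
      have : 0 ≤ M * lastC n hn y := by positivity
      linarith [hcarleson hb hu y hy]
  · calc u x ≤ C * u e := hcarleson hb hu x (mem_closedBall_zero_iff.2 (by linarith [hx.1]))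
      _ = C / r₀ * u e * r₀ := by field_simp
      _ ≤ _ := by gcongr; exact le_max_right _ _

/-- Bounds of the kind that Hopf's lemma and the boundary Lipschitz estimate give for a function
vanishing on the flat boundary, normalized by its value at `referencePoint n hn`. -/
structure HasLinearBounds (hn : 1 ≤ n) (c C : ℝ) (u : 𝔼 n → ℝ) : Prop where
  pos : 0 < u (referencePoint n hn)
  lower : ∀ x ∈ halfBall n hn 1, c * u (referencePoint n hn) * lastC n hn x ≤ u x
  upper : ∀ x ∈ halfBall n hn 1, u x ≤ C * u (referencePoint n hn) * lastC n hn x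

variable {c C : ℝ} {u v : 𝔼 n → ℝ}

lemma HasLinearBounds.le_div_lastC (hu : HasLinearBounds hn c C u) {x : 𝔼 n}
    (hx : x ∈ halfBall n hn 1) : c * u (referencePoint n hn) ≤ u x / lastC n hn x :=
  (le_div_iff₀ hx.2).2 (hu.lower x hx)

lemma HasLinearBounds.le_mul_referencePoint (hu : HasLinearBounds hn c C u) (hC : 0 ≤ C) {x : 𝔼 n}
    (hx : x ∈ halfBall n hn 1) : u x ≤ C * u (referencePoint n hn) :=
  (hu.upper x hx).trans <| mul_le_of_le_one_right (mul_nonneg hC hu.pos.le)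
    (lastC_le_of_mem_halfBall hx)

lemma HasLinearBounds.mul_div_le_div (hc : 0 < c) (hC : 0 < C) (hu : HasLinearBounds hn c C u)
    (hv : HasLinearBounds hn c C v) {x y : 𝔼 n} (hx : x ∈ halfBall n hn 1)
    (hy : y ∈ halfBall n hn 1) : (c / C) ^ 2 * (u x / v x) ≤ u y / v y := by
  have hue := hu.pos
  have hve := hv.pos
  set e := referencePoint n hn
  have hx0 : 0 < lastC n hn x := hx.2
  have hy0 : 0 < lastC n hn y := hy.2
  have hvy : 0 < v y := (by positivity : 0 < c * v e * lastC n hn y).trans_le (hv.lower y hy)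
  have huy : 0 ≤ u y := (by positivity : 0 ≤ c * u e * lastC n hn y).trans (hu.lower y hy)
  calc (c / C) ^ 2 * (u x / v x)
      ≤ (c / C) ^ 2 * ((C * u e * lastC n hn x) / (c * v e * lastC n hn x)) := by
        gcongr
        exacts [hu.upper x hx, hv.lower x hx]
    _ = (c * u e * lastC n hn y) / (C * v e * lastC n hn y) := by field_simp
    _ ≤ u y / v y := by
        gcongr
        exacts [hu.lower y hy, hv.upper y hy]

theorem exists_hasLinearBounds {q K : ℝ} (hlam : 0 < lam) (hLam : lam ≤ Lam) (hq : n < q)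
    (hK : 0 ≤ K) :
    ∃ c > 0, ∃ C > 0, ∀ {b u : 𝔼 n → ℝ}, ContinuousOn b (halfBall n hn 2) →
      (∀ x ∈ halfBall n hn 2, 0 ≤ b x) →
      LpNormE n q b (halfBall n hn 2) ≤ ENNReal.ofReal K →
      ContinuousOn u (halfBall n hn 2 ∪ flatB n hn 2) → ContDiffOn ℝ 2 u (halfBall n hn 2) →
      (∀ x ∈ halfBall n hn 2, pucciMinus n lam Lam (hess n u x) - b x * gradNorm n u x ≤ 0) →
      (∀ x ∈ halfBall n hn 2, 0 ≤ pucciPlus n lam Lam (hess n u x) + b x * gradNorm n u x) →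
      (∀ x ∈ halfBall n hn 2, 0 < u x) → (∀ x ∈ flatB n hn 2, u x = 0) →
      HasLinearBounds hn c C u := by
  have hn0 : (0 : ℝ) < n := by exact_mod_cast hn
  have hq0 := hn0.trans hq
  have ha : 0 < 1 - n / q := sub_pos.2 ((div_lt_one hq0).2 hq)
  have ha1 : 1 - n / q < 1 := sub_lt_self _ (div_pos hn0 hq0)
  have hs : 0 ≤ K * unitBallVolume n ^ (1 / n - 1 / q : ℝ) :=
    mul_nonneg hK (Real.rpow_nonneg (unitBallVolume_pos n).le _)
  obtain ⟨c, hc, hlower⟩ := exists_linear_growth (hn := hn) hlam hLam hs ha ha1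
  obtain ⟨C, hC, hupper⟩ := exists_linear_bound (hn := hn) hlam hLam hs ha ha1
  refine ⟨c, hc, C, hC, fun {b u} hb hb0 hbK hu hu2 hm hp hpos hz => ?_⟩
  have hdrift := isScaledDrift_of_LpNormE_le hn hq hK hb hb0 hbK
  have hsol := positiveSolution_indicator hLam hu hu2 hm hp hpos hz
  have hext {x R} (hx : x ∈ halfBall n hn R) : (upperHalfSpace n hn).indicator u x = u x :=
    Set.indicator_of_mem (show x ∈ upperHalfSpace n hn from hx.2) u
  have he := referencePoint_mem_halfBall hn
  refine ⟨hpos _ he, fun x hx => ?_, fun x hx => ?_⟩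
  · simpa only [hext he, hext hx] using hlower hdrift hsol x hx
  · simpa only [hext he, hext hx] using hupper hdrift hsol x hx

end LinearBounds

end BoundaryHarnack

/-- Carleson estimate and boundary Harnack inequality for solutions of the
homogeneous extremal inequalities. -/
theorem carleson_and_boundary_harnack
    (n : ℕ) (hn : 2 ≤ n) (lam Lam : ℝ) (hlam : 0 < lam) (hLam : lam ≤ Lam)
    (q K : ℝ) (hq : (n : ℝ) < q) (hK : 0 < K) :
    ∃ c₁ c₂ c₃ : ℝ, 0 < c₁ ∧ 0 < c₂ ∧ 0 < c₃ ∧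
      ∀ b u : EuclideanSpace ℝ (Fin n) → ℝ,
        ContinuousOn b (halfBall n (by omega) 2) →
        (∀ x ∈ halfBall n (by omega) 2, 0 ≤ b x) →
        LpNormE n q b (halfBall n (by omega) 2) ≤ ENNReal.ofReal K →
        ContinuousOn u (halfBall n (by omega) 2 ∪ flatB n (by omega) 2) →
        ContDiffOn ℝ 2 u (halfBall n (by omega) 2) →
        (∀ x ∈ halfBall n (by omega) 2,
          pucciMinus n lam Lam (hess n u x) - b x * gradNorm n u x ≤ 0) →
        (∀ x ∈ halfBall n (by omega) 2,
          0 ≤ pucciPlus n lam Lam (hess n u x) + b x * gradNorm n u x) →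
        (∀ x ∈ halfBall n (by omega) 2, 0 < u x) →
        (∀ x ∈ flatB n (by omega : 1 ≤ n) 2, u x = 0) →
        ((∀ x ∈ halfBall n (by omega : 1 ≤ n) 1,
            c₁ * u (EuclideanSpace.single (⟨n - 1, by omega⟩ : Fin n) ((1 : ℝ) / 2))
              ≤ u x / lastC n (by omega) x) ∧
          (∀ x ∈ halfBall n (by omega : 1 ≤ n) 1,
            c₂ * u x
              ≤ c₁ * u (EuclideanSpace.single (⟨n - 1, by omega⟩ : Fin n) ((1 : ℝ) / 2))) ∧
          (∀ v : EuclideanSpace ℝ (Fin n) → ℝ,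
            ContinuousOn v (halfBall n (by omega) 2 ∪ flatB n (by omega) 2) →
            ContDiffOn ℝ 2 v (halfBall n (by omega) 2) →
            (∀ x ∈ halfBall n (by omega) 2,
              pucciMinus n lam Lam (hess n v x) - b x * gradNorm n v x ≤ 0) →
            (∀ x ∈ halfBall n (by omega) 2,
              0 ≤ pucciPlus n lam Lam (hess n v x) + b x * gradNorm n v x) →
            (∀ x ∈ halfBall n (by omega) 2, 0 < v x) →
            (∀ x ∈ flatB n (by omega : 1 ≤ n) 2, v x = 0) →
            ∀ x ∈ halfBall n (by omega : 1 ≤ n) 1, ∀ y ∈ halfBall n (by omega : 1 ≤ n) 1,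
              c₃ * (u x / v x) ≤ u y / v y)) := by
  obtain ⟨c, hc, C, hC, hbounds⟩ :=
    BoundaryHarnack.exists_hasLinearBounds (hn := one_le_two.trans hn) hlam hLam hq hK.le
  refine ⟨c, c / C, (c / C) ^ 2, hc, by positivity, by positivity,
    fun b u hb hb0 hbK hu hu2 hm hp hpos hz => ?_⟩
  have hubounds := hbounds hb hb0 hbK hu hu2 hm hp hpos hz
  refine ⟨fun x hx => hubounds.le_div_lastC hx, fun x hx => ?_,
    fun v hv hv2 hvm hvp hvpos hvz x hx y hy => ?_⟩
  · rw [div_mul_eq_mul_div, div_le_iff₀ hC, mul_assoc, mul_comm _ C]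
    exact mul_le_mul_of_nonneg_left (hubounds.le_mul_referencePoint hC.le hx) hc.le
  · have hvbounds := hbounds hb hb0 hbK hv hv2 hvm hvp hvpos hvz
    exact hubounds.mul_div_le_div hc hC hvbounds hx hy
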